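/- arXiv:1701.04633 — 3 statements merged into one kernel-verified Lean document; each statement's English description precedes it below -/
import Mathlib

section
/- Let (a_n)_{n≥1} be a sequence of non-negative real numbers and let Z(s) = Σ_{n=1}^∞ a_n n^{-s}. Assume the Dirichlet series Z has abscissa of convergence σ > 0, and that there exists a function G, meromorphic on an open set U ⊆ ℂ containing the closed half-plane {s : Re(s) ≥ σ}, which agrees with Z(s) on {Re(s) > σ}, is holomorphic at every point of the line Re(s) = σ except for a single pole of order w ≥ 1 at s = σ. Let A = lim_{s→σ, s real, s>σ} (s-σ)^w Z(s) (the leading coefficient of the pole). Then Σ_{n≤N} a_n ∼ (A / (σ·(w-1)!)) · N^σ · (log N)^{w-1} as N → ∞, i.e. the quotient of the two sides tends to 1. -/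
/-!
The proof is the Wiener–Ikehara argument, adapted to a pole of order `w = m + 1`.

Put `b(u) = e^{-σu} ∑_{n ≤ e^u} aₙ` (`scaledSum`). Abel summation gives, for `Re z > 0`,
`∫ b(u) e^{-zu} du = Z(σ + z) / (σ + z)`, and the pole of `G` splits the right-hand side as
`∑_{j ≤ m} c_j / z^{j+1} + h(z)` with `h` continuous on `Re z ≥ 0` and `c_m = A / σ`.
It remains to prove `b(x) ∼ (c_m / m!) x^m`, which is `tendsto_div_pow_of_laplace`.

Smooth `b` by a nonnegative kernel `F` of integral one that decays rapidly and is the Fourier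
transform of a continuous compactly supported `ψ` (`IsKernel`). The function `1 / z^{j+1}` is the
Laplace transform of `u^j / j!` on `u > 0`, so after subtracting these polynomials from `b`,
Parseval's identity at `z = ε + 2πit` turns the smoothed difference at `x` into
`∫ e^{2πixt} ψ(t) h(ε + 2πit) dt`. Compactness of the support of `ψ` allows `ε → 0`, and the
Riemann–Lebesgue lemma makes the result tend to `0` as `x → ∞`; only the polynomial part
survives, and its leading term gives `(c_m / m!) x^m` (`IsKernel.exists_limit`).

The smoothing is removed by the one-sided regularity `b(u) ≤ b(v) e^{σ(v-u)}` for `u ≤ v`, which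
expresses that the partial sums increase. With `F` concentrated in `[-δ, δ]` up to a small tail,
it compares `b(x)` with the smoothed values at `x ± δ` up to a factor `e^{2σδ}`
(`IsKernel.mul_le_smoothed`, `IsKernel.smoothed_le`). The first comparison also yields a bound
`b(u) = O((1 + |u|)^m)`, which controls the tail in the second.
-/

open Filter Topology

section

open MeasureTheory Real FourierTransform Convolution

/-! ### Smoothing kernels -/

/-- A smoothing kernel on `ℝ`: a continuous probability density all of whose moments are finite
and which is the Fourier transform of a continuous compactly supported function. -/
structure IsKernel (F : ℝ → ℝ) : Prop where
  cont : Continuous F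
  nonneg : ∀ y, 0 ≤ F y
  integ : ∀ k : ℕ, Integrable (fun y => (1 + |y|) ^ k * F y)
  total : ∫ y, F y = 1
  four : ∃ ψ : ℝ → ℂ, Continuous ψ ∧ HasCompactSupport ψ ∧ ∀ y, 𝓕 ψ y = (F y : ℂ)

/-- A smooth compactly supported function with real Fourier transform, positive at `0`. The
Fourier transform is real because the bump function used is even. -/
lemma exists_schwartz_fourier_real : ∃ (S : SchwartzMap ℝ ℂ) (R : ℝ → ℝ), HasCompactSupport S ∧
    (∀ y, (𝓕 S) y = (R y : ℂ)) ∧ 0 < R 0 := by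
  let B : ContDiffBump (0 : ℝ) := ⟨1, 2, by norm_num, by norm_num⟩
  let φ : ℝ → ℂ := fun t => (B t : ℂ)
  have hφsm : ContDiff ℝ (⊤ : ℕ∞) φ := Complex.ofRealCLM.contDiff.comp B.contDiff
  have hφsupp : HasCompactSupport φ :=
    B.hasCompactSupport.comp_left (g := fun x : ℝ => (x : ℂ)) (by simp)
  have hreal : ∀ y, (𝓕 φ y).im = 0 := by
    intro y
    rw [← Complex.conj_eq_iff_im, Real.fourier_real_eq_integral_exp_smul, ← integral_conj,
      ← integral_neg_eq_self]
    congr 1 with t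
    simp only [smul_eq_mul, map_mul, ← Complex.exp_conj, φ, Complex.conj_ofReal, B.neg]
    congr 2
    push_cast
    simp
  refine ⟨hφsupp.toSchwartzMap hφsm, fun y => (𝓕 φ y).re, hφsupp,
    fun y => Complex.ext rfl (by simpa using! hreal y), ?_⟩
  have h1 : 𝓕 φ 0 = ((∫ t, B t : ℝ) : ℂ) := by
    rw [Real.fourier_real_eq_integral_exp_smul]
    simp only [mul_zero, Complex.ofReal_zero, zero_mul, Complex.exp_zero, one_smul, φ]
    exact integral_ofReal
  have h2 := B.integral_pos (μ := volume)
  simpa [h1] using h2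

/-- A kernel is obtained by normalising `(𝓕 S)²`, where `S` is a compactly supported Schwartz
function with real Fourier transform: it is the Fourier transform of `S ⋆ S`. -/
lemma exists_isKernel : ∃ F, IsKernel F := by
  obtain ⟨S, R, hSsupp, hSR', hR0⟩ := exists_schwartz_fourier_real
  have hSR : ∀ y, ‖(𝓕 S) y‖ = |R y| := fun y => by rw [hSR']; simp
  have hRc : Continuous R := by
    have h := Complex.continuous_re.comp (𝓕 S).continuous
    refine h.congr fun y => ?_
    simp [hSR']
  obtain ⟨C, hC⟩ : ∃ C, ∀ y, |R y| ≤ C := by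
    obtain ⟨C, hC⟩ := (𝓕 S).decay 0 0
    exact ⟨C, fun y => by simpa [← hSR] using hC.2 y⟩
  have hInt : ∀ k : ℕ, Integrable (fun y => (1 + |y|) ^ k * (R y) ^ 2) := by
    intro k
    have h1 : Integrable
        (fun y => ∑ i ∈ Finset.range (k+1), C * (k.choose i) * (‖y‖ ^ i * ‖(𝓕 S) y‖)) :=
      integrable_finsetSum _ fun i _ => ((𝓕 S).integrable_pow_mul volume i).const_mul _
    refine h1.mono' (by fun_prop) (Eventually.of_forall fun y => ?_)
    rw [Real.norm_of_nonneg (by positivity), add_comm, add_pow, Finset.sum_mul]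
    refine Finset.sum_le_sum fun i _ => ?_
    rw [hSR, ← sq_abs, one_pow, mul_one, Real.norm_eq_abs]
    have := mul_le_mul_of_nonneg_left (hC y) (show 0 ≤ |y| ^ i * (k.choose i) * |R y| by positivity)
    nlinarith [this]
  have hRint : Integrable (fun y => (R y) ^ 2) := by simpa using hInt 0
  have hJpos : 0 < ∫ y, (R y) ^ 2 :=
    integral_pos_of_integrable_nonneg_nonzero (x := 0) (by fun_prop) hRint
      (fun y => by positivity) (by positivity)
  generalize hJ : ∫ y, (R y) ^ 2 = J at hJpos
  refine ⟨fun y => J⁻¹ * (R y) ^ 2, ⟨by fun_prop, fun y => by positivity, fun k => ?_, ?_, ?_⟩⟩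
  · simpa [mul_left_comm] using (hInt k).const_mul J⁻¹
  · rw [integral_const_mul, hJ, inv_mul_cancel₀ hJpos.ne']
  · have hψc : Continuous (S ⋆[ContinuousLinearMap.mul ℂ ℂ] S) :=
      hSsupp.continuous_convolution_right _ S.integrable.locallyIntegrable S.continuous
    have hψs := hSsupp.convolution (ContinuousLinearMap.mul ℂ ℂ) (μ := volume) hSsupp
    have hψf : ∀ y, 𝓕 (S ⋆[ContinuousLinearMap.mul ℂ ℂ] S) y = (R y : ℂ) * R y := fun y => by
      rw [Real.fourier_mul_convolution_eq S.integrable S.integrable, ← hSR',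
        SchwartzMap.fourier_coe]
    generalize (S ⋆[ContinuousLinearMap.mul ℂ ℂ] S) = ψ at hψc hψs hψf
    refine ⟨fun t => (J⁻¹ : ℂ) * ψ t, by fun_prop, hψs.mul_left, fun y => ?_⟩
    have : 𝓕 (fun t => (J⁻¹ : ℂ) * ψ t) y = (J⁻¹ : ℂ) * 𝓕 ψ y := by
      simp_rw [Real.fourier_real_eq_integral_exp_smul, ← integral_const_mul]
      congr 1 with t
      simp only [smul_eq_mul]; ring
    rw [this, hψf]
    push_cast
    ring

lemma IsKernel.scale {F : ℝ → ℝ} (hF : IsKernel F) {l : ℝ} (hl : 1 ≤ l) :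
    IsKernel (fun y => l * F (l * y)) := by
  have hl0 : 0 < l := by linarith
  refine ⟨by have := hF.cont; fun_prop, fun y => mul_nonneg hl0.le (hF.nonneg _), fun k => ?_, ?_, ?_⟩
  · have h := ((hF.integ k).comp_mul_left' hl0.ne').const_mul l
    refine h.mono' (by have := hF.cont; fun_prop) (Eventually.of_forall fun y => ?_)
    have := hF.nonneg (l * y)
    have hy : |y| ≤ |l * y| := by
      rw [abs_mul, abs_of_pos hl0]
      nlinarith [abs_nonneg y]
    have hk : (1 + |y|) ^ k ≤ (1 + |l * y|) ^ k :=
      pow_le_pow_left₀ (by positivity) (by linarith) k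
    rw [Real.norm_of_nonneg (by positivity), mul_left_comm]
    exact mul_le_mul_of_nonneg_left (mul_le_mul_of_nonneg_right hk this) hl0.le
  · rw [integral_const_mul, Measure.integral_comp_mul_left, hF.total, abs_of_pos (by positivity)]
    simp [hl0.ne']
  · obtain ⟨ψ, h1, h2, h3⟩ := hF.four
    refine ⟨fun t => ψ (l⁻¹ * t), by fun_prop, h2.comp_homeomorph (Homeomorph.mulLeft₀ l⁻¹ (by positivity)), fun y => ?_⟩
    push_cast
    rw [← h3, Real.fourier_real_eq_integral_exp_smul, Real.fourier_real_eq_integral_exp_smul]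
    have := Measure.integral_comp_mul_left (fun v : ℝ => Complex.exp (↑(-2 * π * v * (l * y)) * Complex.I) • ψ v) l⁻¹
    rw [inv_inv, abs_of_pos hl0, Complex.real_smul] at this
    rw [← this]
    congr 1 with t
    congr 4
    field_simp

/-- Rescaling makes the mass of a kernel outside `[-δ, δ]`, even with a polynomial weight,
arbitrarily small. -/
lemma exists_isKernel_tail (k : ℕ) {δ η : ℝ} (hδ : 0 < δ) (hη : 0 < η) :
    ∃ F, IsKernel F ∧ ∫ y, {y : ℝ | δ < |y|}.indicator (fun y => (1 + |y|) ^ k * F y) y < η := by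
  obtain ⟨F, hF⟩ := exists_isKernel
  have hm : ∀ r : ℝ, MeasurableSet {y : ℝ | r < |y|} := fun r =>
    (isOpen_lt continuous_const continuous_abs).measurableSet
  have hlim : Tendsto (fun l : ℝ => ∫ y, {y : ℝ | l * δ < |y|}.indicator (fun y => (1 + |y|) ^ k * F y) y)
      atTop (𝓝 (∫ y : ℝ, (0 : ℝ))) := by
    refine tendsto_integral_filter_of_dominated_convergence _
      (Eventually.of_forall fun l => ((hF.integ k).indicator (hm _)).aestronglyMeasurable)
      (Eventually.of_forall fun l => Eventually.of_forall fun y => norm_indicator_le_norm_self _ _)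
      (hF.integ k).norm (Eventually.of_forall fun y => ?_)
    refine tendsto_const_nhds.congr' ?_
    filter_upwards [eventually_ge_atTop (|y| / δ)] with l hl
    rw [Set.indicator_of_notMem]
    simp only [Set.mem_ofPred_eq, not_lt]
    exact (div_le_iff₀ hδ).mp hl
  rw [integral_zero] at hlim
  obtain ⟨l, hl, hl1⟩ := ((hlim.eventually (gt_mem_nhds hη)).and (eventually_ge_atTop 1)).exists
  have hl0 : 0 < l := by linarith
  refine ⟨_, hF.scale hl1, lt_of_le_of_lt ?_ hl⟩
  have h1 := Measure.integral_comp_mul_left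
    ({y : ℝ | l * δ < |y|}.indicator (fun y => (1 + |y|) ^ k * F y)) l
  rw [abs_of_pos (by positivity), smul_eq_mul] at h1
  have h2 : ∫ y, {y : ℝ | l * δ < |y|}.indicator (fun y => (1 + |y|) ^ k * F y) y =
    ∫ y, l * {y : ℝ | l * δ < |y|}.indicator (fun y => (1 + |y|) ^ k * F y) (l * y) := by
    rw [integral_const_mul, h1]; field_simp
  rw [h2]
  refine integral_mono (((hF.scale hl1).integ k).indicator (hm _))
    ((((hF.integ k).indicator (hm _)).comp_mul_left' hl0.ne').const_mul l) fun y => ?_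
  have hF0 := hF.nonneg (l * y)
  by_cases hy : δ < |y|
  · have hy' : l * δ < |l * y| := by rw [abs_mul, abs_of_pos hl0]; gcongr
    simp only [Set.indicator, Set.mem_ofPred_eq, hy, hy', if_true]
    have hyl : |y| ≤ |l * y| := by
      rw [abs_mul, abs_of_pos hl0]
      nlinarith [abs_nonneg y]
    have hk : (1 + |y|) ^ k ≤ (1 + |l * y|) ^ k :=
      pow_le_pow_left₀ (by positivity) (by linarith) k
    rw [mul_left_comm]
    exact mul_le_mul_of_nonneg_left (mul_le_mul_of_nonneg_right hk hF0) hl0.le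
  · simp only [Set.indicator, Set.mem_ofPred_eq, hy, if_false]
    split_ifs <;> positivity

/-! ### Polynomials: Laplace transforms and smoothed values -/

lemma integrableOn_pow_mul_exp (j : ℕ) {z : ℂ} (hz : 0 < z.re) :
    IntegrableOn (fun u : ℝ => (u : ℂ) ^ j * Complex.exp (-z * u)) (Set.Ioi 0) := by
  have h := integrableOn_rpow_mul_exp_neg_mul_rpow (p := 1) (s := j)
    (by have : (0 : ℝ) ≤ j := j.cast_nonneg
        linarith) one_pos hz
  refine Integrable.mono' h (by fun_prop) ?_
  refine (ae_restrict_iff' measurableSet_Ioi).2 (Eventually.of_forall fun u hu => ?_)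
  have hu' : (0 : ℝ) < u := hu
  rw [norm_mul, norm_pow, Complex.norm_real, Complex.norm_exp, Real.norm_of_nonneg hu'.le]
  simp

lemma integral_pow_mul_exp (j : ℕ) {z : ℂ} (hz : 0 < z.re) :
    ∫ u in Set.Ioi (0 : ℝ), (u : ℂ) ^ j * Complex.exp (-z * u) = (j.factorial : ℂ) / z ^ (j + 1) := by
  have hz0 : z ≠ 0 := fun h => by simp [h] at hz
  induction j with
  | zero =>
    have := integral_exp_mul_complex_Ioi (a := -z) (by simpa using hz) 0
    simp only [pow_zero, one_mul, this]
    simp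
  | succ j ih =>
    have hlim : Tendsto (fun u : ℝ => (u : ℂ) ^ (j + 1) * Complex.exp (-z * u)) atTop (𝓝 0) := by
      rw [tendsto_zero_iff_norm_tendsto_zero]
      have h := tendsto_rpow_mul_exp_neg_mul_atTop_nhds_zero (j + 1 : ℕ) z.re hz
      refine h.congr' ?_
      filter_upwards [eventually_gt_atTop 0] with u hu
      rw [norm_mul, norm_pow, Complex.norm_real, Complex.norm_exp, Real.norm_of_nonneg hu.le,
        Real.rpow_natCast]
      simp
    have hder : ∀ u ∈ Set.Ici (0 : ℝ), HasDerivAt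
        (fun u : ℝ => (u : ℂ) ^ (j + 1) * Complex.exp (-z * u))
        ((j + 1 : ℂ) * ((u : ℂ) ^ j * Complex.exp (-z * u))
          - z * ((u : ℂ) ^ (j + 1) * Complex.exp (-z * u))) u := by
      intro u _
      have h1 : HasDerivAt (fun v : ℂ => v ^ (j + 1) * Complex.exp (-z * v))
          ((j + 1 : ℂ) * ((u : ℂ) ^ j * Complex.exp (-z * u))
          - z * ((u : ℂ) ^ (j + 1) * Complex.exp (-z * u))) (u : ℂ) := by
        have h2 := (hasDerivAt_pow (j + 1) (u : ℂ)).mul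
          (((hasDerivAt_id (u : ℂ)).const_mul (-z)).cexp)
        convert! h2 using 1
        simp
        ring
      exact h1.comp_ofReal
    have hi1 := (integrableOn_pow_mul_exp j hz).const_mul (j + 1 : ℂ)
    have hi2 := (integrableOn_pow_mul_exp (j + 1) hz).const_mul z
    have h := integral_Ioi_of_hasDerivAt_of_tendsto' hder (hi1.sub hi2) hlim
    rw [integral_sub hi1 hi2, integral_const_mul, integral_const_mul, ih] at h
    have h' : z * ∫ u in Set.Ioi (0 : ℝ), (u : ℂ) ^ (j + 1) * Complex.exp (-z * u)
        = (j + 1 : ℂ) * ((j.factorial : ℂ) / z ^ (j + 1)) := by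
      have h3 := sub_eq_zero.mp (h.trans (by simp))
      exact h3.symm
    rw [← mul_right_inj' hz0, h', Nat.factorial_succ]
    push_cast
    field_simp
    ring

/-- Parseval's identity for the translated kernel `F (· - x)`, where `F = 𝓕 ψ`. -/
lemma integral_kernel_mul_eq {F : ℝ → ℝ} {ψ : ℝ → ℂ} (hψc : Continuous ψ)
    (hψs : HasCompactSupport ψ) (hψ : ∀ y, 𝓕 ψ y = (F y : ℂ)) {g : ℝ → ℂ} (hg : Integrable g)
    (x : ℝ) :
    ∫ u, (F (u - x) : ℂ) * g u = ∫ t, (𝐞 (x * t) • ψ t) * 𝓕 g t := by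
  have hInt : Integrable (fun t => 𝐞 (x * t) • ψ t) := by
    refine Continuous.integrable_of_hasCompactSupport ?_ ?_
    · fun_prop
    · exact hψs.smul_left (f := fun t => 𝐞 (x * t))
  have h := VectorFourier.integral_fourierIntegral_smul_eq_flip (L := innerₗ ℝ) (μ := volume)
    (ν := volume) Real.continuous_fourierChar continuous_inner hInt hg
  have h1 : ∀ u, VectorFourier.fourierIntegral 𝐞 volume (innerₗ ℝ) (fun t => 𝐞 (x * t) • ψ t) u
      = (F (u - x) : ℂ) := by
    intro u
    rw [← hψ, Real.fourier_real_eq, VectorFourier.fourierIntegral]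
    congr 1 with t
    rw [smul_smul, ← AddChar.map_add_eq_mul]
    congr 2
    simp
    ring
  simp_rw [h1, flip_innerₗ, smul_eq_mul] at h
  exact h

lemma IsKernel.integrable_shift {F : ℝ → ℝ} (hF : IsKernel F) (j : ℕ) (x : ℝ) :
    Integrable (fun u => |u| ^ j * F (u - x)) := by
  have h := ((hF.integ j).comp_sub_right x).const_mul ((1 + |x|) ^ j)
  refine h.mono' (by have := hF.cont; fun_prop) (Eventually.of_forall fun u => ?_)
  have hF0 := hF.nonneg (u - x)
  rw [Real.norm_of_nonneg (by positivity), ← mul_assoc, ← mul_pow]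
  refine mul_le_mul_of_nonneg_right (pow_le_pow_left₀ (abs_nonneg _) ?_ _) hF0
  have := abs_add_le (u - x) x
  simp only [sub_add_cancel] at this
  nlinarith [abs_nonneg x, abs_nonneg (u - x), mul_nonneg (abs_nonneg x) (abs_nonneg (u - x))]

/-- For the monomial `u ^ j` on `u > 0`, the convergence factor `e^{-εu}` can be removed from the
smoothed value at `x`. -/
lemma IsKernel.tendsto_pow_abel {F : ℝ → ℝ} (hF : IsKernel F) (j : ℕ) (x : ℝ) :
    Tendsto (fun ε : ℝ => ∫ u in Set.Ioi (0 : ℝ), u ^ j * rexp (-ε * u) * F (u - x))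
      (𝓝[>] 0) (𝓝 (∫ u in Set.Ioi (0 : ℝ), u ^ j * F (u - x))) := by
  have hc := hF.cont
  refine tendsto_integral_filter_of_dominated_convergence (fun u => |u| ^ j * F (u - x))
    (Eventually.of_forall fun ε => by fun_prop) ?_ (hF.integrable_shift j x).integrableOn
    (Eventually.of_forall fun u => ?_)
  · filter_upwards [self_mem_nhdsWithin] with ε hε
    refine (ae_restrict_iff' measurableSet_Ioi).2 (Eventually.of_forall fun u hu => ?_)
    have hu' : (0 : ℝ) < u := hu
    have hε' : (0 : ℝ) < ε := hε
    have hF0 := hF.nonneg (u - x)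
    rw [Real.norm_of_nonneg (by positivity), abs_of_pos hu']
    refine mul_le_mul_of_nonneg_right (mul_le_of_le_one_right (by positivity) ?_) hF0
    rw [Real.exp_le_one_iff]
    nlinarith
  · have : Continuous (fun ε : ℝ => u ^ j * rexp (-ε * u) * F (u - x)) := by fun_prop
    simpa using (this.tendsto 0).mono_left nhdsWithin_le_nhds

/-- Smoothing the monomial `u ^ j` on `u > 0` does not change its asymptotics. -/
lemma IsKernel.tendsto_pow_div {F : ℝ → ℝ} (hF : IsKernel F) (j : ℕ) :
    Tendsto (fun x : ℝ => (∫ u in Set.Ioi (0 : ℝ), u ^ j * F (u - x)) / x ^ j) atTop (𝓝 1) := by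
  have hc := hF.cont
  have key : Tendsto (fun x : ℝ => ∫ y, (Set.Ioi (-x)).indicator
      (fun y => (1 + y / x) ^ j * F y) y) atTop (𝓝 (∫ y, F y)) := by
    refine tendsto_integral_filter_of_dominated_convergence (fun y => (1 + |y|) ^ j * F y)
      (Eventually.of_forall fun x => ?_) ?_ (hF.integ j) (Eventually.of_forall fun y => ?_)
    · exact (by fun_prop : AEStronglyMeasurable
        (fun y => (1 + y / x) ^ j * F y) volume).indicator measurableSet_Ioi
    · filter_upwards [eventually_ge_atTop 1] with x hx
      refine Eventually.of_forall fun y => (norm_indicator_le_norm_self _ _).trans ?_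
      rw [norm_mul, norm_pow, Real.norm_of_nonneg (hF.nonneg y)]
      refine mul_le_mul_of_nonneg_right (pow_le_pow_left₀ (norm_nonneg _) ?_ _) (hF.nonneg y)
      refine (norm_add_le _ _).trans ?_
      rw [norm_one, norm_div, Real.norm_eq_abs, Real.norm_eq_abs, abs_of_pos (by linarith : 0 < x)]
      gcongr
      exact div_le_self (abs_nonneg y) hx
    · have h1 : Tendsto (fun x : ℝ => (1 + y / x) ^ j * F y) atTop (𝓝 ((1 + 0) ^ j * F y)) :=
        (((tendsto_const_nhds.div_atTop tendsto_id).const_add 1).pow j).mul_const _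
      simp only [add_zero, one_pow, one_mul] at h1
      refine h1.congr' ?_
      filter_upwards [eventually_gt_atTop (-y)] with x hx
      rw [Set.indicator_of_mem]
      exact (by linarith : -x < y)
  rw [hF.total] at key
  refine key.congr' ?_
  filter_upwards [eventually_gt_atTop 0] with x hx
  rw [← integral_indicator measurableSet_Ioi, ← integral_div,
    ← integral_add_right_eq_self (fun u => (Set.Ioi (0 : ℝ)).indicator _ u / x ^ j) x]
  congr 1 with y
  by_cases hy : -x < y
  · rw [Set.indicator_of_mem (by exact hy), Set.indicator_of_mem (by simpa using (by linarith : 0 < y + x))]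
    simp only [add_sub_cancel_right]
    have : 1 + y / x = (y + x) / x := by field_simp; ring
    rw [this, div_pow]; ring
  · rw [Set.indicator_of_notMem (by exact hy), Set.indicator_of_notMem (by simpa using (by linarith : y + x ≤ 0))]
    simp

/-! ### Asymptotics of the smoothed function -/

/-- If the Laplace transform of `b` is a polar part `∑ c_j / z^{j+1}` plus a function continuous up
to the imaginary axis, then the smoothed values of `b` exist in the Abel sense `ε → 0+`, and they
are asymptotic to `(c_m / m!) x^m`. The values `R x` are only claimed as limits, since
integrability of `b u * F (u - x)` itself is not known. -/
lemma IsKernel.exists_limit {F : ℝ → ℝ} (hF : IsKernel F) {b : ℝ → ℝ}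
    (hbint : ∀ ε : ℝ, 0 < ε → Integrable (fun u => b u * rexp (-ε * u)))
    (m : ℕ) (c : ℕ → ℂ) {h : ℂ → ℂ} (hh : ContinuousOn h {z | 0 ≤ z.re})
    (hlap : ∀ z : ℂ, 0 < z.re → ∫ u, (b u : ℂ) * Complex.exp (-z * u)
      = ∑ j ∈ Finset.range (m + 1), c j / z ^ (j + 1) + h z) :
    ∃ R : ℝ → ℝ,
      (∀ x, Tendsto (fun ε : ℝ => ∫ u, b u * rexp (-ε * u) * F (u - x)) (𝓝[>] 0) (𝓝 (R x))) ∧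
      Tendsto (fun x => R x / x ^ m) atTop (𝓝 (c m / m.factorial).re) := by
  obtain ⟨ψ, hψc, hψs, hψ⟩ := hF.four
  have hFc := hF.cont
  obtain ⟨M, hM⟩ : ∃ M, ∀ y, ‖(F y : ℂ)‖ ≤ M := by
    refine ⟨∫ t, ‖ψ t‖, fun y => ?_⟩
    rw [← hψ]
    exact VectorFourier.norm_fourierIntegral_le_integral_norm 𝐞 volume (innerₗ ℝ) ψ y
  -- boundary values of `h`; the `max` extends them continuously to `ε < 0`,
  -- so that `E` below is continuous in `ε` on all of `ℝ`
  let h' : ℝ → ℝ → ℂ := fun ε t => h (max ε 0 + (2 * π * t : ℝ) * Complex.I)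
  have hh'c : Continuous (Function.uncurry h') := by
    refine hh.comp_continuous (by fun_prop) fun p => ?_
    simp
  let T : ℕ → ℝ → ℝ → ℝ := fun j ε x =>
    ∫ u in Set.Ioi (0 : ℝ), u ^ j * rexp (-ε * u) * F (u - x)
  let E : ℝ → ℝ → ℂ := fun ε x => ∫ t, (𝐞 (x * t) • ψ t) * h' ε t
  have hid : ∀ x ε : ℝ, 0 < ε → ((∫ u, b u * rexp (-ε * u) * F (u - x) : ℝ) : ℂ)
      = ∑ j ∈ Finset.range (m + 1), c j / j.factorial * (T j ε x : ℂ) + E ε x := by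
    intro x ε hε
    let P : ℕ → ℝ → ℂ := fun j => (Set.Ioi (0 : ℝ)).indicator
      (fun u : ℝ => (u : ℂ) ^ j * Complex.exp (-(ε : ℂ) * u))
    have hP : ∀ j, Integrable (P j) := fun j =>
      (integrableOn_pow_mul_exp j (z := (ε : ℂ)) (by simpa using hε)).integrable_indicator
        measurableSet_Ioi
    have hb' : Integrable (fun u => ((b u * rexp (-ε * u) : ℝ) : ℂ)) := (hbint ε hε).ofReal
    have hPs : Integrable (fun u => ∑ j ∈ Finset.range (m + 1), c j / j.factorial * P j u) :=
      integrable_finsetSum _ fun j _ => (hP j).const_mul _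
    -- `b` minus the polynomials accounting for the polar part, damped by `e^{-εu}`;
    -- the Fourier transform of `g` at `t` is `h (ε + 2πit)`
    let g : ℝ → ℂ := fun u => ((b u * rexp (-ε * u) : ℝ) : ℂ)
      - ∑ j ∈ Finset.range (m + 1), c j / j.factorial * P j u
    have hg : Integrable g := hb'.sub hPs
    have hFg : ∀ t, 𝓕 g t = h' ε t := by
      intro t
      let z : ℂ := ε + (2 * π * t : ℝ) * Complex.I
      have hz : 0 < z.re := by simpa [z] using hε
      have hzh : h' ε t = h z := by simp only [h', z, max_eq_left hε.le]
      have hexp : ∀ u : ℝ, Complex.exp (((-2 * π * u * t : ℝ) : ℂ) * Complex.I)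
          * Complex.exp (-(ε : ℂ) * u) = Complex.exp (-z * u) := by
        intro u
        rw [← Complex.exp_add]
        congr 1
        simp only [z]
        push_cast
        ring
      have hmod : ∀ {f : ℝ → ℂ}, Integrable f → Integrable
          (fun u : ℝ => Complex.exp (((-2 * π * u * t : ℝ) : ℂ) * Complex.I) * f u) := by
        intro f hf
        refine hf.bdd_mul (c := 1) (by fun_prop) (Eventually.of_forall fun u => ?_)
        rw [Complex.norm_exp_ofReal_mul_I]
      have hP2 : ∀ j, ∫ u : ℝ, Complex.exp (((-2 * π * u * t : ℝ) : ℂ) * Complex.I) * P j u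
          = j.factorial / z ^ (j + 1) := by
        intro j
        rw [← integral_pow_mul_exp j hz, ← integral_indicator measurableSet_Ioi]
        congr 1 with u
        by_cases hu : u ∈ Set.Ioi (0 : ℝ)
        · simp only [P, Set.indicator_of_mem hu]
          rw [← hexp]; ring
        · simp only [P, Set.indicator_of_notMem hu, mul_zero]
      rw [hzh, Real.fourier_real_eq_integral_exp_smul]
      simp only [g, smul_eq_mul, mul_sub]
      rw [integral_sub (hmod hb') (hmod hPs)]
      have e1 : ∫ u : ℝ, Complex.exp (((-2 * π * u * t : ℝ) : ℂ) * Complex.I)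
          * ((b u * rexp (-ε * u) : ℝ) : ℂ) = ∫ u, (b u : ℂ) * Complex.exp (-z * u) := by
        congr 1 with u
        rw [← hexp]
        push_cast
        ring
      have e2 : ∫ u : ℝ, Complex.exp (((-2 * π * u * t : ℝ) : ℂ) * Complex.I)
          * ∑ j ∈ Finset.range (m + 1), c j / j.factorial * P j u
          = ∑ j ∈ Finset.range (m + 1), c j / z ^ (j + 1) := by
        simp_rw [Finset.mul_sum, mul_left_comm _ (c _ / _)]
        rw [integral_finsetSum _ fun j _ => (hmod (hP j)).const_mul _]
        refine Finset.sum_congr rfl fun j _ => ?_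
        rw [integral_const_mul, hP2]
        have : (j.factorial : ℂ) ≠ 0 := by exact_mod_cast j.factorial_ne_zero
        field_simp
      rw [e1, e2, hlap z hz]
      ring
    have hflip := integral_kernel_mul_eq hψc hψs hψ hg x
    simp_rw [hFg] at hflip
    have hmodF : ∀ {f : ℝ → ℂ}, Integrable f → Integrable (fun u : ℝ => (F (u - x) : ℂ) * f u) :=
      fun hf => hf.bdd_mul (c := M) (by fun_prop) (Eventually.of_forall fun u => hM _)
    simp only [g, mul_sub] at hflip
    rw [integral_sub (hmodF hb') (hmodF hPs)] at hflip
    have e1 : ∫ u : ℝ, (F (u - x) : ℂ) * ((b u * rexp (-ε * u) : ℝ) : ℂ)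
        = ((∫ u, b u * rexp (-ε * u) * F (u - x) : ℝ) : ℂ) := by
      rw [← integral_complex_ofReal]
      congr 1 with u
      push_cast
      ring
    have e2 : ∫ u : ℝ, (F (u - x) : ℂ) * ∑ j ∈ Finset.range (m + 1), c j / j.factorial * P j u
        = ∑ j ∈ Finset.range (m + 1), c j / j.factorial * (T j ε x : ℂ) := by
      simp_rw [Finset.mul_sum, mul_left_comm _ (c _ / _)]
      rw [integral_finsetSum _ fun j _ => (hmodF (hP j)).const_mul _]
      refine Finset.sum_congr rfl fun j _ => ?_
      rw [integral_const_mul]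
      congr 1
      rw [← integral_complex_ofReal, ← integral_indicator measurableSet_Ioi]
      congr 1 with u
      by_cases hu : u ∈ Set.Ioi (0 : ℝ)
      · simp only [P, Set.indicator_of_mem hu]
        push_cast
        ring
      · simp only [P, Set.indicator_of_notMem hu, mul_zero]
    rw [e1, e2] at hflip
    rw [← sub_eq_iff_eq_add']
    exact hflip
  have hElim : ∀ x, Tendsto (fun ε => E ε x) (𝓝[>] 0) (𝓝 (E 0 x)) := by
    intro x
    have hE : ∀ ε, E ε x = ∫ t in tsupport ψ, (𝐞 (x * t) • ψ t) * h' ε t := by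
      intro ε
      refine (setIntegral_eq_integral_of_forall_compl_eq_zero fun t ht => ?_).symm
      rw [image_eq_zero_of_notMem_tsupport ht, smul_zero, zero_mul]
    have hcont : Continuous (fun ε => E ε x) := by
      simp_rw [hE]
      exact continuous_parametric_integral_of_continuous (by
        have : Continuous fun p : ℝ × ℝ => h' p.1 p.2 := hh'c
        simp only [Function.uncurry_def]
        fun_prop) hψs.isCompact
    exact (hcont.tendsto 0).mono_left nhdsWithin_le_nhds
  -- Riemann–Lebesgue
  have hERL : Tendsto (fun x => E 0 x) atTop (𝓝 0) := by
    have hRL := Real.tendsto_integral_exp_smul_cocompact (fun t => ψ t * h' 0 t)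
    have h2 : Tendsto (fun x : ℝ => -x) atTop (cocompact ℝ) :=
      tendsto_neg_atTop_atBot.mono_right atBot_le_cocompact
    refine (hRL.comp h2).congr fun x => ?_
    simp only [Function.comp_apply, E]
    congr 1 with t
    rw [smul_mul_assoc]
    congr 2
    ring
  let Rc : ℝ → ℂ := fun x => ∑ j ∈ Finset.range (m + 1), c j / j.factorial
    * ((∫ u in Set.Ioi (0 : ℝ), u ^ j * F (u - x) : ℝ) : ℂ) + E 0 x
  refine ⟨fun x => (Rc x).re, fun x => ?_, ?_⟩
  · have h1 : Tendsto (fun ε : ℝ => ((∫ u, b u * rexp (-ε * u) * F (u - x) : ℝ) : ℂ))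
        (𝓝[>] 0) (𝓝 (Rc x)) := by
      have h2 : Tendsto (fun ε => ∑ j ∈ Finset.range (m + 1), c j / j.factorial * (T j ε x : ℂ)
          + E ε x) (𝓝[>] 0) (𝓝 (Rc x)) := by
        refine Tendsto.add (tendsto_finsetSum _ fun j _ => Tendsto.const_mul _ ?_) (hElim x)
        exact (Complex.continuous_ofReal.tendsto _).comp (hF.tendsto_pow_abel j x)
      refine h2.congr' ?_
      filter_upwards [self_mem_nhdsWithin] with ε hε
      exact (hid x ε hε).symm
    exact (Complex.continuous_re.tendsto _).comp h1
  · have h1 : Tendsto (fun x : ℝ => Rc x / (x : ℂ) ^ m) atTop (𝓝 (c m / m.factorial)) := by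
      have hsum : ∀ j ∈ Finset.range (m + 1), Tendsto (fun x : ℝ => c j / j.factorial
          * ((∫ u in Set.Ioi (0 : ℝ), u ^ j * F (u - x) : ℝ) : ℂ) / (x : ℂ) ^ m) atTop
          (𝓝 (if j = m then c m / m.factorial else 0)) := by
        intro j hj
        have h2 := (Complex.continuous_ofReal.tendsto _).comp (hF.tendsto_pow_div j)
        split_ifs with hjm
        · subst hjm
          have h3 := h2.const_mul (c j / j.factorial)
          simp only [Complex.ofReal_one, mul_one] at h3
          refine h3.congr fun x => ?_
          simp only [Function.comp_apply]
          push_cast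
          ring
        · have hlt : j < m := lt_of_le_of_ne (Nat.lt_succ_iff.mp (Finset.mem_range.mp hj)) hjm
          have h4 : Tendsto (fun x : ℝ => (x ^ (m - j))⁻¹) atTop (𝓝 0) :=
            tendsto_inv_atTop_zero.comp (tendsto_pow_atTop (Nat.sub_ne_zero_of_lt hlt))
          have h5 := (h2.mul ((Complex.continuous_ofReal.tendsto _).comp h4)).const_mul
            (c j / j.factorial)
          simp only [Complex.ofReal_zero, mul_zero] at h5
          refine h5.congr' ?_
          filter_upwards [eventually_gt_atTop 0] with x hx
          have hx' : (x : ℂ) ≠ 0 := by exact_mod_cast hx.ne'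
          simp only [Function.comp_apply]
          have hpow : (x : ℂ) ^ m = (x : ℂ) ^ j * (x : ℂ) ^ (m - j) := by
            rw [← pow_add, Nat.add_sub_cancel' hlt.le]
          rw [hpow]
          push_cast
          field_simp
      have hsum' := tendsto_finsetSum _ hsum
      rw [Finset.sum_ite_eq_of_mem' _ _ _ (Finset.self_mem_range_succ m)] at hsum'
      have hE2 : Tendsto (fun x : ℝ => E 0 x / (x : ℂ) ^ m) atTop (𝓝 0) := by
        rw [tendsto_zero_iff_norm_tendsto_zero] at hERL ⊢
        refine squeeze_zero' (Eventually.of_forall fun _ => norm_nonneg _) ?_ hERL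
        filter_upwards [eventually_ge_atTop 1] with x hx
        rw [norm_div, norm_pow, Complex.norm_real, Real.norm_of_nonneg (by linarith)]
        exact div_le_self (norm_nonneg _) (one_le_pow₀ hx)
      have h6 := hsum'.add hE2
      rw [add_zero] at h6
      refine h6.congr fun x => ?_
      simp only [Rc, add_div, Finset.sum_div]
    refine ((Complex.continuous_re.tendsto _).comp h1).congr fun x => ?_
    simp only [Function.comp_apply]
    rw [← Complex.ofReal_pow, Complex.div_ofReal_re]

/-! ### Removing the smoothing -/

lemma IsKernel.integrable {F : ℝ → ℝ} (hF : IsKernel F) : Integrable F := by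
  simpa using hF.integ 0

lemma measurableSet_tail (δ : ℝ) : MeasurableSet {y : ℝ | δ < |y|} :=
  (isOpen_lt continuous_const continuous_abs).measurableSet

lemma IsKernel.integrable_mul {F : ℝ → ℝ} (hF : IsKernel F) {f : ℝ → ℝ} (hf : Integrable f)
    (x : ℝ) : Integrable (fun u => f u * F (u - x)) := by
  obtain ⟨ψ, -, -, hψ⟩ := hF.four
  have hFc := hF.cont
  refine hf.mul_bdd (c := ∫ t, ‖ψ t‖) (by fun_prop) (Eventually.of_forall fun u => ?_)
  rw [← Complex.norm_real, ← hψ]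
  exact VectorFourier.norm_fourierIntegral_le_integral_norm 𝐞 volume (innerₗ ℝ) ψ _

/-- Upper bound for `b x` by the smoothed value `R` at `x + δ`: the kernel centred at `x + δ` lives
mostly on `[x, x + 2δ]`, where `b ≥ b x * e^{-2σδ}`; the tail is discarded by positivity. -/
lemma IsKernel.mul_le_smoothed {F : ℝ → ℝ} (hF : IsKernel F) {b : ℝ → ℝ} {σ : ℝ} (hσ : 0 < σ)
    (hb0 : ∀ u, 0 ≤ b u) (hbmono : ∀ u v, u ≤ v → b u ≤ b v * rexp (σ * (v - u)))
    (hbint : ∀ ε : ℝ, 0 < ε → Integrable (fun u => b u * rexp (-ε * u))) (m : ℕ) {R : ℝ}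
    {δ τ x : ℝ}
    (hR : Tendsto (fun ε : ℝ => ∫ u, b u * rexp (-ε * u) * F (u - (x + δ))) (𝓝[>] 0) (𝓝 R))
    (hτ : ∫ y, {y : ℝ | δ < |y|}.indicator (fun y => (1 + |y|) ^ m * F y) y = τ) :
    b x * rexp (-(2 * σ * δ)) * (1 - τ) ≤ R := by
  have hleft : Tendsto (fun ε : ℝ => b x * rexp (-(2 * σ * δ)) * rexp (-ε * (x + 2 * δ)) * (1 - τ))
      (𝓝[>] 0) (𝓝 (b x * rexp (-(2 * σ * δ)) * (1 - τ))) := by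
    have : Continuous (fun ε : ℝ => b x * rexp (-(2 * σ * δ)) * rexp (-ε * (x + 2 * δ)) * (1 - τ)) := by
      fun_prop
    simpa using (this.tendsto 0).mono_left nhdsWithin_le_nhds
  refine le_of_tendsto_of_tendsto hleft hR ?_
  filter_upwards [self_mem_nhdsWithin] with ε hε
  have hε' : (0 : ℝ) < ε := hε
  have hi := (hF.integ m).indicator (measurableSet_tail δ)
  have h1 : 1 - τ = ∫ u, (fun y => F y - {y : ℝ | δ < |y|}.indicator
      (fun y => (1 + |y|) ^ m * F y) y) (u - (x + δ)) := by
    refine Eq.trans ?_ (integral_sub_right_eq_self (μ := volume) (fun y => F y -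
      {y : ℝ | δ < |y|}.indicator (fun y => (1 + |y|) ^ m * F y) y) (x + δ)).symm
    rw [integral_sub hF.integrable hi, hF.total, hτ]
  rw [h1, ← integral_const_mul]
  refine integral_mono (((hF.integrable.sub hi).comp_sub_right (x + δ)).const_mul _)
    (hF.integrable_mul (hbint ε hε') _) fun u => ?_
  have hF0 := hF.nonneg (u - (x + δ))
  have hbu := hb0 u
  have hbx := hb0 x
  by_cases hy : δ < |u - (x + δ)|
  · simp only [Set.indicator, Set.mem_ofPred_eq, hy, if_true]
    have h2 : F (u - (x + δ)) ≤ (1 + |u - (x + δ)|) ^ m * F (u - (x + δ)) :=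
      le_mul_of_one_le_left hF0 (one_le_pow₀ (by linarith [abs_nonneg (u - (x + δ))]))
    refine le_trans (mul_nonpos_of_nonneg_of_nonpos (by positivity) (by linarith)) (by positivity)
  · simp only [Set.indicator, Set.mem_ofPred_eq, hy, if_false, sub_zero]
    obtain ⟨h2, h3⟩ := abs_le.mp (not_lt.mp hy)
    refine mul_le_mul_of_nonneg_right ?_ hF0
    have hbxu := hbmono x u (by linarith)
    have h4 : b x * rexp (-(2 * σ * δ)) ≤ b u := by
      calc b x * rexp (-(2 * σ * δ)) ≤ b u * rexp (σ * (u - x)) * rexp (-(2 * σ * δ)) := by gcongr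
        _ = b u * rexp (σ * (u - x) + -(2 * σ * δ)) := by rw [mul_assoc, ← Real.exp_add]
        _ ≤ b u := mul_le_of_le_one_right hbu (by rw [Real.exp_le_one_iff]; nlinarith)
    refine mul_le_mul h4 (Real.exp_le_exp.mpr ?_) (by positivity) hbu
    nlinarith

/-- Lower bound for `b x` by the smoothed value `R` at `x - δ`: the kernel centred at `x - δ` lives
mostly on `[x - 2δ, x]`, where `b ≤ b x * e^{2σδ}`; the tail is estimated by the polynomial
bound on `b`. -/
lemma IsKernel.smoothed_le {F : ℝ → ℝ} (hF : IsKernel F) {b : ℝ → ℝ} {σ : ℝ} (hσ : 0 < σ)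
    (hb0 : ∀ u, 0 ≤ b u) (hbneg : ∀ u < 0, b u = 0)
    (hbmono : ∀ u v, u ≤ v → b u ≤ b v * rexp (σ * (v - u)))
    (hbint : ∀ ε : ℝ, 0 < ε → Integrable (fun u => b u * rexp (-ε * u))) (m : ℕ) {R M : ℝ}
    (hM : ∀ u, b u ≤ M * (1 + |u|) ^ m) {δ τ x : ℝ} (hδ : 0 < δ)
    (hR : Tendsto (fun ε : ℝ => ∫ u, b u * rexp (-ε * u) * F (u - (x - δ))) (𝓝[>] 0) (𝓝 R))
    (hτ : ∫ y, {y : ℝ | δ < |y|}.indicator (fun y => (1 + |y|) ^ m * F y) y = τ) :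
    R ≤ b x * rexp (2 * σ * δ) + M * (1 + |x| + δ) ^ m * τ := by
  refine le_of_tendsto hR ?_
  filter_upwards [self_mem_nhdsWithin] with ε hε
  have hε' : (0 : ℝ) < ε := hε
  have hM0 : 0 ≤ M := by simpa using (hb0 0).trans (hM 0)
  have hi := (hF.integ m).indicator (measurableSet_tail δ)
  have h1 : b x * rexp (2 * σ * δ) + M * (1 + |x| + δ) ^ m * τ =
      ∫ u, (fun y => b x * rexp (2 * σ * δ) * F y + M * (1 + |x| + δ) ^ m *
        {y : ℝ | δ < |y|}.indicator (fun y => (1 + |y|) ^ m * F y) y) (u - (x - δ)) := by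
    refine Eq.trans ?_ (integral_sub_right_eq_self (μ := volume) (fun y =>
      b x * rexp (2 * σ * δ) * F y + M * (1 + |x| + δ) ^ m *
        {y : ℝ | δ < |y|}.indicator (fun y => (1 + |y|) ^ m * F y) y) (x - δ)).symm
    rw [integral_add (hF.integrable.const_mul _) (hi.const_mul _),
      integral_const_mul, integral_const_mul, hF.total, hτ, mul_one]
  rw [h1]
  refine integral_mono (hF.integrable_mul (hbint ε hε') _)
    (((hF.integrable.const_mul _).add (hi.const_mul _)).comp_sub_right (x - δ)) fun u => ?_
  have hF0 := hF.nonneg (u - (x - δ))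
  have hbu := hb0 u
  have hbx := hb0 x
  have hbe : b u * rexp (-ε * u) ≤ b u := by
    rcases lt_or_ge u 0 with hu | hu
    · simp [hbneg u hu]
    · exact mul_le_of_le_one_right hbu (by rw [Real.exp_le_one_iff]; nlinarith)
  refine (mul_le_mul_of_nonneg_right hbe hF0).trans ?_
  by_cases hy : δ < |u - (x - δ)|
  · simp only [Set.indicator, Set.mem_ofPred_eq, hy, if_true]
    have h2 : 1 + |u| ≤ (1 + |x| + δ) * (1 + |u - (x - δ)|) := by
      have h3 : |u| ≤ |u - (x - δ)| + (|x| + δ) := by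
        calc |u| = |(u - (x - δ)) + (x - δ)| := by ring_nf
          _ ≤ |u - (x - δ)| + |x - δ| := abs_add_le _ _
          _ ≤ |u - (x - δ)| + (|x| + |δ|) := by gcongr; exact abs_sub x δ
          _ = _ := by rw [abs_of_pos hδ]
      nlinarith [abs_nonneg x, abs_nonneg (u - (x - δ)),
        mul_nonneg (abs_nonneg x) (abs_nonneg (u - (x - δ))),
        mul_nonneg hδ.le (abs_nonneg (u - (x - δ)))]
    have h4 : b u ≤ M * (1 + |x| + δ) ^ m * (1 + |u - (x - δ)|) ^ m := by
      rw [mul_assoc, ← mul_pow]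
      exact (hM u).trans (mul_le_mul_of_nonneg_left (pow_le_pow_left₀ (by positivity) h2 m) hM0)
    have h5 := mul_le_mul_of_nonneg_right h4 hF0
    have h6 : 0 ≤ b x * rexp (2 * σ * δ) * F (u - (x - δ)) := by positivity
    linarith
  · simp only [Set.indicator, Set.mem_ofPred_eq, hy, if_false, mul_zero, add_zero]
    obtain ⟨h2, h3⟩ := abs_le.mp (not_lt.mp hy)
    refine mul_le_mul_of_nonneg_right ((hbmono u x (by linarith)).trans ?_) hF0
    refine mul_le_mul_of_nonneg_left (Real.exp_le_exp.mpr ?_) hbx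
    nlinarith

lemma tendsto_shift_div {R : ℝ → ℝ} {m : ℕ} {L : ℝ}
    (hR : Tendsto (fun x => R x / x ^ m) atTop (𝓝 L)) (d : ℝ) :
    Tendsto (fun x => R (x + d) / x ^ m) atTop (𝓝 L) := by
  have h1 := hR.comp (tendsto_atTop_add_const_right atTop d tendsto_id)
  have h2 : Tendsto (fun x : ℝ => (1 + d / x) ^ m) atTop (𝓝 ((1 + 0) ^ m)) :=
    ((tendsto_const_nhds.div_atTop tendsto_id).const_add 1).pow m
  have h3 := h1.mul h2
  simp only [add_zero, one_pow, mul_one] at h3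
  refine h3.congr' ?_
  filter_upwards [eventually_gt_atTop 0, eventually_gt_atTop (-d)] with x hx hxd
  have hx' : x + d ≠ 0 := by linarith
  simp only [Function.comp_apply, id]
  have : 1 + d / x = (x + d) / x := by field_simp
  rw [this, div_pow]
  field_simp

/-- A Tauberian theorem for Laplace transforms with a pole of order `m + 1` at `0`. Apart from
`b ≥ 0`, the Tauberian condition is that `b u * e^{σu}` is nondecreasing. -/
theorem tendsto_div_pow_of_laplace {b : ℝ → ℝ} {σ : ℝ} (hσ : 0 < σ)
    (hb0 : ∀ u, 0 ≤ b u) (hbneg : ∀ u < 0, b u = 0)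
    (hbmono : ∀ u v, u ≤ v → b u ≤ b v * rexp (σ * (v - u)))
    (hbint : ∀ ε : ℝ, 0 < ε → Integrable (fun u => b u * rexp (-ε * u)))
    (m : ℕ) (c : ℕ → ℂ) {h : ℂ → ℂ} (hh : ContinuousOn h {z | 0 ≤ z.re})
    (hlap : ∀ z : ℂ, 0 < z.re → ∫ u, (b u : ℂ) * Complex.exp (-z * u)
      = ∑ j ∈ Finset.range (m + 1), c j / z ^ (j + 1) + h z) :
    Tendsto (fun x => b x / x ^ m) atTop (𝓝 (c m / m.factorial).re) := by
  generalize hL : (c m / m.factorial).re = L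
  have hup : ∀ δ > 0, ∀ η > 0, η < 1 → ∀ᶠ x : ℝ in atTop,
      b x / x ^ m ≤ rexp (2 * σ * δ) / (1 - η) * (L + δ) := by
    intro δ hδ η hη hη1
    obtain ⟨F, hF, htail⟩ := exists_isKernel_tail m hδ hη
    obtain ⟨R, hR, hRL⟩ := hF.exists_limit hbint m c hh hlap
    rw [hL] at hRL
    filter_upwards [(tendsto_shift_div hRL δ).eventually (gt_mem_nhds (by linarith : L < L + δ)),
      eventually_gt_atTop 0] with x hx hx0
    have h1 := hF.mul_le_smoothed hσ hb0 hbmono hbint m (hR (x + δ)) rfl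
    have h2 : b x * rexp (-(2 * σ * δ)) * (1 - η) ≤ R (x + δ) :=
      le_trans (mul_le_mul_of_nonneg_left (by linarith)
        (mul_nonneg (hb0 x) (Real.exp_pos _).le)) h1
    have hx0' : 0 < x ^ m := by positivity
    rw [div_lt_iff₀ hx0'] at hx
    rw [div_le_iff₀ hx0', div_mul_eq_mul_div, div_mul_eq_mul_div, le_div_iff₀ (by linarith)]
    have h3 : rexp (2 * σ * δ) * rexp (-(2 * σ * δ)) = 1 := by rw [← Real.exp_add]; simp
    have h4 := mul_le_mul_of_nonneg_left (h2.trans hx.le) (Real.exp_pos (2 * σ * δ)).le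
    calc b x * (1 - η) = (rexp (2 * σ * δ) * rexp (-(2 * σ * δ))) * (b x * (1 - η)) := by
          rw [h3, one_mul]
      _ = rexp (2 * σ * δ) * (b x * rexp (-(2 * σ * δ)) * (1 - η)) := by ring
      _ ≤ _ := h4
      _ = _ := by ring
  -- For large `u` this is the upper bound just proved; for `u ≤ Y` it follows from `hbmono`.
  obtain ⟨M, hM⟩ : ∃ M, ∀ u, b u ≤ M * (1 + |u|) ^ m := by
    obtain ⟨X, hX⟩ := eventually_atTop.mp (hup 1 one_pos (1 / 2) (by norm_num) (by norm_num))
    generalize rexp (2 * σ * 1) / (1 - 1 / 2) * (L + 1) = K at hX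
    let Y := max X 1
    refine ⟨|K| + b Y * rexp (σ * Y), fun u => ?_⟩
    have hbY : 0 ≤ b Y * rexp (σ * Y) := mul_nonneg (hb0 _) (Real.exp_pos _).le
    have hone : 1 ≤ (1 + |u|) ^ m := one_le_pow₀ (by linarith [abs_nonneg u])
    rcases lt_or_ge u 0 with hu | hu
    · rw [hbneg u hu]; positivity
    rcases le_total u Y with huY | huY
    · have h1 := hbmono u Y huY
      have h2 : b Y * rexp (σ * (Y - u)) ≤ b Y * rexp (σ * Y) :=
        mul_le_mul_of_nonneg_left (Real.exp_le_exp.mpr (by nlinarith)) (hb0 _)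
      calc b u ≤ (|K| + b Y * rexp (σ * Y)) * 1 := by linarith [abs_nonneg K]
        _ ≤ _ := mul_le_mul_of_nonneg_left hone (by positivity)
    · have hu1 : 1 ≤ u := (le_max_right X 1).trans huY
      have h1 := hX u ((le_max_left X 1).trans huY)
      rw [div_le_iff₀ (by positivity)] at h1
      have h2 : u ^ m ≤ (1 + |u|) ^ m :=
        pow_le_pow_left₀ hu (by linarith [le_abs_self u]) m
      calc b u ≤ K * u ^ m := h1
        _ ≤ |K| * u ^ m := by gcongr; exact le_abs_self K
        _ ≤ |K| * (1 + |u|) ^ m := by gcongr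
        _ ≤ _ := by gcongr; linarith
  have hM0 : 0 ≤ M := by simpa using (hb0 0).trans (hM 0)
  have hlow : ∀ δ > 0, ∀ η > 0, ∀ᶠ x : ℝ in atTop,
      rexp (-(2 * σ * δ)) * (L - δ - M * (2 + δ) ^ m * η) ≤ b x / x ^ m := by
    intro δ hδ η hη
    obtain ⟨F, hF, htail⟩ := exists_isKernel_tail m hδ hη
    obtain ⟨R, hR, hRL⟩ := hF.exists_limit hbint m c hh hlap
    rw [hL] at hRL
    filter_upwards [(tendsto_shift_div hRL (-δ)).eventually
      (lt_mem_nhds (by linarith : L - δ < L)), eventually_ge_atTop 1] with x hx hx1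
    rw [← sub_eq_add_neg] at hx
    have h1 := hF.smoothed_le hσ hb0 hbneg hbmono hbint m hM hδ (hR (x - δ)) rfl
    have hx0' : 0 < x ^ m := by positivity
    rw [lt_div_iff₀ hx0'] at hx
    have h2 : (1 + |x| + δ) ^ m ≤ (2 + δ) ^ m * x ^ m := by
      rw [← mul_pow, abs_of_pos (by linarith)]
      exact pow_le_pow_left₀ (by positivity) (by nlinarith) m
    have h3 : R (x - δ) ≤ b x * rexp (2 * σ * δ) + M * ((2 + δ) ^ m * x ^ m) * η :=
      h1.trans (add_le_add_right (mul_le_mul (mul_le_mul_of_nonneg_left h2 hM0) htail.le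
        (integral_nonneg fun y => Set.indicator_nonneg (fun y _ => mul_nonneg (by positivity)
          (hF.nonneg y)) y) (by positivity)) _)
    rw [le_div_iff₀ hx0', Real.exp_neg, mul_assoc, inv_mul_le_iff₀ (Real.exp_pos _)]
    linarith
  rw [tendsto_order]
  refine ⟨fun l hl => ?_, fun l hl => ?_⟩
  · have hcont : Tendsto (fun δ : ℝ => rexp (-(2 * σ * δ)) * (L - δ - M * (2 + δ) ^ m * δ))
        (𝓝[>] 0) (𝓝 L) := by
      have : Continuous (fun δ : ℝ => rexp (-(2 * σ * δ)) * (L - δ - M * (2 + δ) ^ m * δ)) := by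
        fun_prop
      simpa using (this.tendsto 0).mono_left nhdsWithin_le_nhds
    obtain ⟨δ, h1, h2⟩ := ((hcont.eventually (lt_mem_nhds hl)).and self_mem_nhdsWithin).exists
    filter_upwards [hlow δ h2 δ h2] with x hx using h1.trans_le hx
  · have hcont : Tendsto (fun δ : ℝ => rexp (2 * σ * δ) / (1 - δ) * (L + δ))
        (𝓝[>] 0) (𝓝 L) := by
      have : ContinuousAt (fun δ : ℝ => rexp (2 * σ * δ) / (1 - δ) * (L + δ)) 0 := by
        refine ContinuousAt.mul (ContinuousAt.div ?_ ?_ (by norm_num)) ?_ <;> fun_prop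
      simpa using this.tendsto.mono_left nhdsWithin_le_nhds
    obtain ⟨δ, ⟨h1, h2⟩, h3⟩ := (((hcont.eventually (gt_mem_nhds hl)).and
      self_mem_nhdsWithin).and (nhdsWithin_le_nhds (gt_mem_nhds (zero_lt_one' ℝ)))).exists
    filter_upwards [hup δ h2 δ h2 h3] with x hx using hx.trans_lt h1

/-! ### The summatory function of the coefficients -/

/-- The summatory function of `a` in the variable `u = log t`, normalised by `e^{-σu}`. -/
noncomputable def scaledSum (a : ℕ → ℝ) (σ u : ℝ) : ℝ :=
  rexp (-σ * u) * ∑ n ∈ Finset.Icc 1 ⌊rexp u⌋₊, a n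

/-- Rankin's bound: `∑_{n ≤ N} aₙ ≤ N ^ r * ∑ aₙ n^{-r}`. -/
theorem exists_sum_le_rpow {a : ℕ → ℝ} (ha : ∀ n, 0 ≤ a n) {r : ℝ} (hr : 0 < r)
    (hs : LSeriesSummable (fun n => (a n : ℂ)) r) :
    ∃ C, 0 ≤ C ∧ ∀ N : ℕ, ∑ n ∈ Finset.Icc 1 N, a n ≤ C * (N : ℝ) ^ r := by
  have hs' : Summable fun n => ‖LSeries.term (fun n => (a n : ℂ)) r n‖ := hs.norm
  refine ⟨∑' n, ‖LSeries.term (fun n => (a n : ℂ)) r n‖,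
    tsum_nonneg fun n => norm_nonneg _, fun N => ?_⟩
  calc ∑ n ∈ Finset.Icc 1 N, a n
      ≤ ∑ n ∈ Finset.Icc 1 N, ‖LSeries.term (fun n => (a n : ℂ)) r n‖ * (N : ℝ) ^ r := by
        refine Finset.sum_le_sum fun n hn => ?_
        obtain ⟨h1, h2⟩ := Finset.mem_Icc.1 hn
        have hn0 : (0 : ℝ) < n := by exact_mod_cast h1
        rw [LSeries.norm_term_eq, if_neg (by omega), Complex.ofReal_re, Complex.norm_real,
          Real.norm_of_nonneg (ha n), div_mul_eq_mul_div, le_div_iff₀ (by positivity)]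
        exact mul_le_mul_of_nonneg_left
          (Real.rpow_le_rpow hn0.le (by exact_mod_cast h2) hr.le) (ha n)
    _ ≤ _ := by
        rw [← Finset.sum_mul]
        exact mul_le_mul_of_nonneg_right (hs'.sum_le_tsum _ fun _ _ => norm_nonneg _)
          (by positivity)

theorem scaledSum_nonneg {a : ℕ → ℝ} (ha : ∀ n, 0 ≤ a n) (σ u : ℝ) : 0 ≤ scaledSum a σ u :=
  mul_nonneg (Real.exp_pos _).le (Finset.sum_nonneg fun n _ => ha n)

theorem scaledSum_of_neg (a : ℕ → ℝ) (σ : ℝ) {u : ℝ} (hu : u < 0) : scaledSum a σ u = 0 := by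
  have : ⌊rexp u⌋₊ = 0 := Nat.floor_eq_zero.2 (Real.exp_lt_one_iff.2 hu)
  simp [scaledSum, this]

theorem monotone_sum_floor_exp {a : ℕ → ℝ} (ha : ∀ n, 0 ≤ a n) :
    Monotone fun u : ℝ => ∑ n ∈ Finset.Icc 1 ⌊rexp u⌋₊, a n := fun _ _ huv =>
  Finset.sum_le_sum_of_subset_of_nonneg
    (Finset.Icc_subset_Icc_right (Nat.floor_mono (Real.exp_le_exp.2 huv))) fun n _ _ => ha n

theorem scaledSum_le {a : ℕ → ℝ} (ha : ∀ n, 0 ≤ a n) (σ : ℝ) {u v : ℝ} (huv : u ≤ v) :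
    scaledSum a σ u ≤ scaledSum a σ v * rexp (σ * (v - u)) := by
  have h : rexp (-σ * u) = rexp (-σ * v) * rexp (σ * (v - u)) := by
    rw [← Real.exp_add]; congr 1; ring
  have h2 := mul_le_mul_of_nonneg_left (monotone_sum_floor_exp ha huv) (Real.exp_pos (-σ * u)).le
  refine h2.trans_eq ?_
  simp only [scaledSum]
  rw [h]; ring

theorem integrable_scaledSum {a : ℕ → ℝ} (ha : ∀ n, 0 ≤ a n) {σ : ℝ} (hσ : 0 < σ)
    (hconv : ∀ s : ℂ, σ < s.re → LSeriesSummable (fun n => (a n : ℂ)) s) {ε : ℝ} (hε : 0 < ε) :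
    Integrable fun u => scaledSum a σ u * rexp (-ε * u) := by
  obtain ⟨C, hC0, hC⟩ := exists_sum_le_rpow ha (r := σ + ε / 2) (by positivity)
    (hconv _ (by simpa using hε))
  have hmeas : Measurable fun u => scaledSum a σ u * rexp (-ε * u) := by
    have := (monotone_sum_floor_exp ha).measurable
    unfold scaledSum
    fun_prop
  have hg : Integrable ((Set.Ici (0 : ℝ)).indicator fun u => C * rexp (-(ε / 2) * u)) := by
    rw [integrable_indicator_iff measurableSet_Ici]
    refine Integrable.const_mul ?_ C
    rw [← IntegrableOn, integrableOn_Ici_iff_integrableOn_Ioi]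
    exact exp_neg_integrableOn_Ioi 0 (by positivity)
  refine hg.mono' hmeas.aestronglyMeasurable (Eventually.of_forall fun u => ?_)
  rw [Real.norm_of_nonneg (mul_nonneg (scaledSum_nonneg ha σ u) (Real.exp_pos _).le)]
  rcases lt_or_ge u 0 with hu | hu
  · simp [scaledSum_of_neg a σ hu, hu]
  · rw [Set.indicator_of_mem (Set.mem_Ici.2 hu)]
    have h1 : ∑ n ∈ Finset.Icc 1 ⌊rexp u⌋₊, a n ≤ C * rexp (u * (σ + ε / 2)) := by
      refine (hC _).trans (mul_le_mul_of_nonneg_left ?_ hC0)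
      rw [Real.exp_mul]
      exact Real.rpow_le_rpow (by positivity) (Nat.floor_le (Real.exp_pos u).le) (by positivity)
    have h2 : rexp (-(ε / 2) * u) = rexp (-σ * u) * rexp (u * (σ + ε / 2)) * rexp (-ε * u) := by
      rw [← Real.exp_add, ← Real.exp_add]; congr 1; ring
    rw [h2, scaledSum]
    calc _ ≤ rexp (-σ * u) * (C * rexp (u * (σ + ε / 2))) * rexp (-ε * u) := by gcongr
      _ = _ := by ring

/-- Abel summation, after the substitution `t = e^u`. -/
theorem integral_scaledSum {a : ℕ → ℝ} (ha : ∀ n, 0 ≤ a n) {σ : ℝ} (hσ : 0 < σ)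
    (hconv : ∀ s : ℂ, σ < s.re → LSeriesSummable (fun n => (a n : ℂ)) s) {z : ℂ} (hz : 0 < z.re) :
    ∫ u, (scaledSum a σ u : ℂ) * Complex.exp (-z * u)
      = LSeries (fun n => (a n : ℂ)) (σ + z) / (σ + z) := by
  have hne : (σ : ℂ) + z ≠ 0 := fun h => by
    have := congrArg Complex.re h
    simp at this; linarith
  obtain ⟨C, hC0, hC⟩ := exists_sum_le_rpow ha (r := σ + z.re / 2) (by positivity)
    (hconv _ (by simpa using hz))
  have hO : (fun n : ℕ => ∑ k ∈ Finset.Icc 1 n, a k) =O[atTop]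
      fun n : ℕ => (n : ℝ) ^ (σ + z.re / 2) :=
    Asymptotics.IsBigO.of_bound C (Eventually.of_forall fun n => by
      rw [Real.norm_of_nonneg (Finset.sum_nonneg fun n _ => ha n),
        Real.norm_of_nonneg (by positivity)]
      exact hC n)
  rw [LSeries_eq_mul_integral_of_nonneg a (by positivity)
    (show σ + z.re / 2 < ((σ : ℂ) + z).re by simp; linarith) hO ha, mul_div_cancel_left₀ _ hne]
  have himg : Real.exp '' Set.Ioi 0 = Set.Ioi 1 := by
    ext t
    constructor
    · rintro ⟨u, hu, rfl⟩
      exact Real.one_lt_exp_iff.2 hu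
    · intro ht
      have ht0 : (0 : ℝ) < t := lt_trans one_pos ht
      exact ⟨Real.log t, Real.log_pos ht, Real.exp_log ht0⟩
  rw [← himg, integral_image_eq_integral_abs_deriv_smul measurableSet_Ioi
    (fun u _ => (Real.hasDerivAt_exp u).hasDerivWithinAt) Real.exp_injective.injOn,
    ← integral_Ici_eq_integral_Ioi, ← setIntegral_eq_integral_of_forall_compl_eq_zero
      (s := Set.Ici (0 : ℝ))]
  · refine setIntegral_congr_fun measurableSet_Ici fun u _ => ?_
    have h1 : ((rexp u : ℝ) : ℂ) ^ (-((σ : ℂ) + z + 1)) = Complex.exp (-(σ + z + 1) * u) := by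
      rw [Complex.cpow_def_of_ne_zero (by exact_mod_cast (Real.exp_pos u).ne'),
        ← Complex.ofReal_log (Real.exp_pos u).le, Real.log_exp, mul_comm]
    have h2 : Complex.exp (-(σ : ℂ) * u) * Complex.exp (-z * u)
        = Complex.exp u * Complex.exp (-(σ + z + 1) * u) := by
      rw [← Complex.exp_add, ← Complex.exp_add]; congr 1; ring
    simp only [scaledSum, abs_of_pos (Real.exp_pos u), h1, Complex.real_smul]
    push_cast
    linear_combination (∑ n ∈ Finset.Icc 1 ⌊rexp u⌋₊, (a n : ℂ)) * h2
  · intro u hu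
    rw [scaledSum_of_neg a σ (by simpa using hu)]
    simp

/-! ### Splitting off the polar part -/

/-- A function on the closed right half-plane, continuous except for a pole of order at most `m + 1`
at `0`, is its polar part plus a function continuous on the whole closed half-plane. -/
theorem exists_laurent_split {f g : ℂ → ℂ} (hf : AnalyticAt ℂ f 0) (m : ℕ)
    (hfg : ∀ᶠ z in 𝓝[≠] (0 : ℂ), z ^ (m + 1) * g z = f z)
    (hg : ∀ z : ℂ, 0 ≤ z.re → z ≠ 0 → ContinuousAt g z) :
    ∃ (c : ℕ → ℂ) (h : ℂ → ℂ), c m = f 0 ∧ ContinuousOn h {z | 0 ≤ z.re} ∧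
      ∀ z ≠ 0, g z = ∑ j ∈ Finset.range (m + 1), c j / z ^ (j + 1) + h z := by
  obtain ⟨F, hF, hFeq⟩ := hf.exists_eq_sum_add_pow_mul (m + 1)
  set c : ℕ → ℂ := fun j => iteratedDeriv (m - j) f 0 / (m - j).factorial with hc
  set P : ℂ → ℂ := fun z => ∑ j ∈ Finset.range (m + 1), c j / z ^ (j + 1) with hP
  have hsum : ∀ z ≠ 0, z ^ (m + 1) * P z
      = ∑ i ∈ Finset.range (m + 1), (z ^ i / i.factorial) • iteratedDeriv i f 0 := by
    intro z hz
    rw [hP, Finset.mul_sum, ← Finset.sum_range_reflect]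
    refine Finset.sum_congr rfl fun i hi => ?_
    have hi' : i ≤ m := by simpa [Nat.lt_succ_iff] using hi
    have e1 : m + 1 - 1 - i = m - i := by omega
    have e2 : m - (m - i) = i := by omega
    have e3 : z ^ (m + 1) = z ^ i * z ^ (m - i + 1) := by rw [← pow_add]; congr 1; omega
    simp only [hc, e1, e2, e3, smul_eq_mul]
    field_simp
  -- `g - P` is extended to `0` by the value of the Taylor remainder `F` of `f`
  refine ⟨c, Function.update (fun z => g z - P z) 0 (F 0), by simp [hc], ?_, ?_⟩
  · intro z hz
    apply ContinuousAt.continuousWithinAt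
    rcases eq_or_ne z 0 with rfl | hz0
    · rw [continuousAt_update_same]
      refine (hF.continuousAt.tendsto.mono_left nhdsWithin_le_nhds).congr' ?_
      filter_upwards [hfg, self_mem_nhdsWithin] with z hz hz0
      have hz0 : z ≠ 0 := hz0
      have h1 := hFeq z
      rw [← hsum z hz0, ← hz, smul_eq_mul] at h1
      have h2 : z ^ (m + 1) ≠ 0 := pow_ne_zero _ hz0
      exact mul_left_cancel₀ h2 (by linear_combination -h1)
    · rw [continuousAt_update_of_ne hz0]
      refine (hg z hz hz0).sub ?_
      have : ∀ j, z ^ (j + 1) ≠ 0 := fun j => pow_ne_zero _ hz0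
      rw [hP]
      exact tendsto_finsetSum _ fun j _ =>
        (continuousAt_const.div (continuousAt_id.pow _) (this j) :)
  · intro z hz
    rw [Function.update_of_ne hz]
    ring

end

/-! ### Dirichlet series -/

/-- Delange's Tauberian theorem (Theorem 1.1): if the Dirichlet series
`Z(s) = ∑ aₙ n⁻ˢ` with nonnegative coefficients has abscissa of convergence `σ > 0`
and extends meromorphically to a neighborhood of the closed half-plane `Re s ≥ σ`,
holomorphically at every point of the line `Re s = σ` except for a pole of order `w`
at `s = σ`, then `∑_{n ≤ N} aₙ ∼ (A/(σ·(w-1)!))·N^σ·(log N)^{w-1}`. -/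
theorem tauberian_delange
    (a : ℕ → ℝ) (ha : ∀ n, 0 ≤ a n) (σ : ℝ) (hσ : 0 < σ) (w : ℕ) (hw : 1 ≤ w)
    (hconv : ∀ s : ℂ, σ < s.re → LSeriesSummable (fun n => (a n : ℂ)) s)
    (hdiv : ∀ s : ℂ, s.re < σ → ¬ LSeriesSummable (fun n => (a n : ℂ)) s)
    (U : Set ℂ) (hUopen : IsOpen U) (hU : {s : ℂ | σ ≤ s.re} ⊆ U)
    (G : ℂ → ℂ) (hG : MeromorphicOn G U)
    (hGZ : ∀ s : ℂ, σ < s.re → G s = LSeries (fun n => (a n : ℂ)) s)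
    (hhol : ∀ s : ℂ, s.re = σ → s ≠ (σ : ℂ) → AnalyticAt ℂ G s)
    (H : ℂ → ℂ) (hH : AnalyticAt ℂ H (σ : ℂ)) (hH0 : H (σ : ℂ) ≠ 0)
    (hpole : ∀ᶠ s in 𝓝[≠] (σ : ℂ), (s - (σ : ℂ)) ^ w * G s = H s)
    (A : ℝ)
    (hA : Tendsto (fun s : ℝ => ((s : ℂ) - (σ : ℂ)) ^ w * LSeries (fun n => (a n : ℂ)) s)
      (𝓝[>] σ) (𝓝 (A : ℂ))) :
    Tendsto (fun N : ℕ => (∑ n ∈ Finset.Icc 1 N, a n) /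
      (A / (σ * (Nat.factorial (w - 1))) * (N : ℝ) ^ σ * (Real.log N) ^ (w - 1)))
      atTop (𝓝 1) := by
  obtain ⟨m, rfl⟩ : ∃ m, w = m + 1 := ⟨w - 1, by omega⟩
  -- the limit defining `A` is the value at `σ` of the regularised function `H`
  have hAH : (A : ℂ) = H σ := by
    have hcoe : Tendsto (fun s : ℝ => (s : ℂ)) (𝓝[>] σ) (𝓝[≠] (σ : ℂ)) :=
      tendsto_nhdsWithin_of_tendsto_nhds_of_eventually_within _
        (Complex.continuous_ofReal.continuousAt.tendsto.mono_left nhdsWithin_le_nhds)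
        (by
          filter_upwards [self_mem_nhdsWithin] with s hs
          simpa using (ne_of_gt hs : s ≠ σ))
    refine tendsto_nhds_unique hA (((hH.continuousAt.tendsto.mono_left
      nhdsWithin_le_nhds).comp hcoe).congr' ?_)
    filter_upwards [hcoe.eventually hpole, self_mem_nhdsWithin] with s hs hs'
    rw [← hGZ s (by simpa using hs'), hs, Function.comp_apply]
  have hA0 : A ≠ 0 := fun h => hH0 (by rw [← hAH, h, Complex.ofReal_zero])
  have hσ0 : (σ : ℂ) ≠ 0 := by exact_mod_cast hσ.ne'
  have hne : ∀ z : ℂ, 0 ≤ z.re → (σ : ℂ) + z ≠ 0 := fun z hz h => by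
    have := congrArg Complex.re h
    simp at this; linarith
  have hf : AnalyticAt ℂ (fun z => H (σ + z) / (σ + z)) 0 := by
    refine AnalyticAt.div (AnalyticAt.fun_comp (by simpa using hH) (by fun_prop)) (by fun_prop)
      (by simpa using hσ0)
  have hshift : Tendsto (fun z : ℂ => σ + z) (𝓝[≠] 0) (𝓝[≠] (σ : ℂ)) := by
    refine tendsto_nhdsWithin_of_tendsto_nhds_of_eventually_within _ ?_ ?_
    · have : Continuous fun z : ℂ => σ + z := by fun_prop
      simpa using (this.tendsto 0).mono_left nhdsWithin_le_nhds
    · filter_upwards [self_mem_nhdsWithin] with z hz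
      simpa using hz
  have hfg : ∀ᶠ z in 𝓝[≠] (0 : ℂ),
      z ^ (m + 1) * (G (σ + z) / (σ + z)) = H (σ + z) / (σ + z) := by
    filter_upwards [hshift.eventually hpole] with z hz
    rw [← hz, add_sub_cancel_left, mul_div_assoc]
  have hGcont : ∀ s : ℂ, σ ≤ s.re → s ≠ σ → ContinuousAt G s := by
    intro s hs hsσ
    rcases hs.eq_or_lt with h | h
    · exact (hhol s h.symm hsσ).continuousAt
    · have hab : LSeries.abscissaOfAbsConv (fun n => (a n : ℂ)) ≤ σ :=
        LSeries.abscissaOfAbsConv_le_of_forall_lt_LSeriesSummable fun y hy =>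
          hconv y (by simpa using hy)
      have hL : ContinuousAt (LSeries fun n => (a n : ℂ)) s :=
        (LSeries_hasDerivAt (hab.trans_lt (by exact_mod_cast h))).continuousAt
      refine hL.congr ?_
      filter_upwards [(isOpen_lt continuous_const Complex.continuous_re).mem_nhds h] with t ht
      exact (hGZ t ht).symm
  obtain ⟨c, h, hcm, hh, hgc⟩ := exists_laurent_split hf m hfg fun z hz hz0 => by
    refine ContinuousAt.div (ContinuousAt.comp' (hGcont _ ?_ ?_) (by fun_prop)) (by fun_prop)
      (hne z hz)
    · simpa using hz
    · simpa using hz0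
  have key := tendsto_div_pow_of_laplace hσ (scaledSum_nonneg ha σ)
    (fun u hu => scaledSum_of_neg a σ hu) (fun u v huv => scaledSum_le ha σ huv)
    (fun ε hε => integrable_scaledSum ha hσ hconv hε) m c hh fun z hz => by
      rw [integral_scaledSum ha hσ hconv hz, ← hGZ _ (by simpa using hz)]
      exact hgc z fun h0 => by simp [h0] at hz
  have hlim : (c m / m.factorial).re = A / (σ * m.factorial) := by
    have : c m / m.factorial = ((A / (σ * m.factorial) : ℝ) : ℂ) := by
      rw [hcm]
      simp only [add_zero]
      rw [← hAH]
      push_cast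
      rw [div_div]
    rw [this, Complex.ofReal_re]
  rw [hlim] at key
  have hD : A / (σ * m.factorial) ≠ 0 := by positivity
  have hlog : Tendsto (fun N : ℕ => Real.log N) atTop atTop :=
    Real.tendsto_log_atTop.comp tendsto_natCast_atTop_atTop
  have hfin := (key.comp hlog).div_const (A / (σ * m.factorial))
  rw [div_self hD] at hfin
  refine hfin.congr' ?_
  filter_upwards [eventually_gt_atTop 0] with N hN
  have hN0 : (0 : ℝ) < N := by exact_mod_cast hN
  have hpow : Real.exp (-σ * Real.log N) = ((N : ℝ) ^ σ)⁻¹ := by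
    rw [Real.rpow_def_of_pos hN0, ← Real.exp_neg]; congr 1; ring
  simp only [Function.comp_apply, scaledSum, Real.exp_log hN0, Nat.floor_natCast, hpow,
    Nat.add_sub_cancel]
  rw [div_div, inv_mul_eq_div, div_div]
  congr 1
  ring
end

section
/- Let K be a number field with ring of integers O_K. For every positive integer n, the number of ideals I of the polynomial ring O_K[X] with |O_K[X]/I| = n equals n times the number of finitely supported sequences (I_d)_{d≥1} of nonzero ideals of O_K (meaning I_d = O_K for all but finitely many d) such that ∏_{d≥1} N(I_d)^d = n, where N(I_d) = |O_K/I_d| is the absolute norm of the ideal I_d. -/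
/-!
Write `A = 𝓞 K`. To an ideal `I` of `A[X]` attach the chain `L 0 ≤ L 1 ≤ ⋯` of ideals of `A`, where
`L k` consists of the coefficients of `X ^ k` in elements of `I` of degree at most `k`
(`Ideal.leadingCoeffNth`). If `I` has finite index, all `L k` are nonzero and `L k = A` for large
`k`. As `A` is a Dedekind domain, `L k = J k * L (k + 1)` for unique nonzero ideals `J k`, almost all
equal to `A`, and the sequence `(J (d - 1))` over `d ≥ 1` is the sequence `(I_d)` of the theorem.
It remains to see that every ideal with chain `L` has index `n = ∏ N (J k) ^ (k + 1)`, and that there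
are exactly `n` such ideals.

The key point is that elements of `I` of degree at most `k` have all their coefficients in `L k`
(`Chain.coeff_mem`), by cancellation of `J (k - 1)`. Since `L k` is invertible, this produces for
each `k` a monic polynomial `g k` of degree `k` with `L k * g k ⊆ I` (`Chain.exists_monic`). Hence
`I = ⨁ L k * g k` inside `A[X] = ⨁ A * g k`, and the index of `I` is `∏ N (L k)`, which equals
`∏ N (J k) ^ (k + 1)` because `L k` is the product of the `J i` with `i ≥ k`.

Conversely `⨁ L k * g k` is closed under multiplication by `X` exactly when
`g (k + 1) = X * g k + ∑ j ≤ k, c k j * g j` with `c k j * L k ⊆ L j`, that is, with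
`c k j ∈ J j * ⋯ * J (k - 1)`. Once `g 0, …, g k` are fixed, `I` determines `c k j` exactly modulo
the multipliers of `L (k + 1)` into `L j`, that is, modulo `J j * ⋯ * J k`. Thus the ideals with
chain `L` are parametrized by choosing `c k j` in a system of representatives of
`J j * ⋯ * J (k - 1)` modulo `J j * ⋯ * J k`, which has `N (J k)` elements, for all `j ≤ k`
(`Chain.paramEquiv`). The number of choices is `∏ N (J k) ^ (k + 1)`.
-/

open NumberField
open Polynomial

namespace IdealCount

/-! ### Set-theoretic preliminaries -/

section Choice

/-- Dependent choice for sequences: if the `k`-th condition involves only the terms of index at most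
`k`, and can be met by adjusting the `k`-th term as soon as all earlier conditions hold, then all
conditions can be met simultaneously. -/
theorem exists_dependent_seq {β : ℕ → Type*} [∀ k, Nonempty (β k)]
    (P : ℕ → (∀ i, β i) → Prop)
    (hloc : ∀ k c c', (∀ i ≤ k, c i = c' i) → P k c → P k c')
    (hstep : ∀ k c, (∀ i < k, P i c) → ∃ x, P k (Function.update c k x)) :
    ∃ c, ∀ k, P k c := by
  classical
  have key : ∀ N (c : {c : ∀ i, β i // ∀ i < N, P i c}),
      ∃ c' : {c : ∀ i, β i // ∀ i < N + 1, P i c}, ∀ i < N, c'.1 i = c.1 i := by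
    rintro N ⟨c, hc⟩
    obtain ⟨x, hx⟩ := hstep N c hc
    refine ⟨⟨Function.update c N x, fun i hi => ?_⟩, fun i hi => ?_⟩
    · rcases Nat.lt_succ_iff_lt_or_eq.1 hi with h | rfl
      · exact hloc i c _ (fun j hj => by
          rw [Function.update_of_ne (by omega)]) (hc i h)
      · exact hx
    · exact Function.update_of_ne (by omega) _ _
  choose F hF using key
  let s : ∀ N, {c : ∀ i, β i // ∀ i < N, P i c} := fun N =>
    Nat.rec ⟨fun i => Classical.arbitrary _, by simp⟩ F N
  have hs : ∀ N i, i < N → (s N).1 i = (s (i + 1)).1 i := by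
    intro N i hi
    induction N, hi using Nat.le_induction with
    | base => rfl
    | succ N hN ih => exact (hF N (s N) i (by omega)).trans ih
  refine ⟨fun k => (s (k + 1)).1 k, fun k => ?_⟩
  refine hloc k (s (k + 1)).1 _ (fun i hi => hs (k + 1) i (by omega)) ((s (k + 1)).2 k (by omega))

theorem card_pi_nat {Z : ℕ → Type*} (m : ℕ) (h : ∀ k, m ≤ k → Nat.card (Z k) = 1) :
    Nat.card (∀ k, Z k) = ∏ k ∈ Finset.range m, Nat.card (Z k) := by
  classical
  rw [Nat.card_congr (Equiv.piEquivPiSubtypeProd (fun k => k < m) Z), Nat.card_prod]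
  have h2 : Nat.card (∀ i : {x // ¬ x < m}, Z i) = 1 := by
    have : ∀ i : {x // ¬ x < m}, Subsingleton (Z i) ∧ Nonempty (Z i) := fun i =>
      Nat.card_eq_one_iff_unique.1 (h i (by have := i.2; omega))
    have h1 := fun i => (this i).1
    have h2 := fun i => (this i).2
    exact Nat.card_eq_one_iff_unique.2 ⟨inferInstance, inferInstance⟩
  let _ : Fintype {x // x < m} := Fintype.subtype (Finset.range m) (by simp)
  rw [h2, mul_one, Nat.card_pi]
  exact (Finset.prod_subtype (Finset.range m) (by simp) (fun k => Nat.card (Z k))).symm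

theorem card_of_fibers {α β : Type*} (R : β → α → Prop) (h1 : ∀ a, ∃! b, R b a)
    (n : ℕ) (hn : 0 < n) (hf : ∀ b, Nat.card {a // R b a} = n) :
    Nat.card α = n * Nat.card β := by
  have e1 : α ≃ Σ b, {a // R b a} :=
    { toFun := fun a => ⟨(h1 a).choose, a, (h1 a).choose_spec.1⟩
      invFun := fun s => s.2.1
      left_inv := fun a => rfl
      right_inv := by
        rintro ⟨b, a, hb⟩
        obtain rfl := (h1 a).choose_spec.2 b hb
        rfl }
  have e2 : ∀ b, {a // R b a} ≃ Fin n := fun b => by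
    have : Finite {a // R b a} := Nat.finite_of_card_ne_zero (by rw [hf]; omega)
    exact Finite.equivFinOfCardEq (hf b)
  rw [Nat.card_congr (e1.trans ((Equiv.sigmaCongrRight e2).trans (Equiv.sigmaEquivProd β (Fin n)))),
    Nat.card_prod, Nat.card_fin, mul_comm]

end Choice

/-! ### Representatives modulo an ideal -/

section Reps
variable {A : Type*} [CommRing A]

/-- A system of representatives of `C` modulo `D` (for `D ≤ C`), singled out by `Quotient.out`. -/
def reps (D C : Ideal A) : Set A := {x | x ∈ C ∧ (Ideal.Quotient.mk D x).out = x}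

theorem reps_eq {D C : Ideal A} {x y : A} (hx : x ∈ reps D C) (hy : y ∈ reps D C)
    (h : x - y ∈ D) : x = y := by
  rw [← hx.2, ← hy.2, Ideal.Quotient.eq.2 h]

theorem exists_rep {D C : Ideal A} (hDC : D ≤ C) {x : A} (hx : x ∈ C) :
    ∃ y ∈ reps D C, y - x ∈ D := by
  have h : Ideal.Quotient.mk D (Ideal.Quotient.mk D x).out = Ideal.Quotient.mk D x :=
    Quotient.out_eq _
  have h2 := Ideal.Quotient.eq.1 h
  refine ⟨(Ideal.Quotient.mk D x).out, ⟨?_, by rw [h]⟩, h2⟩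
  have := C.add_mem (hDC h2) hx
  simpa using this

theorem card_reps {D C : Ideal A} (hDC : D ≤ C) :
    Nat.card (A ⧸ D) = Nat.card (A ⧸ C) * Nat.card (reps D C) := by
  let S : Submodule A (A ⧸ D) := Submodule.map D.mkQ C
  have e : reps D C ≃ S := by
    refine Equiv.ofBijective (fun x => ⟨D.mkQ x.1, x.1, x.2.1, rfl⟩) ⟨?_, ?_⟩
    · rintro ⟨x, hx⟩ ⟨y, hy⟩ h
      exact Subtype.ext (reps_eq hx hy ((Submodule.Quotient.eq D).1 (congrArg Subtype.val h)))
    · rintro ⟨_, x, hx, rfl⟩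
      obtain ⟨y, hy, hyx⟩ := exists_rep hDC hx
      exact ⟨⟨y, hy⟩, Subtype.ext ((Submodule.Quotient.eq D).2 hyx)⟩
  rw [Submodule.card_eq_card_quotient_mul_card S, Nat.card_congr e, mul_comm,
    Nat.card_congr (Submodule.quotientQuotientEquivQuotient D C hDC).toEquiv, mul_comm]

end Reps

/-! ### Sequences of monic polynomials -/

section Lattice
variable {A : Type*} [CommRing A]

/-- Unlike `Ideal.mem_leadingCoeffNth`, this uses the coefficient of `X ^ k` in place of the leading
coefficient. -/
theorem mem_leadingCoeffNth_iff (I : Ideal A[X]) (k : ℕ) (a : A) :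
    a ∈ I.leadingCoeffNth k ↔ ∃ p ∈ I, p.natDegree ≤ k ∧ p.coeff k = a := by
  simp only [Ideal.leadingCoeffNth, Ideal.degreeLE, Submodule.mem_map, lcoeff_apply,
    Submodule.mem_inf, mem_degreeLE, natDegree_le_iff_degree_le]
  constructor
  · rintro ⟨p, ⟨h1, h2⟩, h3⟩
    exact ⟨p, h2, h1, h3⟩
  · rintro ⟨p, h2, h1, h3⟩
    exact ⟨p, ⟨h1, h2⟩, h3⟩

/-- `g k` is monic of degree `k` for every `k`. -/
def MonicSeq (g : ℕ → A[X]) : Prop := ∀ k, (g k).Monic ∧ (g k).natDegree = k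

theorem MonicSeq.natDegree_sum_le {g : ℕ → A[X]} (hg : MonicSeq g) (x : ℕ → A) (k : ℕ) :
    (∑ j ∈ Finset.range (k + 1), C (x j) * g j).natDegree ≤ k := by
  refine natDegree_sum_le_of_forall_le _ _ fun j hj => ?_
  refine (natDegree_C_mul_le _ _).trans ?_
  rw [(hg j).2]
  exact Finset.mem_range_succ_iff.1 hj

theorem MonicSeq.coeff_sum {g : ℕ → A[X]} (hg : MonicSeq g) (x : ℕ → A) (k : ℕ) :
    (∑ j ∈ Finset.range (k + 1), C (x j) * g j).coeff k = x k := by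
  have h1 : (g k).coeff k = 1 := by
    have := (hg k).1.coeff_natDegree
    rwa [(hg k).2] at this
  rw [finsetSum_coeff, Finset.sum_range_succ, Finset.sum_eq_zero]
  · simp [h1]
  · intro j hj
    rw [coeff_C_mul, coeff_eq_zero_of_natDegree_lt, mul_zero]
    rw [(hg j).2]
    exact Finset.mem_range.1 hj

theorem MonicSeq.exists_expand {g : ℕ → A[X]} (hg : MonicSeq g) (k : ℕ) (f : A[X])
    (hf : f.natDegree ≤ k) : ∃ x : ℕ → A, f = ∑ j ∈ Finset.range (k + 1), C (x j) * g j := by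
  induction k generalizing f with
  | zero =>
    refine ⟨fun _ => f.coeff 0, ?_⟩
    have h0 : g 0 = 1 := (hg 0).1.natDegree_eq_zero.1 (hg 0).2
    simp only [zero_add, Finset.range_one, Finset.sum_singleton, h0, mul_one]
    exact eq_C_of_natDegree_le_zero hf
  | succ k ih =>
    have hc : (g (k + 1)).coeff (k + 1) = 1 := by
      have := (hg (k + 1)).1.coeff_natDegree
      rwa [(hg (k + 1)).2] at this
    obtain ⟨x, hx⟩ := ih (f - C (f.coeff (k + 1)) * g (k + 1)) (by
      refine natDegree_le_iff_coeff_eq_zero.2 fun N hN => ?_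
      rcases Nat.lt_or_ge (k + 1) N with h | h
      · rw [coeff_sub, coeff_C_mul, coeff_eq_zero_of_natDegree_lt (lt_of_le_of_lt hf h),
          coeff_eq_zero_of_natDegree_lt (p := g (k + 1)) (by rwa [(hg _).2])]
        simp
      · obtain rfl : N = k + 1 := by omega
        simp [hc])
    refine ⟨Function.update x (k + 1) (f.coeff (k + 1)), ?_⟩
    rw [Finset.sum_range_succ, Function.update_self]
    rw [Finset.sum_congr rfl (g := fun j => C (x j) * g j), ← hx, sub_add_cancel]
    intro j hj
    rw [Function.update_of_ne (by have := Finset.mem_range.1 hj; omega)]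

/-- The coordinates of an element of `I` of degree at most `k` lie in the leading coefficient ideals,
as soon as `I` contains `a * g j` for each leading coefficient `a` in degree `j ≤ k`: split off the
top coordinate and induct. -/
theorem MonicSeq.coords_mem {g : ℕ → A[X]} (hg : MonicSeq g) (I : Ideal A[X]) (k : ℕ)
    (hI : ∀ j ≤ k, ∀ a ∈ I.leadingCoeffNth j, C a * g j ∈ I) (x : ℕ → A)
    (hx : ∑ j ∈ Finset.range (k + 1), C (x j) * g j ∈ I) :
    ∀ j ≤ k, x j ∈ I.leadingCoeffNth j := by
  have htop : x k ∈ I.leadingCoeffNth k :=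
    (mem_leadingCoeffNth_iff _ _ _).2 ⟨_, hx, hg.natDegree_sum_le x k, hg.coeff_sum x k⟩
  induction k with
  | zero =>
    intro j hj
    obtain rfl : j = 0 := by omega
    exact htop
  | succ k ih =>
    intro j hj
    rcases Nat.lt_or_eq_of_le hj with h | rfl
    · have h2 : ∑ j ∈ Finset.range (k + 1), C (x j) * g j ∈ I := by
        rw [Finset.sum_range_succ] at hx
        exact (I.add_mem_iff_left (hI (k + 1) le_rfl _ htop)).1 hx
      exact ih (fun j hj => hI j (by omega)) h2
        ((mem_leadingCoeffNth_iff _ _ _).2 ⟨_, h2, hg.natDegree_sum_le x k, hg.coeff_sum x k⟩)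
        j (by omega)
    · exact htop

variable [IsDomain A]

/-- A sequence of monic polynomials with one of each degree is a basis of `A[X]`. -/
noncomputable def MonicSeq.basis {g : ℕ → A[X]} (hg : MonicSeq g) : Module.Basis ℕ A A[X] :=
  Polynomial.Sequence.basis
    ⟨g, fun i => by rw [degree_eq_natDegree (hg i).1.ne_zero, (hg i).2]⟩
    (fun i => by
      have : (g i).leadingCoeff = 1 := (hg i).1
      change IsUnit (g i).leadingCoeff
      rw [this]; exact isUnit_one)

@[simp] theorem MonicSeq.basis_apply {g : ℕ → A[X]} (hg : MonicSeq g) (i : ℕ) :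
    hg.basis i = g i := Polynomial.Sequence.basis_eq_self _ _ _

/-- The `A`-submodule `⨁ L j * g j` of `A[X]`, described by its coordinates in the basis `g`. -/
noncomputable def MonicSeq.lattice {g : ℕ → A[X]} (hg : MonicSeq g) (L : ℕ → Ideal A) :
    Submodule A A[X] := ⨅ j, Submodule.comap (hg.basis.coord j) (L j)

theorem MonicSeq.mem_lattice {g : ℕ → A[X]} (hg : MonicSeq g) {L : ℕ → Ideal A} {f : A[X]} :
    f ∈ hg.lattice L ↔ ∀ j, hg.basis.repr f j ∈ L j := by
  simp [MonicSeq.lattice, Submodule.mem_iInf]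

theorem MonicSeq.smul_mem_lattice {g : ℕ → A[X]} (hg : MonicSeq g) {L : ℕ → Ideal A} {k : ℕ}
    {a : A} (ha : a ∈ L k) : a • g k ∈ hg.lattice L := by
  rw [hg.mem_lattice]
  intro j
  rw [← hg.basis_apply k, map_smul, Module.Basis.repr_self]
  by_cases h : k = j
  · subst h; simpa using ha
  · simp [Finsupp.single_eq_of_ne' h]

theorem MonicSeq.eq_sum {g : ℕ → A[X]} (hg : MonicSeq g) (f : A[X]) :
    f = (hg.basis.repr f).sum fun j a => a • g j := by
  conv_lhs => rw [← hg.basis.linearCombination_repr f]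
  simp [Finsupp.linearCombination_apply]

theorem MonicSeq.repr_sum {g : ℕ → A[X]} (hg : MonicSeq g) (x : ℕ → A) (k j : ℕ) (hj : j ≤ k) :
    hg.basis.repr (∑ i ∈ Finset.range (k + 1), C (x i) * g i) j = x j := by
  simp only [← smul_eq_C_mul, map_sum, map_smul]
  simp only [← hg.basis_apply, Module.Basis.repr_self, Finsupp.finsetSum_apply]
  rw [Finset.sum_eq_single j]
  · simp
  · intro b _ hb
    simp [Finsupp.single_eq_of_ne' hb]
  · intro h
    simp at h; omega

theorem MonicSeq.coeff_mem {g : ℕ → A[X]} (hg : MonicSeq g) {L : ℕ → Ideal A} {f : A[X]}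
    (hf : f ∈ hg.lattice L) {k : ℕ} (hk : f.natDegree ≤ k) : f.coeff k ∈ L k := by
  obtain ⟨x, rfl⟩ := hg.exists_expand k f hk
  rw [hg.coeff_sum]
  have := hg.mem_lattice.1 hf k
  rwa [hg.repr_sum _ _ _ le_rfl] at this

/-- An ideal containing `L j * g j` for all `j`, with `L` its leading coefficient chain, is
`⨁ L j * g j`. -/
theorem MonicSeq.mem_iff {g : ℕ → A[X]} (hg : MonicSeq g) (I : Ideal A[X])
    (hI : ∀ j, ∀ a ∈ I.leadingCoeffNth j, C a * g j ∈ I) (f : A[X]) :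
    f ∈ I ↔ f ∈ hg.lattice I.leadingCoeffNth := by
  constructor
  · intro hf
    obtain ⟨x, hx⟩ := hg.exists_expand _ f le_rfl
    have := hg.coords_mem I f.natDegree (fun j _ => hI j) x (hx ▸ hf)
    rw [hx]
    refine Submodule.sum_mem _ fun j hj => ?_
    rw [← smul_eq_C_mul]
    exact hg.smul_mem_lattice (this j (Finset.mem_range_succ_iff.1 hj))
  · intro hf
    rw [hg.eq_sum f]
    refine Ideal.sum_mem _ fun j _ => ?_
    dsimp only
    rw [smul_eq_C_mul]
    exact hI j _ (hg.mem_lattice.1 hf j)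

theorem MonicSeq.card_quotient {g : ℕ → A[X]} (hg : MonicSeq g) (L : ℕ → Ideal A) (m : ℕ)
    (hm : ∀ k, m ≤ k → L k = ⊤) :
    Nat.card (A[X] ⧸ hg.lattice L) = ∏ k ∈ Finset.range m, Nat.card (A ⧸ L k) := by
  let φ : A[X] →ₗ[A] (∀ k : Fin m, A ⧸ L k) :=
    LinearMap.pi fun k => (L k).mkQ ∘ₗ hg.basis.coord k
  have hk : LinearMap.ker φ = hg.lattice L := by
    ext f
    rw [LinearMap.mem_ker, hg.mem_lattice, funext_iff]
    simp only [φ, LinearMap.pi_apply, LinearMap.comp_apply, Submodule.mkQ_apply, Pi.zero_apply,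
      Submodule.Quotient.mk_eq_zero, Module.Basis.coord_apply]
    constructor
    · intro h j
      rcases Nat.lt_or_ge j m with hj | hj
      · exact h ⟨j, hj⟩
      · rw [hm j hj]; trivial
    · intro h j
      exact h j
  have hs : Function.Surjective φ := by
    intro y
    choose x hx using fun k : Fin m => (L k).mkQ_surjective (y k)
    refine ⟨∑ i ∈ Finset.range (m + 1), C (if h : i < m then x ⟨i, h⟩ else 0) * g i, ?_⟩
    ext k
    simp only [φ, LinearMap.pi_apply, LinearMap.comp_apply, Module.Basis.coord_apply]
    rw [hg.repr_sum _ _ _ k.2.le, dif_pos k.2]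
    exact hx k
  rw [← hk, Nat.card_congr (φ.quotKerEquivOfSurjective hs).toEquiv, Nat.card_pi,
    Finset.prod_range]

end Lattice

/-! ### Ideals with a given leading coefficient chain -/

section Dedekind
variable {A : Type*} [CommRing A]

/-- The monic polynomials defined by `g 0 = 1` and `g (k + 1) = X * g k + ∑ j ≤ k, c k j * g j`. -/
noncomputable def gseq (c : ∀ k : ℕ, Fin (k + 1) → A) : ℕ → A[X]
  | 0 => 1
  | k + 1 => X * gseq c k + ∑ j : Fin (k + 1), C (c k j) * gseq c j
termination_by k => k
decreasing_by
  · omega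
  · exact j.2

theorem gseq_zero (c : ∀ k : ℕ, Fin (k + 1) → A) : gseq c 0 = 1 := by rw [gseq]

theorem gseq_succ (c : ∀ k : ℕ, Fin (k + 1) → A) (k : ℕ) :
    gseq c (k + 1) = X * gseq c k + ∑ j : Fin (k + 1), C (c k j) * gseq c j := by rw [gseq]

theorem gseq_congr (c c' : ∀ k : ℕ, Fin (k + 1) → A) (n : ℕ) (h : ∀ i < n, c i = c' i) :
    gseq c n = gseq c' n := by
  induction n using Nat.strong_induction_on with
  | _ n ih =>
    cases n with
    | zero => rw [gseq_zero, gseq_zero]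
    | succ k =>
      rw [gseq_succ, gseq_succ, h k (by omega), ih k (by omega) fun i hi => h i (by omega)]
      congr 1
      refine Finset.sum_congr rfl fun j _ => ?_
      rw [ih j (by have := j.2; omega) fun i hi => h i (by have := j.2; omega)]

theorem monicSeq_gseq [Nontrivial A] (c : ∀ k : ℕ, Fin (k + 1) → A) : MonicSeq (gseq c) := by
  intro k
  induction k using Nat.strong_induction_on with
  | _ n ih =>
    cases n with
    | zero => simp [gseq_zero]
    | succ k =>
      have h1 : (X * gseq c k).Monic := monic_X.mul (ih k (by omega)).1
      have h2 : (X * gseq c k).natDegree = k + 1 := by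
        rw [monic_X.natDegree_mul (ih k (by omega)).1, (ih k (by omega)).2, natDegree_X, add_comm]
      have h3 : (∑ j : Fin (k + 1), C (c k j) * gseq c j).degree < (X * gseq c k).degree := by
        rw [degree_eq_natDegree h1.ne_zero, h2]
        refine (degree_sum_le _ _).trans_lt ((Finset.sup_lt_iff (WithBot.bot_lt_coe _)).2 ?_)
        intro j _
        refine (degree_le_natDegree.trans (Nat.cast_le.2 (natDegree_C_mul_le _ _))).trans_lt ?_
        rw [(ih j j.2).2]
        exact_mod_cast j.2
      rw [gseq_succ]
      refine ⟨h1.add_of_left h3, ?_⟩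
      rw [natDegree_add_eq_left_of_degree_lt h3, h2]

/-- `L` is a chain of nonzero ideals, increasing in `k`, with successive quotients `J`:
`L k = J k * L (k + 1)`. -/
structure Chain (L J : ℕ → Ideal A) : Prop where
  eq_mul : ∀ k, L k = J k * L (k + 1)
  ne_bot : ∀ k, L k ≠ ⊥

/-- The product `J j * ⋯ * J (k - 1)`; it is the unit ideal if `k ≤ j`. -/
noncomputable def prodJ (J : ℕ → Ideal A) (j k : ℕ) : Ideal A := ∏ i ∈ Finset.Ico j k, J i

theorem prodJ_succ (J : ℕ → Ideal A) {j k : ℕ} (h : j ≤ k) :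
    prodJ J j (k + 1) = prodJ J j k * J k := Finset.prod_Ico_succ_top h _

theorem prodJ_succ_le (J : ℕ → Ideal A) {j k : ℕ} (h : j ≤ k) :
    prodJ J j (k + 1) ≤ prodJ J j k := by
  rw [prodJ_succ J h]; exact Ideal.mul_le_left

namespace Chain
variable {L J : ℕ → Ideal A} (hL : Chain L J)
include hL

theorem mono {j k : ℕ} (h : j ≤ k) : L j ≤ L k :=
  monotone_nat_of_le_succ (fun k => by rw [hL.eq_mul k]; exact Ideal.mul_le_right) h

theorem factor_ne_bot (k : ℕ) : J k ≠ ⊥ := fun h => hL.ne_bot k (by rw [hL.eq_mul, h]; simp)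

theorem eq_prodJ_mul {j k : ℕ} (h : j ≤ k) : L j = prodJ J j k * L k := by
  induction k, h using Nat.le_induction with
  | base => simp [prodJ]
  | succ k hk ih => rw [ih, prodJ_succ J hk, mul_assoc, ← hL.eq_mul]

end Chain

variable [IsDedekindDomain A]

/-- Nonzero ideals of a Dedekind domain can be cancelled from containments. -/
theorem mem_of_forall_mul_mem {B D : Ideal A} (hB : B ≠ ⊥) {x : A}
    (h : ∀ b ∈ B, x * b ∈ D * B) : x ∈ D := by
  have h1 : Ideal.span {x} * B ≤ D * B := by
    rw [Ideal.span_singleton_mul_le_iff]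
    exact h
  rw [← Ideal.dvd_iff_le] at h1
  have h2 := (mul_dvd_mul_iff_right (by simpa using hB)).1 h1
  rw [Ideal.dvd_iff_le] at h2
  exact h2 (Ideal.mem_span_singleton_self x)

namespace Chain
variable {L J : ℕ → Ideal A} (hL : Chain L J)
include hL

/-- `J j * ⋯ * J (k - 1)` is the colon ideal `(L j : L k)`. -/
theorem mem_prodJ {j k : ℕ} (h : j ≤ k) {x : A} :
    x ∈ prodJ J j k ↔ ∀ a ∈ L k, a * x ∈ L j := by
  constructor
  · intro hx a ha
    rw [hL.eq_prodJ_mul h, mul_comm a]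
    exact Ideal.mul_mem_mul hx ha
  · intro hx
    refine mem_of_forall_mul_mem (hL.ne_bot k) fun a ha => ?_
    rw [← hL.eq_prodJ_mul h, mul_comm]
    exact hx a ha

/-- All coefficients of an element `f ∈ I` of degree at most `k` lie in `L k`, not only the top one.
For `b ∈ J k` and `f` of degree at most `k + 1`, there is `g ∈ I` of degree at most `k` such that
`b * f - X * g` has degree at most `k`; by induction `b * f` has coefficients in
`L k = J k * L (k + 1)`, and `J k` can be cancelled. -/
theorem coeff_mem {I : Ideal A[X]} (hI : ∀ k, I.leadingCoeffNth k = L k) (k : ℕ) :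
    ∀ f ∈ I, f.natDegree ≤ k → ∀ i, f.coeff i ∈ L k := by
  induction k with
  | zero =>
    intro f hf hd i
    rw [eq_C_of_natDegree_le_zero hd, coeff_C]
    split_ifs
    · rw [← hI]
      exact (mem_leadingCoeffNth_iff _ _ _).2 ⟨f, hf, hd, rfl⟩
    · exact zero_mem _
  | succ k ih =>
    intro f hf hd i
    refine mem_of_forall_mul_mem (hL.factor_ne_bot k) fun b hb => ?_
    rw [mul_comm (L _), ← hL.eq_mul]
    have h1 : b * f.coeff (k + 1) ∈ I.leadingCoeffNth k := by
      rw [hI, hL.eq_mul]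
      refine Ideal.mul_mem_mul hb ?_
      rw [← hI]
      exact (mem_leadingCoeffNth_iff _ _ _).2 ⟨f, hf, hd, rfl⟩
    obtain ⟨g, hg, hgd, hgc⟩ := (mem_leadingCoeffNth_iff _ _ _).1 h1
    have h2 : C b * f - X * g ∈ I := I.sub_mem (I.mul_mem_left _ hf) (I.mul_mem_left _ hg)
    have h3 : (C b * f - X * g).natDegree ≤ k := by
      refine natDegree_le_iff_coeff_eq_zero.2 fun N hN => ?_
      obtain ⟨N, rfl⟩ : ∃ M, N = M + 1 := ⟨N - 1, by omega⟩
      rw [coeff_sub, coeff_C_mul, coeff_X_mul]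
      rcases Nat.lt_or_ge k N with h | h
      · rw [coeff_eq_zero_of_natDegree_lt (by omega), coeff_eq_zero_of_natDegree_lt (by omega)]
        simp
      · obtain rfl : N = k := by omega
        rw [hgc, sub_self]
    have h4 := ih _ h2 h3 i
    have h5 : (X * g).coeff i ∈ L k := by
      cases i with
      | zero => simp
      | succ i => rw [coeff_X_mul]; exact ih g hg hgd i
    have h6 := (L k).add_mem h4 h5
    rw [← coeff_add, sub_add_cancel, coeff_C_mul] at h6
    rwa [mul_comm]

/-- Some monic `p` of degree `k` satisfies `L k * p ⊆ I`. Choose `0 ≠ d ∈ L k` and `L'` with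
`L k * L' = (d)`. By `coeff_mem`, every `b * f` with `b ∈ L'` and `f ∈ I` of degree at most `k` is
divisible by `d`, and the quotients `b * f / d` lie in the colon ideal `Q = (I : L k)`. Their top
coefficients generate `d⁻¹ * L' * L k = A`, hence `1` is a leading coefficient of `Q`. -/
theorem exists_monic {I : Ideal A[X]} (hI : ∀ k, I.leadingCoeffNth k = L k) (k : ℕ) :
    ∃ p : A[X], p.natDegree ≤ k ∧ p.coeff k = 1 ∧ ∀ a ∈ L k, C a * p ∈ I := by
  obtain ⟨d, hd, hd0⟩ := Submodule.exists_mem_ne_zero_of_ne_bot (hL.ne_bot k)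
  obtain ⟨L', hL'⟩ : L k ∣ Ideal.span {d} :=
    Ideal.dvd_iff_le.2 ((Ideal.span_singleton_le_iff_mem _).2 hd)
  let Q : Ideal A[X] :=
    { carrier := {q | ∀ a ∈ L k, C a * q ∈ I}
      add_mem' := fun h1 h2 a ha => by rw [mul_add]; exact I.add_mem (h1 a ha) (h2 a ha)
      zero_mem' := fun a _ => by simp
      smul_mem' := fun r q h a ha => by
        rw [smul_eq_mul, mul_left_comm]; exact I.mul_mem_left _ (h a ha) }
  have h1 : L k * L' ≤ Ideal.span {d} * Q.leadingCoeffNth k := by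
    refine Ideal.mul_le.2 fun a ha b hb => ?_
    rw [← hI] at ha
    obtain ⟨f, hf, hfd, rfl⟩ := (mem_leadingCoeffNth_iff _ _ _).1 ha
    have h2 : C d ∣ C b * f := by
      rw [C_dvd_iff_dvd_coeff]
      intro i
      rw [← Ideal.mem_span_singleton, hL', coeff_C_mul, mul_comm b]
      exact Ideal.mul_mem_mul (hL.coeff_mem hI k f hf hfd i) hb
    obtain ⟨q, hq⟩ := h2
    refine Ideal.mem_span_singleton_mul.2 ⟨q.coeff k, ?_, ?_⟩
    · refine (mem_leadingCoeffNth_iff _ _ _).2 ⟨q, ?_, ?_, rfl⟩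
      · intro a ha
        obtain ⟨e, he⟩ : d ∣ a * b := by
          rw [← Ideal.mem_span_singleton, hL']
          exact Ideal.mul_mem_mul ha hb
        have h3 : C d * (C a * q) = C d * (C e * f) := by
          rw [mul_left_comm, ← hq, ← mul_assoc, ← mul_assoc, ← C_mul, ← C_mul, he]
        rw [mul_left_cancel₀ (by simpa using hd0) h3]
        exact I.mul_mem_left _ hf
      · rw [← natDegree_C_mul hd0, ← hq]
        exact (natDegree_C_mul_le _ _).trans hfd
    · rw [← coeff_C_mul, ← hq, coeff_C_mul, mul_comm]
  rw [← hL'] at h1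
  obtain ⟨e, he, hde⟩ := Ideal.mem_span_singleton_mul.1 (h1 (Ideal.mem_span_singleton_self d))
  obtain rfl : e = 1 := mul_left_cancel₀ hd0 (by rw [hde, mul_one])
  obtain ⟨p, hp, hpd, hpc⟩ := (mem_leadingCoeffNth_iff _ _ _).1 he
  exact ⟨p, hpd, hpc, hp⟩

/-- Extends a system `g 0, …, g k` adapted to `I` by one polynomial in normal form. The monic `p`
from `exists_monic` gives `p - X * g k = ∑ e j * g j`; here `e j ∈ (L j : L k)` since `L k` maps
`p - X * g k` into `I`, and `e j` may be changed by elements of `(L j : L (k + 1))`. -/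
theorem exists_step {I : Ideal A[X]} (hI : ∀ k, I.leadingCoeffNth k = L k) (k : ℕ) {g : ℕ → A[X]}
    (hg : MonicSeq g) (hgI : ∀ j ≤ k, ∀ a ∈ L j, C a * g j ∈ I) :
    ∃ x : Fin (k + 1) → A, (∀ j : Fin (k + 1), x j ∈ reps (prodJ J j (k + 1)) (prodJ J j k)) ∧
      ∀ a ∈ L (k + 1), C a * (X * g k + ∑ j : Fin (k + 1), C (x j) * g j) ∈ I := by
  obtain ⟨p, hpd, hpc, hpI⟩ := hL.exists_monic hI (k + 1)
  have hd : (p - X * g k).natDegree ≤ k := by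
    have hc := (hg k).1.coeff_natDegree
    rw [(hg k).2] at hc
    refine natDegree_le_iff_coeff_eq_zero.2 fun N hN => ?_
    obtain ⟨N, rfl⟩ : ∃ M, N = M + 1 := ⟨N - 1, by omega⟩
    rw [coeff_sub, coeff_X_mul]
    rcases Nat.lt_or_ge k N with h | h
    · rw [coeff_eq_zero_of_natDegree_lt (by omega),
        coeff_eq_zero_of_natDegree_lt (by rw [(hg k).2]; omega), sub_zero]
    · obtain rfl : N = k := by omega
      rw [hpc, hc, sub_self]
  obtain ⟨e, he⟩ := hg.exists_expand k _ hd
  have hemem : ∀ j ≤ k, e j ∈ prodJ J j k := by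
    intro j hj
    rw [hL.mem_prodJ hj]
    intro a ha
    rw [← hI]
    refine hg.coords_mem I k (fun j hj => by rw [hI]; exact hgI j hj) (fun j => a * e j) ?_ j hj
    have : C a * (p - X * g k) ∈ I := by
      rw [mul_sub, mul_left_comm]
      exact I.sub_mem (hpI a (hL.mono (Nat.le_succ k) ha)) (I.mul_mem_left _ (hgI k le_rfl a ha))
    rw [he, Finset.mul_sum] at this
    simpa [mul_assoc] using this
  choose x hx hxe using fun j : Fin (k + 1) =>
    exists_rep (prodJ_succ_le J (Nat.lt_succ_iff.1 j.2)) (hemem j (Nat.lt_succ_iff.1 j.2))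
  refine ⟨x, hx, fun a ha => ?_⟩
  have h1 : X * g k + ∑ j : Fin (k + 1), C (x j) * g j =
      p + ∑ j : Fin (k + 1), C (x j - e j) * g j := by
    rw [Finset.sum_range] at he
    rw [sub_eq_iff_eq_add] at he
    rw [he]
    simp only [C_sub, sub_mul, Finset.sum_sub_distrib]
    ring
  rw [h1, mul_add, Finset.mul_sum]
  refine I.add_mem (hpI a ha) (I.sum_mem fun j _ => ?_)
  rw [← mul_assoc, ← C_mul]
  have hjk := Nat.lt_succ_iff.1 j.2
  exact hgI j hjk _ ((hL.mem_prodJ (by omega)).1 (hxe j) a ha)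

/-- Every ideal with chain `L` is adapted to some sequence `gseq c` with normalized `c`. -/
theorem exists_params {I : Ideal A[X]} (hI : ∀ k, I.leadingCoeffNth k = L k) :
    ∃ c : ∀ k : ℕ, Fin (k + 1) → A,
      (∀ k (j : Fin (k + 1)), c k j ∈ reps (prodJ J j (k + 1)) (prodJ J j k)) ∧
      ∀ k, ∀ a ∈ L k, C a * gseq c k ∈ I := by
  have h0 : ∀ c : ∀ k : ℕ, Fin (k + 1) → A, ∀ a ∈ L 0, C a * gseq c 0 ∈ I := by
    intro c a ha
    rw [← hI, Ideal.mem_leadingCoeffNth_zero] at ha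
    rwa [gseq_zero, mul_one]
  obtain ⟨c, hc⟩ := exists_dependent_seq (β := fun k => Fin (k + 1) → A)
    (fun k c => (∀ j : Fin (k + 1), c k j ∈ reps (prodJ J j (k + 1)) (prodJ J j k)) ∧
      ∀ a ∈ L (k + 1), C a * gseq c (k + 1) ∈ I)
    (fun k c c' h hc => by
      refine ⟨fun j => by rw [← h k le_rfl]; exact hc.1 j, ?_⟩
      rw [← gseq_congr c c' (k + 1) fun i hi => h i (by omega)]
      exact hc.2)
    (fun k c hc => by
      obtain ⟨x, hx, hxI⟩ := hL.exists_step hI k (monicSeq_gseq c) (by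
        intro j hj
        cases j with
        | zero => exact h0 c
        | succ j => exact (hc j (by omega)).2)
      have hcongr : ∀ j ≤ k, gseq (Function.update c k x) j = gseq c j := fun j hj =>
        gseq_congr _ _ _ fun i hi => Function.update_of_ne (by omega) _ _
      refine ⟨x, by simpa using hx, fun a ha => ?_⟩
      rw [gseq_succ, hcongr k le_rfl, Function.update_self, Finset.sum_congr rfl fun j _ => by
        rw [hcongr j (Nat.lt_succ_iff.1 j.2)]]
      exact hxI a ha)
  refine ⟨c, fun k => (hc k).1, fun k => ?_⟩
  cases k with
  | zero => exact h0 c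
  | succ k => exact (hc k).2

/-- The ideal `⨁ L k * g k` for `g = gseq c`. Stability under `X` holds because
`a * X * g j = a * g (j + 1) - ∑ i ≤ j, a * c j i * g i` and `c j i ∈ (L i : L j)`. -/
noncomputable def idealOf (c : ∀ k : ℕ, Fin (k + 1) → A)
    (hc : ∀ k (j : Fin (k + 1)), c k j ∈ prodJ J j k) : Ideal A[X] :=
  { (monicSeq_gseq c).lattice L with
    smul_mem' := by
      let M := (monicSeq_gseq c).lattice L
      change ∀ (r f : A[X]), f ∈ M → r * f ∈ M
      have hX : ∀ f ∈ M, X * f ∈ M := by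
        intro f hf
        rw [(monicSeq_gseq c).eq_sum f, Finsupp.sum, Finset.mul_sum]
        refine Submodule.sum_mem _ fun j _ => ?_
        have hj := (monicSeq_gseq c).mem_lattice.1 hf j
        set a := (monicSeq_gseq c).basis.repr f j
        have h1 : X * (a • gseq c j) =
            a • gseq c (j + 1) - ∑ i : Fin (j + 1), (a * c j i) • gseq c i := by
          rw [gseq_succ, smul_add, Finset.smul_sum]
          simp only [smul_eq_C_mul, C_mul, mul_assoc]
          ring
        rw [h1]
        refine M.sub_mem ((monicSeq_gseq c).smul_mem_lattice (hL.mono (Nat.le_succ j) hj))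
          (M.sum_mem fun i _ => (monicSeq_gseq c).smul_mem_lattice ?_)
        exact (hL.mem_prodJ (Nat.lt_succ_iff.1 i.2)).1 (hc j i) a hj
      intro r f hf
      induction r using Polynomial.induction_on' with
      | add p q hp hq => rw [add_mul]; exact M.add_mem hp hq
      | monomial n a =>
        induction n with
        | zero => rw [monomial_zero_left, ← smul_eq_C_mul]; exact M.smul_mem a hf
        | succ n ih => rw [← X_mul_monomial, mul_assoc]; exact hX _ ih }

theorem mem_idealOf {c : ∀ k : ℕ, Fin (k + 1) → A}
    {hc : ∀ k (j : Fin (k + 1)), c k j ∈ prodJ J j k} {f : A[X]} :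
    f ∈ hL.idealOf c hc ↔ f ∈ (monicSeq_gseq c).lattice L := Iff.rfl

theorem leadingCoeffNth_idealOf (c : ∀ k : ℕ, Fin (k + 1) → A)
    (hc : ∀ k (j : Fin (k + 1)), c k j ∈ prodJ J j k) (k : ℕ) :
    (hL.idealOf c hc).leadingCoeffNth k = L k := by
  ext a
  rw [mem_leadingCoeffNth_iff]
  constructor
  · rintro ⟨p, hp, hpd, rfl⟩
    exact (monicSeq_gseq c).coeff_mem (hL.mem_idealOf.1 hp) hpd
  · intro ha
    refine ⟨a • gseq c k, (monicSeq_gseq c).smul_mem_lattice ha, ?_, ?_⟩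
    · exact (natDegree_smul_le _ _).trans (monicSeq_gseq c k).2.le
    · have := (monicSeq_gseq c k).1.coeff_natDegree
      rw [(monicSeq_gseq c k).2] at this
      simp [this]

/-- Uniqueness of the normalized coefficients. If `c` and `c'` agree below `k`, then
`g (k + 1) - g' (k + 1) = ∑ (c k j - c' k j) * g j` is mapped into `I` by `L (k + 1)`, so the
differences lie in `(L j : L (k + 1))` and the representatives coincide. -/
theorem eq_of_forall_mem {I : Ideal A[X]} (hI : ∀ k, I.leadingCoeffNth k = L k)
    {c c' : ∀ k : ℕ, Fin (k + 1) → A}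
    (hc : ∀ k (j : Fin (k + 1)), c k j ∈ reps (prodJ J j (k + 1)) (prodJ J j k))
    (hc' : ∀ k (j : Fin (k + 1)), c' k j ∈ reps (prodJ J j (k + 1)) (prodJ J j k))
    (h : ∀ k, ∀ a ∈ L k, C a * gseq c k ∈ I) (h' : ∀ k, ∀ a ∈ L k, C a * gseq c' k ∈ I) :
    c = c' := by
  funext k
  induction k using Nat.strong_induction_on with
  | _ k ih =>
    funext j
    refine reps_eq (hc k j) (hc' k j) ?_
    have hjk := Nat.lt_succ_iff.1 j.2
    rw [hL.mem_prodJ (by omega)]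
    intro a ha
    have h1 : ∀ i ≤ k, gseq c' i = gseq c i := fun i hi =>
      (gseq_congr c c' i fun l hl => ih l (by omega)).symm
    have h2 : ∑ i ∈ Finset.range (k + 1),
        C (a * (if hi : i < k + 1 then c k ⟨i, hi⟩ - c' k ⟨i, hi⟩ else 0)) * gseq c i ∈ I := by
      have h3 := I.sub_mem (h (k + 1) a ha) (h' (k + 1) a ha)
      have hsum : ∑ i : Fin (k + 1), C (c' k i) * gseq c' i =
          ∑ i : Fin (k + 1), C (c' k i) * gseq c i :=
        Finset.sum_congr rfl fun i _ => by rw [h1 i (Nat.lt_succ_iff.1 i.2)]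
      rw [gseq_succ, gseq_succ, h1 k le_rfl, hsum, ← mul_sub, add_sub_add_left_eq_sub,
        ← Finset.sum_sub_distrib, Finset.mul_sum] at h3
      rw [Finset.sum_range]
      convert h3 using 2 with i
      rw [dif_pos i.2]
      simp only [C_mul, C_sub]
      ring
    have h4 := (monicSeq_gseq c).coords_mem I k (fun j _ => by rw [hI]; exact h j) _ h2 j hjk
    rw [dif_pos j.2, hI] at h4
    exact h4

/-- Normalized coefficients `c` parametrize the ideals of `A[X]` with leading coefficient chain `L`. -/
noncomputable def paramEquiv :
    (∀ k : ℕ, ∀ j : Fin (k + 1), reps (prodJ J j (k + 1)) (prodJ J j k)) ≃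
      {I : Ideal A[X] // ∀ k, I.leadingCoeffNth k = L k} :=
  Equiv.ofBijective
    (fun c => ⟨hL.idealOf (fun k j => (c k j).1) (fun k j => (c k j).2.1),
      hL.leadingCoeffNth_idealOf _ _⟩) <| by
    constructor
    · intro c c' hcc
      have hcc' := congrArg Subtype.val hcc
      dsimp only at hcc'
      have key := hL.eq_of_forall_mem (hL.leadingCoeffNth_idealOf (fun k j => (c k j).1)
        (fun k j => (c k j).2.1)) (c' := fun k j => (c' k j).1)
        (fun k j => (c k j).2) (fun k j => (c' k j).2)
        (fun k a ha => by
          rw [← smul_eq_C_mul]; exact (monicSeq_gseq _).smul_mem_lattice ha)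
        (fun k a ha => by
          rw [hcc', ← smul_eq_C_mul]; exact (monicSeq_gseq _).smul_mem_lattice ha)
      funext k j
      exact Subtype.ext (congrFun (congrFun key k) j)
    · rintro ⟨I, hI⟩
      obtain ⟨c, hc, hcI⟩ := hL.exists_params hI
      refine ⟨fun k j => ⟨c k j, hc k j⟩, Subtype.ext ?_⟩
      ext f
      rw [(monicSeq_gseq c).mem_iff I (fun j => by rw [hI]; exact hcI j), funext hI]
      exact Iff.rfl

theorem card_quotient {I : Ideal A[X]} (hI : ∀ k, I.leadingCoeffNth k = L k) (m : ℕ)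
    (hm : ∀ k, m ≤ k → L k = ⊤) :
    Nat.card (A[X] ⧸ I) = ∏ k ∈ Finset.range m, Nat.card (A ⧸ L k) := by
  obtain ⟨c, hc, hcI⟩ := hL.exists_params hI
  rw [← (monicSeq_gseq c).card_quotient L m hm]
  have h := (monicSeq_gseq c).mem_iff I (fun j => by rw [hI]; exact hcI j)
  rw [funext hI] at h
  refine Nat.card_congr (Quotient.congr (Equiv.refl _) fun x y => ?_)
  exact (Submodule.quotientRel_def _).trans ((h _).trans (Submodule.quotientRel_def _).symm)

end Chain
end Dedekind

/-! ### Counting -/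

section Count
variable {A : Type*} [CommRing A]

/-- The constants lying in `I` are the kernel of a map from an infinite ring to a finite one. -/
theorem leadingCoeffNth_ne_bot [Infinite A] (I : Ideal A[X]) [Finite (A[X] ⧸ I)] (k : ℕ) :
    I.leadingCoeffNth k ≠ ⊥ := by
  intro h
  have h0 : I.leadingCoeffNth 0 = ⊥ := le_bot_iff.1 (h ▸ I.leadingCoeffNth_mono (Nat.zero_le k))
  refine not_injective_infinite_finite (fun a : A => Ideal.Quotient.mk I (C a)) fun a b hab => ?_
  have h1 : C (a - b) ∈ I := by rw [C_sub]; exact Ideal.Quotient.eq.1 hab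
  rw [← Ideal.mem_leadingCoeffNth_zero, h0, Ideal.mem_bot] at h1
  exact sub_eq_zero.1 h1

theorem prodJ_eq_top (J : ℕ → Ideal A) {k m : ℕ} (h : m ≤ k) : prodJ J k m = ⊤ := by
  rw [prodJ, Finset.Ico_eq_empty (by omega), Finset.prod_empty, Ideal.one_eq_top]

namespace Chain
variable {L J : ℕ → Ideal A} (hL : Chain L J)
include hL

/-- A chain that is eventually `⊤` is determined by its factors. -/
theorem eq_of_top {L' : ℕ → Ideal A} (hL' : Chain L' J) {m m' : ℕ} (hm : ∀ k, m ≤ k → L k = ⊤)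
    (hm' : ∀ k, m' ≤ k → L' k = ⊤) (k : ℕ) : L k = L' k := by
  rw [hL.eq_prodJ_mul (le_max_left k (max m m')), hL'.eq_prodJ_mul (le_max_left k (max m m')),
    hm _ (by omega), hm' _ (by omega)]

theorem factor_eq_top {k : ℕ} (h : L k = ⊤) : J k = ⊤ :=
  top_le_iff.1 (by rw [← h, hL.eq_mul k]; exact Ideal.mul_le_left)

end Chain

variable [IsDedekindDomain A]

/-- Two powers of `X` agree in the finite quotient, so `I` contains a monic polynomial. -/
theorem exists_leadingCoeffNth_eq_top (I : Ideal A[X]) [Finite (A[X] ⧸ I)] :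
    ∃ m, ∀ k, m ≤ k → I.leadingCoeffNth k = ⊤ := by
  obtain ⟨a, b, hab, h⟩ : ∃ a b : ℕ, a < b ∧ (X : A[X]) ^ b - X ^ a ∈ I := by
    obtain ⟨a, b, hne, h⟩ := Finite.exists_ne_map_eq_of_infinite
      (fun n : ℕ => Ideal.Quotient.mk I ((X : A[X]) ^ n))
    rcases Nat.lt_or_gt_of_ne hne with h1 | h1
    · exact ⟨a, b, h1, Ideal.Quotient.eq.1 h.symm⟩
    · exact ⟨b, a, h1, Ideal.Quotient.eq.1 h⟩
  refine ⟨b, fun k hk => ?_⟩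
  rw [Ideal.eq_top_iff_one]
  refine I.leadingCoeffNth_mono hk ((mem_leadingCoeffNth_iff _ _ _).2 ⟨_, h, ?_, ?_⟩)
  · exact (natDegree_sub_le _ _).trans (by simp; omega)
  · simp [coeff_X_pow, hab.ne']

/-- In a Dedekind domain containment is divisibility, which yields the successive factors. -/
theorem exists_chain [Infinite A] (I : Ideal A[X]) [Finite (A[X] ⧸ I)] :
    ∃ J, Chain I.leadingCoeffNth J := by
  have h : ∀ k, ∃ B, I.leadingCoeffNth k = B * I.leadingCoeffNth (k + 1) := fun k => by
    obtain ⟨B, hB⟩ := Ideal.dvd_iff_le.2 (I.leadingCoeffNth_mono (Nat.le_succ k))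
    exact ⟨B, by rw [hB, mul_comm]⟩
  choose J hJ using h
  exact ⟨J, hJ, leadingCoeffNth_ne_bot I⟩

/-- A finitely supported sequence of factors `J` arises from the chain `L k = J k * J (k + 1) * ⋯`;
all factors of index at least `m` are trivial, so the product may be cut at `m`. -/
theorem chain_prodJ (J : ℕ → Ideal A) (h0 : ∀ k, J k ≠ ⊥) (m : ℕ)
    (hm : ∀ k, m ≤ k → J k = ⊤) : Chain (fun k => prodJ J k m) J where
  eq_mul k := by
    rcases Nat.lt_or_ge k m with h | h
    · exact Finset.prod_eq_prod_Ico_succ_bot h _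
    · simp only [prodJ]
      rw [Finset.Ico_eq_empty (by omega), Finset.Ico_eq_empty (by omega), hm k h, ← Ideal.one_eq_top]
      simp
  ne_bot k := by
    rw [← Ideal.zero_eq_bot]
    exact Finset.prod_ne_zero_iff.2 fun i _ => by simpa using h0 i

variable [Module.Free ℤ A]

namespace Chain
variable {L J : ℕ → Ideal A} (hL : Chain L J)
include hL

/-- Since `L k` is the product of the `J i` with `i ≥ k`, the factor `J i` occurs in exactly
`i + 1` of the ideals `L 0, L 1, …`. -/
theorem prod_absNorm (m : ℕ) :
    ∏ k ∈ Finset.range m, Ideal.absNorm (L k) =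
      (∏ k ∈ Finset.range m, Ideal.absNorm (J k) ^ (k + 1)) * Ideal.absNorm (L m) ^ m := by
  induction m with
  | zero => simp
  | succ m ih =>
    have h : Ideal.absNorm (L m) = Ideal.absNorm (J m) * Ideal.absNorm (L (m + 1)) := by
      rw [← map_mul, ← hL.eq_mul]
    rw [Finset.prod_range_succ, Finset.prod_range_succ, ih, mul_assoc, ← pow_succ, h, mul_pow,
      mul_assoc]

/-- The index of an ideal depends only on its leading coefficient chain. -/
theorem card_quotient_eq {I : Ideal A[X]} (hI : ∀ k, I.leadingCoeffNth k = L k) (m : ℕ)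
    (hm : ∀ k, m ≤ k → L k = ⊤) :
    Nat.card (A[X] ⧸ I) = ∏ k ∈ Finset.range m, Ideal.absNorm (J k) ^ (k + 1) := by
  rw [hL.card_quotient hI m hm]
  have := hL.prod_absNorm m
  rw [hm m le_rfl, Ideal.absNorm_top, one_pow, mul_one] at this
  rw [← this]
  rfl

/-- The number of ideals with a given leading coefficient chain. It coincides with their common
index, computed in `card_quotient_eq`: this is where the factor `n` of the final formula arises. -/
theorem card_ideals [Module.Finite ℤ A] [CharZero A] (m : ℕ) (hm : ∀ k, m ≤ k → J k = ⊤) :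
    Nat.card {I : Ideal A[X] // ∀ k, I.leadingCoeffNth k = L k} =
      ∏ k ∈ Finset.range m, Ideal.absNorm (J k) ^ (k + 1) := by
  have h1 : ∀ k (j : Fin (k + 1)),
      Nat.card (reps (prodJ J j (k + 1)) (prodJ J j k)) = Ideal.absNorm (J k) := by
    intro k j
    have hj := Nat.lt_succ_iff.1 j.2
    have h2 : Ideal.absNorm (prodJ J j (k + 1)) = Ideal.absNorm (prodJ J j k) *
        Nat.card (reps (prodJ J j (k + 1)) (prodJ J j k)) := card_reps (prodJ_succ_le J hj)
    rw [prodJ_succ J hj, map_mul] at h2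
    have h3 : Ideal.absNorm (prodJ J j k) ≠ 0 := by
      rw [Ne, Ideal.absNorm_eq_zero_iff, ← Ideal.zero_eq_bot]
      exact Finset.prod_ne_zero_iff.2 fun i _ => by simpa using hL.factor_ne_bot i
    rw [← prodJ_succ J hj] at h2
    exact (Nat.eq_of_mul_eq_mul_left (Nat.pos_of_ne_zero h3) h2).symm
  have h4 : ∀ k, Nat.card (∀ j : Fin (k + 1), reps (prodJ J j (k + 1)) (prodJ J j k)) =
      Ideal.absNorm (J k) ^ (k + 1) := fun k => by
    rw [Nat.card_pi, Finset.prod_congr rfl fun j _ => h1 k j]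
    simp
  rw [← Nat.card_congr hL.paramEquiv, card_pi_nat m fun k hk => by
    rw [h4, hm k hk, Ideal.absNorm_top, one_pow], Finset.prod_congr rfl fun k _ => h4 k]

end Chain

/-- The product over `d ≥ 1` reindexed by `k = d - 1`. -/
theorem finprod_pnat (f : ℕ+ → Ideal A) (m : ℕ) (hm : ∀ k, m ≤ k → f k.succPNat = ⊤) :
    ∏ᶠ d : ℕ+, Ideal.absNorm (f d) ^ (d : ℕ) =
      ∏ k ∈ Finset.range m, Ideal.absNorm (f k.succPNat) ^ (k + 1) := by
  rw [← finprod_comp_equiv Equiv.pnatEquivNat.symm]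
  refine finprod_eq_prod_of_mulSupport_subset _ fun k hk => ?_
  by_contra h
  refine hk ?_
  have : f k.succPNat = ⊤ := hm k (by simpa using h)
  simp [this]

theorem card_ideals_polynomial [Module.Finite ℤ A] [CharZero A] (n : ℕ) (hn : 0 < n) :
    Nat.card {I : Ideal A[X] // Nat.card (A[X] ⧸ I) = n} =
      n * Nat.card {f : ℕ+ → Ideal A //
        (∀ d, f d ≠ ⊥) ∧ {d | f d ≠ ⊤}.Finite ∧
          ∏ᶠ d : ℕ+, (Ideal.absNorm (f d)) ^ (d : ℕ) = n} := by
  have hinf : Infinite A := inferInstance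
  have hfin : ∀ I : Ideal A[X], Nat.card (A[X] ⧸ I) = n → Finite (A[X] ⧸ I) := fun I hI =>
    Nat.finite_of_card_ne_zero (by omega)
  refine card_of_fibers (fun f I => Chain I.1.leadingCoeffNth fun k => f.1 k.succPNat) ?_ n hn ?_
  · rintro ⟨I, hI⟩
    have := hfin I hI
    obtain ⟨J, hJ⟩ := exists_chain I
    obtain ⟨m, hm⟩ := exists_leadingCoeffNth_eq_top I
    have hJm : ∀ k, m ≤ k → J k = ⊤ := fun k hk => hJ.factor_eq_top (hm k hk)
    refine ⟨⟨fun d => J d.natPred, fun d => hJ.factor_ne_bot _, ?_, ?_⟩, ?_, ?_⟩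
    · refine ((Set.finite_Iio m).preimage (f := PNat.natPred)
        PNat.natPred_injective.injOn).subset fun d hd => ?_
      by_contra h
      exact hd (hJm _ (by simpa using h))
    · rw [finprod_pnat _ m (by simpa using hJm)]
      rw [← hI, hJ.card_quotient_eq (fun _ => rfl) m hm]
      simp
    · simpa using hJ
    · rintro ⟨f, hf⟩ hfI
      refine Subtype.ext (funext fun d => ?_)
      have h1 := (hfI.eq_mul d.natPred).symm.trans (hJ.eq_mul d.natPred)
      have h2 := mul_right_cancel₀ (by simpa using hJ.ne_bot _) h1
      simpa using h2
  · rintro ⟨f, hf0, hff, hfn⟩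
    obtain ⟨m, hm⟩ : ∃ m : ℕ, ∀ k : ℕ, m ≤ k → f k.succPNat = ⊤ := by
      obtain ⟨M, hM⟩ := hff.bddAbove
      refine ⟨M, fun k hk => ?_⟩
      by_contra h
      have h1 : k.succPNat ≤ M := hM h
      have h2 : k + 1 ≤ (M : ℕ) := by exact_mod_cast h1
      omega
    have hL := chain_prodJ (fun k => f k.succPNat) (fun k => hf0 _) m hm
    have hcard := hL.card_ideals m hm
    rw [← finprod_pnat f m hm, hfn] at hcard
    refine Eq.trans ?_ hcard
    rw [Nat.card_congr (Equiv.subtypeSubtypeEquivSubtypeInter _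
      (fun I : Ideal A[X] => Chain I.leadingCoeffNth fun k => f k.succPNat))]
    refine Nat.card_congr (Equiv.subtypeEquivRight fun I => ?_)
    constructor
    · rintro ⟨h1, h2⟩
      have := hfin I h1
      obtain ⟨m', hm'⟩ := exists_leadingCoeffNth_eq_top I
      exact h2.eq_of_top hL hm' fun k hk => prodJ_eq_top _ hk
    · intro h
      refine ⟨?_, ?_⟩
      · rw [hL.card_quotient_eq h m fun k hk => prodJ_eq_top _ hk, ← finprod_pnat f m hm, hfn]
      · rw [funext h]; exact hL

end Count
end IdealCount

/-- Coefficient form of `ζ(O_K[X], s) = ∏_{d≥1} ζ_K(d(s-1))`: the number of ideals of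
`O_K[X]` of index `n` equals `n` times the number of finitely supported sequences
`(I_d)_{d≥1}` of nonzero ideals of `O_K` with `∏_d N(I_d)^d = n`. -/
theorem card_ideals_polynomial_ringOfIntegers (K : Type*) [Field K] [NumberField K]
    (n : ℕ) (hn : 0 < n) :
    Nat.card {I : Ideal (Polynomial (𝓞 K)) // Nat.card (Polynomial (𝓞 K) ⧸ I) = n} =
      n * Nat.card {f : ℕ+ → Ideal (𝓞 K) //
        (∀ d, f d ≠ ⊥) ∧ {d | f d ≠ ⊤}.Finite ∧
          ∏ᶠ d : ℕ+, (Ideal.absNorm (f d)) ^ (d : ℕ) = n} := by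
  exact IdealCount.card_ideals_polynomial n hn
end

section
/- Let K be a number field with ring of integers O_K, and let a_n(O_K[X]) denote the number of ideals I of O_K[X] with |O_K[X]/I| = n. Then there exists a real constant c > 0 such that Σ_{n≤N} a_n(O_K[X]) ∼ c·N² as N → ∞, i.e. lim_{N→∞} N^{-2} Σ_{n≤N} a_n(O_K[X]) = c. -/
/-!
Let `R = 𝓞 K`. An ideal `I` of `R[X]` of finite index has an increasing chain of leading ideals
`J k ⊆ R`, consisting of the coefficients in degree `k` of the elements of `I` of degree at most
`k`, and this chain is eventually `⊤`. Writing `J k = E k * J (k + 1)`, chains correspond to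
eventually trivial sequences `E` of nonzero ideals (`IdealSeq`), and the index of `I` is
`∏ N(J k) = ∏ N(E k) ^ (k + 1)`.

The main algebraic fact is that the number of ideals with a given chain is equal to their common
index (`card_ideals_of_chain`). It is obtained by building an ideal degree by degree: the part of
degree `< k + 1` extends to degree `k + 1` in exactly `N(E k) ^ (k + 1)` ways (`card_extensions`).
This rests on two properties of Dedekind domains: `B / I B` is cyclic for nonzero ideals, and all
coefficients of an element of degree at most `k` lie in `J k` (`IsTrunc.coeff_mem`).
Hence `a_n(R[X]) = n * b_n`, where `b_n` counts the sequences `E` with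
`∏ N(E k) ^ (k + 1) = n` (`card_ideals_eq_mul`).

Separating the first term of `E` from its tail gives
`∑_{n ≤ N} b_n = ∑_{E} A(N / ∏ N(E k) ^ (k + 2))`, with `A` the ideal counting function of `R`.
As `A(x) ∼ κ x` and `∑_E ∏ N(E k) ^ (-(k + 2))` converges, dominated convergence yields
`∑_{n ≤ N} b_n ∼ c N`, and partial summation yields `∑_{n ≤ N} n b_n ∼ (c / 2) N ^ 2`.
-/

open NumberField Filter Topology

section Helpers

open Polynomial

/-! ### Truncations of ideals of a polynomial ring -/

section Truncations

variable {R : Type*} [CommRing R]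

/-- The ideal of coefficients in degree `j` of the elements of `L` of degree at most `j`. -/
noncomputable def leadIdeal (L : Submodule R R[X]) (j : ℕ) : Ideal R :=
  (L ⊓ degreeLT R (j + 1)).map (lcoeff R j)

lemma mem_leadIdeal {L : Submodule R R[X]} {j : ℕ} {c : R} :
    c ∈ leadIdeal L j ↔ ∃ f ∈ L, f ∈ degreeLT R (j + 1) ∧ f.coeff j = c := by
  simp [leadIdeal, and_assoc]

lemma mem_degreeLT_iff_coeff {k : ℕ} {f : R[X]} :
    f ∈ degreeLT R k ↔ ∀ m, k ≤ m → f.coeff m = 0 := by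
  rw [mem_degreeLT, degree_lt_iff_coeff_zero]

lemma mem_degreeLT_of_succ {k : ℕ} {f : R[X]} (hf : f ∈ degreeLT R (k + 1))
    (h0 : f.coeff k = 0) : f ∈ degreeLT R k := by
  rw [mem_degreeLT_iff_coeff] at *
  intro m hm
  rcases hm.eq_or_lt with rfl | h
  · exact h0
  · exact hf m h

lemma X_mul_mem_degreeLT {k : ℕ} {f : R[X]} (hf : f ∈ degreeLT R k) :
    X * f ∈ degreeLT R (k + 1) := by
  rw [mem_degreeLT_iff_coeff] at *
  intro m hm
  obtain ⟨m, rfl⟩ : ∃ m', m = m' + 1 := ⟨m - 1, by omega⟩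
  rw [coeff_X_mul]
  exact hf m (by omega)

lemma mem_degreeLT_of_X_mul {k : ℕ} {f : R[X]} (hf : X * f ∈ degreeLT R (k + 1)) :
    f ∈ degreeLT R k := by
  rw [mem_degreeLT_iff_coeff] at *
  intro m hm
  rw [← coeff_X_mul]
  exact hf (m + 1) (by omega)

lemma monomial_mem_degreeLT {k i : ℕ} (h : i < k) (c : R) : monomial i c ∈ degreeLT R k :=
  monomial_coe_mem_degreeLT (⟨i, h⟩ : Fin k) c

/-- `L` looks like the part of degree `< k` of an ideal of `R[X]` whose ideals of leading
coefficients are `J 0, J 1, …`. -/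
structure IsTrunc (J : ℕ → Ideal R) (k : ℕ) (L : Submodule R R[X]) : Prop where
  le : L ≤ degreeLT R k
  shift : ∀ f ∈ L, X * f ∈ degreeLT R k → X * f ∈ L
  lead : ∀ j < k, leadIdeal L j = J j

lemma leadIdeal_inf_degreeLT (L : Submodule R R[X]) {j k : ℕ} (h : j < k) :
    leadIdeal (L ⊓ degreeLT R k) j = leadIdeal L j := by
  rw [leadIdeal, leadIdeal, inf_assoc, inf_eq_right.2 (degreeLT_mono h)]

lemma IsTrunc.restrict {J : ℕ → Ideal R} {k : ℕ} {L : Submodule R R[X]}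
    (h : IsTrunc J (k + 1) L) : IsTrunc J k (L ⊓ degreeLT R k) where
  le := inf_le_right
  shift f hf hX := ⟨h.shift f hf.1 (degreeLT_mono k.le_succ hX), hX⟩
  lead j hj := by rw [leadIdeal_inf_degreeLT _ hj, h.lead j (by omega)]

lemma IsTrunc.monomial_mem {J : ℕ → Ideal R} {k : ℕ} {L : Submodule R R[X]}
    (h : IsTrunc J k L) {i : ℕ} (hi : i < k) {c : R} (hc : c ∈ J 0) : monomial i c ∈ L := by
  induction i with
  | zero =>
    rw [← h.lead 0 hi, mem_leadIdeal] at hc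
    obtain ⟨f, hf, hd, rfl⟩ := hc
    convert hf
    ext n
    rw [coeff_monomial]
    split_ifs with hn
    · rw [hn]
    · rw [mem_degreeLT_iff_coeff.1 hd n (by omega)]
  | succ i ih =>
    have := h.shift _ (ih (by omega))
    rw [X_mul_monomial] at this
    exact this (monomial_mem_degreeLT hi c)

/-- A truncation contains all polynomials of degree `< k` with coefficients in `J 0`, so it is
determined by its image modulo `J 0`. -/
lemma IsTrunc.mem_of_coeff {J : ℕ → Ideal R} {k : ℕ} {L : Submodule R R[X]}
    (h : IsTrunc J k L) {f : R[X]} (hf : f ∈ degreeLT R k) (hc : ∀ i, f.coeff i ∈ J 0) :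
    f ∈ L := by
  rw [f.as_sum_support]
  refine Submodule.sum_mem _ fun i hi => h.monomial_mem ?_ (hc i)
  by_contra hik
  exact (mem_support_iff.1 hi) (mem_degreeLT_iff_coeff.1 hf i (by omega))

/-- Reduction modulo `E` of the coefficients of a polynomial of degree `< k`. -/
noncomputable def coeffMod (E : Ideal R) (k : ℕ) : degreeLT R k →ₗ[R] (Fin k → R ⧸ E) :=
  LinearMap.pi fun i => (Submodule.mkQ E) ∘ₗ (lcoeff R (i : ℕ)) ∘ₗ (degreeLT R k).subtype

lemma mem_ker_coeffMod {E : Ideal R} {k : ℕ} {f : degreeLT R k} :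
    f ∈ LinearMap.ker (coeffMod E k) ↔ ∀ i, (f : R[X]).coeff i ∈ E := by
  rw [LinearMap.mem_ker, funext_iff]
  constructor
  · intro h i
    by_cases hi : i < k
    · exact (Submodule.Quotient.mk_eq_zero E).1 (h ⟨i, hi⟩)
    · rw [mem_degreeLT_iff_coeff.1 f.2 i (by omega)]
      exact E.zero_mem
  · intro h i
    exact (Submodule.Quotient.mk_eq_zero E).2 (h i)

lemma coeffMod_surjective (E : Ideal R) (k : ℕ) : Function.Surjective (coeffMod E k) := by
  intro v
  choose w hw using fun i => Submodule.mkQ_surjective E (v i)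
  refine ⟨(degreeLTEquiv R k).symm w, ?_⟩
  funext i
  rw [← hw i]
  have := congrFun ((degreeLTEquiv R k).apply_symm_apply w) i
  exact congrArg (Submodule.mkQ E) this

lemma index_ker_coeffMod (E : Ideal R) (k : ℕ) :
    (LinearMap.ker (coeffMod E k)).toAddSubgroup.index = Nat.card (R ⧸ E) ^ k := by
  have : (LinearMap.ker (coeffMod E k)).toAddSubgroup.index
      = Nat.card (degreeLT R k ⧸ LinearMap.ker (coeffMod E k)) := rfl
  rw [this, Nat.card_congr
    (LinearMap.quotKerEquivOfSurjective _ (coeffMod_surjective E k)).toEquiv]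
  simp [Nat.card_fun]

lemma IsTrunc.ker_coeffMod_le {J : ℕ → Ideal R} {k : ℕ} {L : Submodule R R[X]}
    (h : IsTrunc J k L) :
    LinearMap.ker (coeffMod (J 0) k) ≤ L.comap (degreeLT R k).subtype := by
  intro f hf
  exact h.mem_of_coeff f.2 (mem_ker_coeffMod.1 hf)

/-- The elements of `L` of degree `< k` have index `∏ j < k, |R / leadIdeal L j|` among all
polynomials of degree `< k`. -/
lemma relIndex_inf_degreeLT (L : Submodule R R[X]) (k : ℕ) :
    L.toAddSubgroup.relIndex (degreeLT R k).toAddSubgroup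
      = ∏ j ∈ Finset.range k, Nat.card (R ⧸ leadIdeal L j) := by
  induction k with
  | zero =>
    rw [Finset.range_zero, Finset.prod_empty, AddSubgroup.relIndex_eq_one]
    intro f hf
    have : f = 0 := by
      ext i
      exact mem_degreeLT_iff_coeff.1 hf i (Nat.zero_le i)
    rw [this]
    exact L.zero_mem
  | succ k ih =>
    rw [Finset.prod_range_succ, ← ih]
    set M := (degreeLT R k).toAddSubgroup
    set M' := (degreeLT R (k + 1)).toAddSubgroup
    set L' := (L ⊓ degreeLT R (k + 1)).toAddSubgroup with hL'
    have hMM' : M ≤ M' := degreeLT_mono k.le_succ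
    have h1 : L.toAddSubgroup.relIndex M' = L'.relIndex M' :=
      (AddSubgroup.inf_relIndex_right L.toAddSubgroup M').symm
    have h2 : L'.relIndex (M ⊔ L') * (M ⊔ L').relIndex M' = L'.relIndex M' :=
      AddSubgroup.relIndex_mul_relIndex _ _ _ le_sup_right
        (sup_le hMM' (fun x hx => hx.2))
    have h3 : L'.relIndex (M ⊔ L') = L.toAddSubgroup.relIndex M := by
      rw [AddSubgroup.relIndex_sup_right, ← AddSubgroup.inf_relIndex_right L',
        ← AddSubgroup.inf_relIndex_right L.toAddSubgroup]
      congr 1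
      ext x
      constructor
      · exact fun hx => ⟨hx.1.1, hx.2⟩
      · exact fun hx => ⟨⟨hx.1, hMM' hx.2⟩, hx.2⟩
    have h4 : (M ⊔ L').relIndex M' = Nat.card (R ⧸ leadIdeal L k) := by
      have h5 : (M ⊔ L').relIndex M'
          = ((leadIdeal L k).toAddSubgroup.comap (lcoeff R k).toAddMonoidHom).relIndex M' := by
        rw [← AddSubgroup.inf_relIndex_right, ← AddSubgroup.inf_relIndex_right
          (AddSubgroup.comap _ _)]
        congr 1
        ext x
        constructor
        · rintro ⟨hx, hx'⟩
          refine ⟨?_, hx'⟩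
          obtain ⟨y, hy, z, hz, rfl⟩ := AddSubgroup.mem_sup.1 hx
          change (y + z).coeff k ∈ leadIdeal L k
          rw [coeff_add, mem_degreeLT_iff_coeff.1 hy k le_rfl, zero_add]
          exact mem_leadIdeal.2 ⟨z, hz.1, hz.2, rfl⟩
        · rintro ⟨hx, hx'⟩
          refine ⟨?_, hx'⟩
          change x.coeff k ∈ leadIdeal L k at hx
          obtain ⟨f, hf, hd, hfc⟩ := mem_leadIdeal.1 hx
          refine AddSubgroup.mem_sup.2 ⟨x - f, ?_, f, ⟨hf, hd⟩, by ring⟩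
          refine mem_degreeLT_of_succ (sub_mem hx' hd) ?_
          rw [coeff_sub, hfc, sub_self]
      rw [h5, AddSubgroup.relIndex_comap]
      have h6 : AddSubgroup.map (lcoeff R k).toAddMonoidHom M' = ⊤ := by
        rw [eq_top_iff]
        intro c _
        exact ⟨monomial k c, monomial_mem_degreeLT k.lt_succ_self c, by simp⟩
      rw [h6, AddSubgroup.relIndex_top_right]
      rfl
    rw [h1, ← h2, h3, h4]

end Truncations

/-! ### Extending a truncation by one degree -/

section Fibres

variable {R : Type*} [CommRing R] [IsDedekindDomain R]

lemma mem_of_forall_mul_mem {E B : Ideal R} (hE : E ≠ ⊥) {c : R}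
    (h : ∀ e ∈ E, e * c ∈ E * B) : c ∈ B := by
  have h1 : E * Ideal.span {c} ≤ E * B := by
    rw [Ideal.mul_le]
    intro r hr s hs
    obtain ⟨t, rfl⟩ := Ideal.mem_span_singleton'.1 hs
    have := (E * B).mul_mem_left t (h r hr)
    convert this using 1
    ring
  rw [← Ideal.dvd_iff_le, mul_dvd_mul_iff_left hE, Ideal.dvd_iff_le,
    Ideal.span_singleton_le_iff_mem] at h1
  exact h1

/-- In a Dedekind domain `B / I B` is cyclic, and a generator has annihilator `I`. -/
lemma exists_generator_mod {I B : Ideal R} (hI : I ≠ ⊥) (hB : B ≠ ⊥) :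
    ∃ b ∈ B, (∀ x ∈ B, ∃ r, ∃ j ∈ I * B, x = r * b + j) ∧ ∀ r, r * b ∈ I * B → r ∈ I := by
  obtain ⟨b, hb⟩ := IsDedekindDomain.exists_sup_span_eq (I := I * B) (J := B) Ideal.mul_le_right
    (mul_ne_zero hI hB)
  have hgen : ∀ x ∈ B, ∃ r, ∃ j ∈ I * B, x = r * b + j := by
    intro x hx
    rw [← hb] at hx
    obtain ⟨j, hj, y, hy, rfl⟩ := Submodule.mem_sup.1 hx
    obtain ⟨r, rfl⟩ := Ideal.mem_span_singleton'.1 hy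
    exact ⟨r, j, hj, add_comm _ _⟩
  have hbB : b ∈ B := hb ▸ (le_sup_right : _ ≤ I * B ⊔ Ideal.span {b})
    (Ideal.mem_span_singleton_self b)
  refine ⟨b, hbB, hgen, fun r hr => ?_⟩
  refine mem_of_forall_mul_mem hB fun x hx => ?_
  obtain ⟨s, j, hj, rfl⟩ := hgen x hx
  rw [mul_comm B I]
  have h1 := (I * B).mul_mem_left s hr
  have h2 := (I * B).mul_mem_left r hj
  convert add_mem h1 h2 using 1
  ring

/-- Not only the leading coefficient but every coefficient of an element of degree at most `j` of
a truncation lies in `J j`. For `e ∈ E j` and `f` of degree `j + 1`, the product `e * f` agrees up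
to lower degree with some `X * g`, `g` of degree `j`, so `e` times each coefficient of `f` lies in
`J j = E j * J (j + 1)`, and `E j` cancels. -/
lemma IsTrunc.coeff_mem {J E : ℕ → Ideal R} (hJE : ∀ k, E k * J (k + 1) = J k)
    (hE : ∀ k, E k ≠ ⊥) {k : ℕ} {L : Submodule R R[X]} (h : IsTrunc J k L) {j : ℕ} (hj : j < k)
    {f : R[X]} (hf : f ∈ L) (hd : f ∈ degreeLT R (j + 1)) (i : ℕ) : f.coeff i ∈ J j := by
  induction j generalizing f i with
  | zero =>
    rcases Nat.eq_zero_or_pos i with rfl | hi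
    · rw [← h.lead 0 hj, mem_leadIdeal]
      exact ⟨f, hf, hd, rfl⟩
    · rw [mem_degreeLT_iff_coeff.1 hd i hi]
      exact zero_mem _
  | succ j ih =>
    refine mem_of_forall_mul_mem (hE j) fun e he => ?_
    rw [hJE]
    have hlead : f.coeff (j + 1) ∈ J (j + 1) := by
      rw [← h.lead _ hj, mem_leadIdeal]
      exact ⟨f, hf, hd, rfl⟩
    have h1 : e * f.coeff (j + 1) ∈ J j := hJE j ▸ Ideal.mul_mem_mul he hlead
    rw [← h.lead _ (by omega), mem_leadIdeal] at h1
    obtain ⟨g, hg, hgd, hgc⟩ := h1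
    have hXd : X * g ∈ degreeLT R (j + 2) := X_mul_mem_degreeLT hgd
    have hX : X * g ∈ L := h.shift g hg (degreeLT_mono (by omega) hXd)
    have h2 : e • f - X * g ∈ degreeLT R (j + 1) := by
      refine mem_degreeLT_of_succ (sub_mem (Submodule.smul_mem _ _ hd) hXd) ?_
      rw [coeff_sub, coeff_X_mul, hgc, coeff_smul, smul_eq_mul, sub_self]
    have h3 := ih (by omega) (sub_mem (Submodule.smul_mem _ _ hf) hX) h2 i
    have h4 : (X * g).coeff i ∈ J j := by
      cases i with
      | zero => simp
      | succ i => rw [coeff_X_mul]; exact ih (by omega) hg hgd i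
    have h5 := add_mem h3 h4
    rwa [coeff_sub, sub_add_cancel, coeff_smul, smul_eq_mul] at h5

/-- A truncation `L` in degree `< m + 1` extends to degree `< m + 2` in `|R / E m| ^ (m + 1)`
ways. An extension is given by one element `b X ^ (m + 1) + q`, where `b` generates `J (m + 1)`
modulo `J 0 * J (m + 1)`, subject to the compatibility `e q = t` modulo `L` with the multiples
`X * L`. As `e` generates `E m` modulo `J 0`, the solutions form a coset of the kernel of
multiplication by `e`, whose order is the index of `E m`-valued polynomials. -/
lemma card_extensions {J E : ℕ → Ideal R} (hJE : ∀ k, E k * J (k + 1) = J k)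
    (hJ : ∀ k, J k ≠ ⊥) (hE : ∀ k, E k ≠ ⊥) (hfin : Finite (R ⧸ J 0))
    {m : ℕ} {L : Submodule R R[X]} (h : IsTrunc J (m + 1) L) :
    Nat.card {L' : Submodule R R[X] // IsTrunc J (m + 2) L' ∧ L' ⊓ degreeLT R (m + 1) = L}
      = Nat.card (R ⧸ E m) ^ (m + 1) := by
  set k := m + 1 with hk
  have hle : ∀ j, J j ≤ J (j + 1) := fun j => hJE j ▸ Ideal.mul_le_right
  have hle0 : ∀ j, J 0 ≤ J j := fun j => monotone_nat_of_le_succ hle (Nat.zero_le j)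
  have hJEm : J m ≤ E m := hJE m ▸ Ideal.mul_le_left
  obtain ⟨b, hbB, hbgen, hbann⟩ := exists_generator_mod (hJ 0) (hJ k)
  obtain ⟨e, heE, hegen, -⟩ := exists_generator_mod (hJ 0) (hE m)
  have hebA : e * b ∈ J m := hJE m ▸ Ideal.mul_mem_mul heE hbB
  -- `e * b` generates `J m` modulo `J 0 * J k`
  have hebgen : ∀ x ∈ J m, ∃ r, ∃ j ∈ J 0 * J k, x = r * (e * b) + j := by
    intro x hx
    rw [← hJE m] at hx
    refine Submodule.mul_induction_on hx ?_ ?_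
    · intro u hu v hv
      obtain ⟨r, i, hi, rfl⟩ := hegen u hu
      obtain ⟨s, j, hj, rfl⟩ := hbgen v hv
      refine ⟨r * s, r * e * j + i * (s * b + j), add_mem (Ideal.mul_mem_left _ _ hj)
        (Ideal.mul_mem_mul (Ideal.mul_le_left hi) hv), by ring⟩
    · rintro x y ⟨r, i, hi, rfl⟩ ⟨s, j, hj, rfl⟩
      exact ⟨r + s, i + j, add_mem hi hj, by ring⟩
  obtain ⟨f, hfL, hfd, hfc⟩ : ∃ f ∈ L, f ∈ degreeLT R k ∧ f.coeff m = e * b := by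
    rw [← h.lead m (by omega), mem_leadIdeal] at hebA
    exact hebA
  have hfcoef : ∀ i, f.coeff i ∈ J m := h.coeff_mem hJE hE (by omega) hfL hfd
  -- `X * f = e b X ^ k + t` lies in every extension, while `e (b X ^ k + q) = e b X ^ k + e q`
  set t : R[X] := X * f - monomial k (e * b) with ht
  have htd : t ∈ degreeLT R k := by
    refine mem_degreeLT_of_succ (sub_mem (X_mul_mem_degreeLT hfd)
      (monomial_mem_degreeLT (Nat.lt_succ_self k) _)) ?_
    rw [coeff_sub, hk, coeff_X_mul, hfc, coeff_monomial, if_pos rfl, sub_self]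
  have htcoef : ∀ i, t.coeff i ∈ J m := by
    intro i
    rw [ht, coeff_sub]
    refine sub_mem ?_ ?_
    · cases i with
      | zero => simp
      | succ i => rw [coeff_X_mul]; exact hfcoef i
    · rw [coeff_monomial]
      split_ifs
      · exact hebA
      · exact zero_mem _
  have hmon : ∀ L' : Submodule R R[X], IsTrunc J (k + 1) L' → ∀ j ∈ J 0 * J k,
      monomial k j ∈ L' := fun L' hL' j hj =>
    hL'.monomial_mem (Nat.lt_succ_self k) (Ideal.mul_le_left hj)
  set M := degreeLT R k with hM
  set LM : Submodule R M := L.comap M.subtype with hLM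
  have memLM : ∀ x : M, x ∈ LM ↔ (x : R[X]) ∈ L := fun x => Iff.rfl
  -- the extensions correspond to the solutions of `e • q = t` in `M ⧸ L`
  have hbij : Nat.card {L' : Submodule R R[X] // IsTrunc J (k + 1) L' ∧ L' ⊓ M = L}
      = Nat.card {q : M ⧸ LM // e • q = LM.mkQ ⟨t, htd⟩} := by
    have hex : ∀ L' : {L' : Submodule R R[X] // IsTrunc J (k + 1) L' ∧ L' ⊓ M = L},
        ∃ q : M, monomial k b + (q : R[X]) ∈ L'.1 := by
      rintro ⟨L', hL', hL'M⟩
      have : b ∈ leadIdeal L' k := by rwa [hL'.lead k (by omega)]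
      obtain ⟨g, hg, hgd, hgc⟩ := mem_leadIdeal.1 this
      refine ⟨⟨g - monomial k b, ?_⟩, by simpa using hg⟩
      refine mem_degreeLT_of_succ (sub_mem hgd (monomial_mem_degreeLT (Nat.lt_succ_self k) _)) ?_
      rw [coeff_sub, hgc, coeff_monomial, if_pos rfl, sub_self]
    choose qf hqf using hex
    have hqe : ∀ L', e • (LM.mkQ (qf L')) = LM.mkQ ⟨t, htd⟩ := by
      rintro ⟨L', hL', hL'M⟩
      rw [← map_smul, ← sub_eq_zero, ← map_sub, ← LinearMap.mem_ker, Submodule.ker_mkQ, memLM]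
      refine hL'M.le ⟨?_, Subtype.mem _⟩
      change _ ∈ L'
      have h1 := L'.smul_mem e (hqf ⟨L', hL', hL'M⟩)
      have hfL' : f ∈ L' := by rw [← hL'M] at hfL; exact hfL.1
      have h2 := hL'.shift f hfL' (X_mul_mem_degreeLT hfd)
      have h3 := sub_mem h1 h2
      convert h3 using 1
      simp only [Submodule.coe_sub, Submodule.coe_smul, ht, smul_add, smul_monomial, smul_eq_mul]
      ring
    refine Nat.card_eq_of_bijective (fun L' => ⟨LM.mkQ (qf L'), hqe L'⟩) ⟨?_, ?_⟩
    · -- an extension is determined by any one of its elements with leading coefficient `b`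
      have key : ∀ L₁ L₂ : {L' : Submodule R R[X] // IsTrunc J (k + 1) L' ∧ L' ⊓ M = L},
          LM.mkQ (qf L₁) = LM.mkQ (qf L₂) → L₁.1 ≤ L₂.1 := by
        intro L₁ L₂ h12 p hp
        have hg1 := hqf L₁
        have hg2 := hqf L₂
        have hsub : ((qf L₁ : M) : R[X]) - (qf L₂ : M) ∈ L := by
          rw [← sub_eq_zero, ← map_sub, ← LinearMap.mem_ker, Submodule.ker_mkQ, memLM] at h12
          exact h12
        have hLL2 : L ≤ L₂.1 := by
          intro x hx
          rw [← L₂.2.2] at hx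
          exact hx.1
        have hg : monomial k b + ((qf L₁ : M) : R[X]) ∈ L₂.1 := by
          have := add_mem hg2 (hLL2 hsub)
          convert this using 1
          ring
        have hpd := L₁.2.1.le hp
        have hpc : p.coeff k ∈ J k := by
          rw [← L₁.2.1.lead k (by omega)]
          exact mem_leadIdeal.2 ⟨p, hp, hpd, rfl⟩
        obtain ⟨r, j, hj, hrj⟩ := hbgen _ hpc
        have h5 : p - r • (monomial k b + ((qf L₁ : M) : R[X])) - monomial k j ∈ L := by
          rw [← L₁.2.2]
          refine ⟨sub_mem (sub_mem hp (Submodule.smul_mem _ _ hg1))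
            (hmon _ L₁.2.1 j hj), ?_⟩
          refine mem_degreeLT_of_succ (sub_mem (sub_mem hpd (Submodule.smul_mem _ _
            (L₁.2.1.le hg1))) (monomial_mem_degreeLT (Nat.lt_succ_self k) _)) ?_
          rw [coeff_sub, coeff_sub, coeff_smul, coeff_add, coeff_monomial, if_pos rfl,
            coeff_monomial, if_pos rfl, mem_degreeLT_iff_coeff.1 (qf L₁).2 k le_rfl, hrj,
            smul_eq_mul]
          ring
        have h6 := add_mem (add_mem (hLL2 h5) (Submodule.smul_mem _ r hg)) (hmon _ L₂.2.1 j hj)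
        convert h6 using 1
        abel
      intro L₁ L₂ h12
      have h12' : LM.mkQ (qf L₁) = LM.mkQ (qf L₂) := congrArg Subtype.val h12
      exact Subtype.ext (le_antisymm (key _ _ h12') (key _ _ h12'.symm))
    · rintro ⟨q, hq⟩
      obtain ⟨q, rfl⟩ := Submodule.mkQ_surjective LM q
      have heq : e • (q : R[X]) - t ∈ L := by
        rw [← map_smul, ← sub_eq_zero, ← map_sub, ← LinearMap.mem_ker, Submodule.ker_mkQ,
          memLM] at hq
        exact hq
      set g : R[X] := monomial k b + (q : R[X]) with hg
      have hgd : g ∈ degreeLT R (k + 1) := add_mem (monomial_mem_degreeLT (Nat.lt_succ_self k) _)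
        (degreeLT_mono k.le_succ q.2)
      have hgc : g.coeff k = b := by
        rw [hg, coeff_add, coeff_monomial, if_pos rfl, mem_degreeLT_iff_coeff.1 q.2 k le_rfl,
          add_zero]
      set L' : Submodule R R[X] :=
        L ⊔ Submodule.span R {g} ⊔ Submodule.map (monomial k) (J 0 * J k) with hL'
      have memL' : ∀ p, p ∈ L' ↔ ∃ l ∈ L, ∃ r : R, ∃ j ∈ J 0 * J k,
          p = l + r • g + monomial k j := by
        intro p
        constructor
        · intro hp
          obtain ⟨y, hy, z, ⟨j, hj, rfl⟩, rfl⟩ := Submodule.mem_sup.1 hp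
          obtain ⟨l, hl, w, hw, rfl⟩ := Submodule.mem_sup.1 hy
          obtain ⟨r, rfl⟩ := Submodule.mem_span_singleton.1 hw
          exact ⟨l, hl, r, j, hj, rfl⟩
        · rintro ⟨l, hl, r, j, hj, rfl⟩
          exact Submodule.add_mem_sup (Submodule.add_mem_sup hl
            (Submodule.smul_mem _ _ (Submodule.mem_span_singleton_self g))) ⟨j, hj, rfl⟩
      have hLL' : L ≤ L' := fun x hx => (memL' x).2 ⟨x, hx, 0, 0, zero_mem _, by simp⟩
      have hgL' : g ∈ L' := (memL' g).2 ⟨0, zero_mem _, 1, 0, zero_mem _, by simp⟩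
      have hmL' : ∀ j ∈ J 0 * J k, monomial k j ∈ L' := fun j hj =>
        (memL' _).2 ⟨0, zero_mem _, 0, j, hj, by simp⟩
      have hcoeffk : ∀ l ∈ L, ∀ r j : R, (l + r • g + monomial k j).coeff k = r * b + j := by
        intro l hl r j
        rw [coeff_add, coeff_add, coeff_smul, hgc, coeff_monomial, if_pos rfl,
          mem_degreeLT_iff_coeff.1 (h.le hl) k le_rfl, zero_add, smul_eq_mul]
      have hinf : L' ⊓ M = L := by
        refine le_antisymm ?_ (le_inf hLL' h.le)
        rintro p ⟨hp, hpM⟩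
        obtain ⟨l, hl, r, j, hj, rfl⟩ := (memL' p).1 hp
        have h0 := mem_degreeLT_iff_coeff.1 hpM k le_rfl
        rw [hcoeffk l hl] at h0
        have hr : r ∈ J 0 := hbann r (by
          rw [eq_neg_of_add_eq_zero_left h0]; exact neg_mem hj)
        have hrq : r • (q : R[X]) ∈ L := by
          refine h.mem_of_coeff (M.smul_mem r q.2) fun i => ?_
          rw [coeff_smul, smul_eq_mul]
          exact Ideal.mul_mem_right _ _ hr
        have : l + r • g + monomial k j = l + r • (q : R[X]) := by
          rw [hg, smul_add, smul_monomial, smul_eq_mul, eq_neg_of_add_eq_zero_right h0, map_neg]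
          abel
        rw [this]
        exact add_mem hl hrq
      have htrunc : IsTrunc J (k + 1) L' := by
        refine ⟨?_, ?_, ?_⟩
        · intro p hp
          obtain ⟨l, hl, r, j, hj, rfl⟩ := (memL' p).1 hp
          exact add_mem (add_mem (degreeLT_mono k.le_succ (h.le hl)) (Submodule.smul_mem _ _ hgd))
            (monomial_mem_degreeLT (Nat.lt_succ_self k) _)
        · intro p hp hpX
          have hpL : p ∈ L := by
            rw [← hinf]
            exact ⟨hp, mem_degreeLT_of_X_mul hpX⟩
          have hpc : p.coeff m ∈ J m := by
            rw [← h.lead m (by omega)]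
            exact mem_leadIdeal.2 ⟨p, hpL, h.le hpL, rfl⟩
          obtain ⟨r, j, hj, hrj⟩ := hebgen _ hpc
          have hjL : monomial m j ∈ L := h.monomial_mem (by omega) (Ideal.mul_le_left hj)
          have h7 : p - r • f - monomial m j ∈ L :=
            sub_mem (sub_mem hpL (L.smul_mem _ hfL)) hjL
          have h8 : X * (p - r • f - monomial m j) ∈ L := by
            refine h.shift _ h7 (X_mul_mem_degreeLT (mem_degreeLT_of_succ (h.le h7) ?_))
            rw [coeff_sub, coeff_sub, coeff_smul, hfc, coeff_monomial, if_pos rfl, hrj,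
              smul_eq_mul]
            ring
          have h9 : X * f ∈ L' := by
            have := sub_mem (L'.smul_mem e hgL') (hLL' heq)
            convert this using 1
            rw [hg, ht, smul_add, smul_monomial, smul_eq_mul]
            ring
          have h10 := add_mem (add_mem (hLL' h8) (L'.smul_mem r h9)) (hmL' j hj)
          convert h10 using 1
          rw [mul_sub, mul_sub, X_mul_monomial, mul_smul_comm]
          abel
        · intro i hi
          rcases Nat.lt_succ_iff_lt_or_eq.1 hi with hi | rfl
          · rw [← leadIdeal_inf_degreeLT L' hi, hinf, h.lead i hi]
          · ext c
            rw [mem_leadIdeal]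
            constructor
            · rintro ⟨p, hp, -, rfl⟩
              obtain ⟨l, hl, r, j, hj, rfl⟩ := (memL' p).1 hp
              rw [hcoeffk l hl]
              exact add_mem (Ideal.mul_mem_left _ _ hbB) (Ideal.mul_le_right hj)
            · intro hc
              obtain ⟨r, j, hj, rfl⟩ := hbgen c hc
              refine ⟨0 + r • g + monomial k j, add_mem (add_mem (zero_mem _)
                (L'.smul_mem r hgL')) (hmL' j hj), ?_, hcoeffk 0 (zero_mem _) r j⟩
              exact add_mem (add_mem (zero_mem _) (Submodule.smul_mem _ _ hgd))
                (monomial_mem_degreeLT (Nat.lt_succ_self k) _)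
      refine ⟨⟨L', htrunc, hinf⟩, Subtype.ext ?_⟩
      change LM.mkQ (qf ⟨L', htrunc, hinf⟩) = LM.mkQ q
      rw [← sub_eq_zero, ← map_sub, ← LinearMap.mem_ker, Submodule.ker_mkQ, memLM]
      refine hinf.le ⟨?_, Subtype.mem _⟩
      change _ ∈ L'
      have : _ ∈ L' := sub_mem (hqf ⟨L', htrunc, hinf⟩) hgL'
      convert this using 1
      rw [hg, Submodule.coe_sub]
      abel
  rw [hbij]
  -- the equation `e • q = t` is solvable, as `t` has its coefficients in `E m`
  have hmodE : ∀ x : M, (∀ i, (x : R[X]).coeff i ∈ E m) → ∃ y : M, e • LM.mkQ y = LM.mkQ x := by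
    intro x hx
    choose r j hj hrj using fun i => hegen _ (hx i)
    refine ⟨(degreeLTEquiv R k).symm fun i => r i, ?_⟩
    set y := (degreeLTEquiv R k).symm fun i : Fin k => r i with hy
    have hyc : ∀ i (hi : i < k), (y : R[X]).coeff i = r i := fun i hi =>
      congrFun ((degreeLTEquiv R k).apply_symm_apply fun i : Fin k => r i) ⟨i, hi⟩
    rw [← map_smul, ← sub_eq_zero, ← map_sub, ← LinearMap.mem_ker, Submodule.ker_mkQ, memLM]
    refine h.mem_of_coeff (Subtype.mem _) fun i => ?_
    by_cases hi : i < k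
    · have : ((e • y - x : M) : R[X]).coeff i = - j i := by
        rw [Submodule.coe_sub, Submodule.coe_smul, coeff_sub, coeff_smul, hyc i hi, hrj i,
          smul_eq_mul]
        ring
      rw [this]
      exact neg_mem (Ideal.mul_le_left (hj i))
    · rw [mem_degreeLT_iff_coeff.1 (Subtype.mem _) i (by omega)]
      exact zero_mem _
  obtain ⟨y₀, hy₀⟩ := hmodE ⟨t, htd⟩ fun i => hJEm (htcoef i)
  set φ : (M ⧸ LM) →+ (M ⧸ LM) := (LinearMap.lsmul R (M ⧸ LM) e).toAddMonoidHom with hφ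
  have hφa : ∀ q, φ q = e • q := fun q => rfl
  have h1 : Nat.card {q : M ⧸ LM // e • q = LM.mkQ ⟨t, htd⟩} = Nat.card φ.ker := by
    refine Nat.card_congr ((Equiv.subRight (LM.mkQ y₀)).subtypeEquiv fun q => ?_)
    rw [AddMonoidHom.mem_ker, hφa, Equiv.subRight_apply, smul_sub, hy₀, sub_eq_zero]
  have hfinM : Finite (M ⧸ LM) := by
    have h2 : Finite (M ⧸ LinearMap.ker (coeffMod (J 0) k)) :=
      Finite.of_equiv _ (LinearMap.quotKerEquivOfSurjective _
        (coeffMod_surjective (J 0) k)).symm.toEquiv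
    exact Finite.of_surjective _ (Submodule.factor_surjective h.ker_coeffMod_le)
  have h2 : Nat.card φ.ker = φ.range.index := by
    rw [AddSubgroup.index_range]
  have h3 : φ.range.comap LM.mkQ.toAddMonoidHom
      = (LinearMap.ker (coeffMod (E m) k)).toAddSubgroup := by
    ext x
    change (∃ q, e • q = LM.mkQ x) ↔ x ∈ LinearMap.ker (coeffMod (E m) k)
    rw [mem_ker_coeffMod]
    constructor
    · rintro ⟨q, hq⟩ i
      obtain ⟨q, rfl⟩ := Submodule.mkQ_surjective LM q
      rw [← map_smul, ← sub_eq_zero, ← map_sub, ← LinearMap.mem_ker, Submodule.ker_mkQ,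
        memLM] at hq
      have h4 := hJEm (h.coeff_mem hJE hE (j := m) (by omega) hq (Subtype.mem _) i)
      rw [Submodule.coe_sub, Submodule.coe_smul, coeff_sub, coeff_smul, smul_eq_mul] at h4
      have h5 := sub_mem (Ideal.mul_mem_right ((q : R[X]).coeff i) _ heE) h4
      rwa [sub_sub_cancel] at h5
    · intro hx
      obtain ⟨y, hy⟩ := hmodE x hx
      exact ⟨_, hy⟩
  rw [h1, h2, ← AddSubgroup.index_comap_of_surjective (f := LM.mkQ.toAddMonoidHom) φ.range
    (Submodule.mkQ_surjective LM), h3, index_ker_coeffMod]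

end Fibres

/-! ### From truncations to ideals -/

section Ideals

variable {R : Type*} [CommRing R]

lemma X_mul_mem_ofPolynomial {I : Ideal R[X]} {f : R[X]} (hf : f ∈ I.ofPolynomial) :
    X * f ∈ I.ofPolynomial := I.mul_mem_left X hf

lemma isTrunc_ofPolynomial {J : ℕ → Ideal R} {I : Ideal R[X]}
    (hI : ∀ j, leadIdeal I.ofPolynomial j = J j) (k : ℕ) :
    IsTrunc J k (I.ofPolynomial ⊓ degreeLT R k) where
  le := inf_le_right
  shift _ hf hX := ⟨X_mul_mem_ofPolynomial hf.1, hX⟩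
  lead j hj := by rw [leadIdeal_inf_degreeLT _ hj, hI]

lemma leadIdeal_ofPolynomial_le_succ (I : Ideal R[X]) (j : ℕ) :
    leadIdeal I.ofPolynomial j ≤ leadIdeal I.ofPolynomial (j + 1) := by
  intro c hc
  obtain ⟨f, hf, hd, rfl⟩ := mem_leadIdeal.1 hc
  exact mem_leadIdeal.2 ⟨X * f, X_mul_mem_ofPolynomial hf, X_mul_mem_degreeLT hd, by simp⟩

lemma monic_natDegree_of_mem_degreeLT [Nontrivial R] {f : R[X]} {K : ℕ}
    (hd : f ∈ degreeLT R (K + 1)) (hc : f.coeff K = 1) : f.Monic ∧ f.degree = K := by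
  have h1 : f.natDegree ≤ K := natDegree_le_iff_coeff_eq_zero.2 fun N hN =>
    mem_degreeLT_iff_coeff.1 hd N hN
  have h2 : f.degree = K := by
    refine le_antisymm (natDegree_le_iff_degree_le.1 h1) (le_degree_of_ne_zero ?_)
    rw [hc]
    exact one_ne_zero
  exact ⟨monic_of_natDegree_le_of_coeff_eq_one K h1 hc, h2⟩

lemma modByMonic_mem_degreeLT [Nontrivial R] {f : R[X]} {K : ℕ} (hf : f.Monic)
    (hd : f.degree = K) (p : R[X]) : p %ₘ f ∈ degreeLT R K := by
  rw [mem_degreeLT, ← hd]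
  exact degree_modByMonic_lt p hf

lemma exists_monic_of_leadIdeal_eq_top [Nontrivial R] {L : Submodule R R[X]} {K : ℕ}
    (h : leadIdeal L K = ⊤) :
    ∃ f ∈ L, f ∈ degreeLT R (K + 1) ∧ f.coeff K = 1 ∧ f.Monic ∧ f.degree = K := by
  have h1 : (1 : R) ∈ leadIdeal L K := by rw [h]; trivial
  obtain ⟨f, hf, hd, hc⟩ := mem_leadIdeal.1 h1
  exact ⟨f, hf, hd, hc, monic_natDegree_of_mem_degreeLT hd hc⟩

lemma modByMonic_mem_ofPolynomial_iff {I : Ideal R[X]} {f p : R[X]} (hf : f ∈ I) :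
    p %ₘ f ∈ I ↔ p ∈ I := by
  have h := modByMonic_add_div p f
  constructor
  · intro hp
    rw [← h]
    exact add_mem hp (I.mul_mem_right _ hf)
  · intro hp
    rw [eq_sub_of_add_eq h]
    exact sub_mem hp (I.mul_mem_right _ hf)

/-- If `I` contains a monic polynomial of degree `K`, its index is the product of the norms of
its first `K` leading ideals. -/
lemma card_quotient_eq_prod [Nontrivial R] {I : Ideal R[X]} {K : ℕ}
    (h : leadIdeal I.ofPolynomial K = ⊤) :
    Nat.card (R[X] ⧸ I) = ∏ j ∈ Finset.range K, Nat.card (R ⧸ leadIdeal I.ofPolynomial j) := by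
  rw [← relIndex_inf_degreeLT]
  obtain ⟨f, hfI, -, -, hf, hd⟩ := exists_monic_of_leadIdeal_eq_top h
  have htop : (degreeLT R K).toAddSubgroup ⊔ I.ofPolynomial.toAddSubgroup = ⊤ := by
    rw [eq_top_iff]
    intro p _
    refine AddSubgroup.mem_sup.2 ⟨p %ₘ f, modByMonic_mem_degreeLT hf hd p, f * (p /ₘ f), ?_,
      modByMonic_add_div p f⟩
    exact I.mul_mem_right _ hfI
  rw [← AddSubgroup.relIndex_sup_right, htop, AddSubgroup.relIndex_top_right]
  rfl

/-- Once the leading ideals have reached `⊤` in degree `K`, an ideal is the same thing as its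
truncation in degrees `≤ K`. -/
lemma card_ideals_eq_card_trunc [Nontrivial R] {J : ℕ → Ideal R} (hJ : Monotone J) {K : ℕ}
    (hK : J K = ⊤) :
    Nat.card {I : Ideal R[X] // ∀ j, leadIdeal I.ofPolynomial j = J j}
      = Nat.card {L : Submodule R R[X] // IsTrunc J (K + 1) L} := by
  refine Nat.card_eq_of_bijective
    (fun I => ⟨I.1.ofPolynomial ⊓ degreeLT R (K + 1), isTrunc_ofPolynomial I.2 _⟩) ⟨?_, ?_⟩
  · have key : ∀ I₁ I₂ : {I : Ideal R[X] // ∀ j, leadIdeal I.ofPolynomial j = J j},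
        I₁.1.ofPolynomial ⊓ degreeLT R (K + 1) = I₂.1.ofPolynomial ⊓ degreeLT R (K + 1) →
          I₁.1 ≤ I₂.1 := by
      intro I₁ I₂ h12 p hp
      obtain ⟨f, hfI, hfd, -, hf, hd⟩ := exists_monic_of_leadIdeal_eq_top ((I₁.2 K).trans hK)
      have hfI₂ : f ∈ I₂.1 := (h12.le ⟨hfI, hfd⟩).1
      rw [← modByMonic_mem_ofPolynomial_iff hfI₂]
      refine (h12.le ⟨?_, degreeLT_mono K.le_succ (modByMonic_mem_degreeLT hf hd p)⟩).1
      exact (modByMonic_mem_ofPolynomial_iff hfI).2 hp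
    intro I₁ I₂ h12
    have h12' := congrArg Subtype.val h12
    exact Subtype.ext (le_antisymm (key _ _ h12') (key _ _ h12'.symm))
  · rintro ⟨L, hL⟩
    obtain ⟨f, hfL, hfd, hfc, hf, hd⟩ := exists_monic_of_leadIdeal_eq_top
      ((hL.lead K K.lt_succ_self).trans hK)
    have hred : ∀ s ∈ degreeLT R (K + 1), s %ₘ f = s - s.coeff K • f := by
      intro s hs
      have h1 : s - s.coeff K • f ∈ degreeLT R K := by
        refine mem_degreeLT_of_succ (sub_mem hs (Submodule.smul_mem _ _ hfd)) ?_
        rw [coeff_sub, coeff_smul, hfc, smul_eq_mul, mul_one, sub_self]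
      have h2 : (s - s.coeff K • f) %ₘ f = s - s.coeff K • f := by
        rw [modByMonic_eq_self_iff hf, hd]
        exact mem_degreeLT.1 h1
      rw [← h2, sub_modByMonic, smul_modByMonic, modByMonic_self hf, smul_zero, sub_zero]
    have hiff : ∀ s ∈ degreeLT R (K + 1), s %ₘ f ∈ L ↔ s ∈ L := by
      intro s hs
      rw [hred s hs]
      exact Submodule.sub_mem_iff_left _ (L.smul_mem _ hfL)
    have hX : ∀ p, p %ₘ f ∈ L → (X * p) %ₘ f ∈ L := by
      intro p hp
      have h1 : (X * p) %ₘ f = (X * (p %ₘ f)) %ₘ f := by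
        rw [← sub_eq_zero, ← sub_modByMonic, ← mul_sub, modByMonic_eq_zero_iff_dvd hf]
        refine Dvd.dvd.mul_left ?_ X
        rw [← modByMonic_eq_zero_iff_dvd hf, sub_modByMonic, sub_eq_zero, eq_comm,
          modByMonic_eq_self_iff hf]
        exact degree_modByMonic_lt p hf
      have h2 := X_mul_mem_degreeLT (modByMonic_mem_degreeLT hf hd p)
      rw [h1, hiff _ h2]
      exact hL.shift _ hp h2
    -- an ideal containing `f` is recovered from its remainders modulo `f`
    let I : Ideal R[X] :=
      { carrier := {p | p %ₘ f ∈ L}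
        add_mem' := by
          intro a b ha hb
          change (a + b) %ₘ f ∈ L
          rw [add_modByMonic]
          exact add_mem ha hb
        zero_mem' := by
          change (0 : R[X]) %ₘ f ∈ L
          rw [zero_modByMonic]
          exact zero_mem _
        smul_mem' := by
          intro q p hp
          change (q * p) %ₘ f ∈ L
          induction q using Polynomial.induction_on' with
          | add a b ha hb =>
            rw [add_mul, add_modByMonic]
            exact add_mem ha hb
          | monomial n a =>
            rw [← C_mul_X_pow_eq_monomial, mul_assoc, C_mul', smul_modByMonic]
            refine L.smul_mem a ?_
            induction n with
            | zero => simpa using hp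
            | succ n ih =>
              rw [pow_succ', mul_assoc]
              exact hX _ ih }
    have memI : ∀ p, p ∈ I.ofPolynomial ↔ p %ₘ f ∈ L := fun p => Iff.rfl
    have hIL : I.ofPolynomial ⊓ degreeLT R (K + 1) = L := by
      refine le_antisymm ?_ ?_
      · rintro s ⟨hs, hsd⟩
        exact (hiff s hsd).1 hs
      · intro s hs
        exact ⟨(hiff s (hL.le hs)).2 hs, hL.le hs⟩
    have hlead : ∀ j, leadIdeal I.ofPolynomial j = J j := by
      intro j
      rcases Nat.lt_or_ge j (K + 1) with hj | hj
      · rw [← leadIdeal_inf_degreeLT _ hj, hIL, hL.lead j hj]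
      · have hJj : J j = ⊤ := top_le_iff.1 (hK ▸ hJ (by omega))
        have hmono : Monotone (leadIdeal I.ofPolynomial) :=
          monotone_nat_of_le_succ (leadIdeal_ofPolynomial_le_succ I)
        rw [hJj, ← top_le_iff]
        refine le_trans (le_of_eq ?_) (hmono (show K ≤ j by omega))
        rw [← leadIdeal_inf_degreeLT _ K.lt_succ_self, hIL, hL.lead K K.lt_succ_self, hK]
    exact ⟨⟨I, hlead⟩, Subtype.ext hIL⟩

end Ideals

section ChainCounting

variable {R : Type*} [CommRing R] [IsDedekindDomain R]

/-- The number of truncations, by induction on the degree through `card_extensions`; in degree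
`0` the only truncation is `J 0` itself. -/
lemma card_trunc {J E : ℕ → Ideal R} (hJE : ∀ k, E k * J (k + 1) = J k)
    (hJ : ∀ k, J k ≠ ⊥) (hE : ∀ k, E k ≠ ⊥) (hfinJ : Finite (R ⧸ J 0))
    (hfinE : ∀ k, Finite (R ⧸ E k)) (m : ℕ) :
    Nat.card {L : Submodule R R[X] // IsTrunc J (m + 1) L}
      = ∏ i ∈ Finset.range m, Nat.card (R ⧸ E i) ^ (i + 1) := by
  induction m with
  | zero =>
    rw [Finset.range_zero, Finset.prod_empty, Nat.card_eq_one_iff_unique]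
    constructor
    · have key : ∀ L₁ L₂ : {L : Submodule R R[X] // IsTrunc J (0 + 1) L}, L₁.1 ≤ L₂.1 :=
        fun L₁ L₂ f hf => L₂.2.mem_of_coeff (L₁.2.le hf)
          (L₁.2.coeff_mem hJE hE Nat.zero_lt_one hf (L₁.2.le hf))
      exact ⟨fun L₁ L₂ => Subtype.ext (le_antisymm (key _ _) (key _ _))⟩
    · refine ⟨⟨Submodule.map (monomial 0) (J 0), ?_, ?_, ?_⟩⟩
      · rintro _ ⟨c, -, rfl⟩
        exact monomial_mem_degreeLT Nat.zero_lt_one c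
      · rintro _ ⟨c, -, rfl⟩ hX
        have := mem_degreeLT_iff_coeff.1 hX 1 le_rfl
        rw [X_mul_monomial, coeff_monomial, if_pos rfl] at this
        rw [this, map_zero, mul_zero]
        exact zero_mem _
      · intro j hj
        obtain rfl : j = 0 := by omega
        ext c
        rw [mem_leadIdeal]
        constructor
        · rintro ⟨_, ⟨d, hd, rfl⟩, -, rfl⟩
          rw [coeff_monomial, if_pos rfl]
          exact hd
        · intro hc
          exact ⟨monomial 0 c, ⟨c, hc, rfl⟩, monomial_mem_degreeLT Nat.zero_lt_one c, by simp⟩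
  | succ m ih =>
    rw [Finset.prod_range_succ, ← ih]
    let res : {L : Submodule R R[X] // IsTrunc J (m + 2) L} →
        {L : Submodule R R[X] // IsTrunc J (m + 1) L} := fun L => ⟨_, L.2.restrict⟩
    have hfib : ∀ L, Nat.card {L' // res L' = L} = Nat.card (R ⧸ E m) ^ (m + 1) := by
      intro L
      rw [← card_extensions hJE hJ hE hfinJ L.2]
      refine Nat.card_congr
        { toFun := fun L' => ⟨L'.1.1, L'.1.2, congrArg Subtype.val L'.2⟩
          invFun := fun L' => ⟨⟨L'.1, L'.2.1⟩, Subtype.ext L'.2.2⟩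
          left_inv := fun _ => rfl
          right_inv := fun _ => rfl }
    have hne : Nat.card (R ⧸ E m) ^ (m + 1) ≠ 0 := by
      have := hfinE m
      exact pow_ne_zero _ Nat.card_pos.ne'
    have heq : ∀ L, Nonempty ({L' // res L' = L} ≃ Fin (Nat.card (R ⧸ E m) ^ (m + 1))) := by
      intro L
      rw [← hfib L]
      exact ⟨Nat.equivFinOfCardPos (by rw [hfib L]; exact hne)⟩
    rw [← Nat.card_congr (Equiv.sigmaFiberEquiv res),
      Nat.card_congr (Equiv.sigmaCongrRight fun L => (heq L).some),
      Nat.card_congr (Equiv.sigmaEquivProd _ _), Nat.card_prod, Nat.card_fin]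

variable [Module.Free ℤ R] [Module.Finite ℤ R]

/-- The ideals of `R[X]` with a prescribed chain `J` of leading ideals all have the same index,
and their number equals this index. -/
lemma card_ideals_of_chain {J E : ℕ → Ideal R} (hJE : ∀ k, E k * J (k + 1) = J k)
    (hE : ∀ k, E k ≠ ⊥) {K : ℕ} (hK : J K = ⊤) :
    Nat.card {I : Ideal R[X] // ∀ j, leadIdeal I.ofPolynomial j = J j}
      = ∏ i ∈ Finset.range K, Ideal.absNorm (E i) ^ (i + 1) ∧
    ∀ I : Ideal R[X], (∀ j, leadIdeal I.ofPolynomial j = J j) →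
      Nat.card (R[X] ⧸ I) = ∏ i ∈ Finset.range K, Ideal.absNorm (E i) ^ (i + 1) := by
  have hmono : Monotone J := monotone_nat_of_le_succ fun j => hJE j ▸ Ideal.mul_le_right
  have hJ : ∀ k, J k ≠ ⊥ := by
    have h0 : ∀ d k, K ≤ k + d → J k ≠ ⊥ := by
      intro d
      induction d with
      | zero =>
        intro k hk
        rw [top_le_iff.1 (hK ▸ hmono hk : ⊤ ≤ J k)]
        exact top_ne_bot
      | succ d ih =>
        intro k hk
        rw [← hJE k]
        exact mul_ne_zero (hE k) (ih (k + 1) (by omega))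
    exact fun k => h0 K k (by omega)
  have hfin : ∀ A : Ideal R, A ≠ ⊥ → Finite (R ⧸ A) := fun A hA =>
    Ideal.finiteQuotientOfFreeOfNeBot A hA
  constructor
  · rw [card_ideals_eq_card_trunc hmono hK,
      card_trunc hJE hJ hE (hfin _ (hJ 0)) (fun k => hfin _ (hE k))]
    rfl
  · intro I hI
    rw [card_quotient_eq_prod ((hI K).trans hK)]
    -- `∏_{j < m} N(J j)` regrouped through `N(J j) = N(E j) N(J (j + 1))`
    have h1 : ∀ m, ∏ j ∈ Finset.range m, Nat.card (R ⧸ leadIdeal I.ofPolynomial j)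
        = (∏ i ∈ Finset.range m, Ideal.absNorm (E i) ^ (i + 1)) * Ideal.absNorm (J m) ^ m := by
      intro m
      induction m with
      | zero => simp
      | succ m ih =>
        have h2 : Nat.card (R ⧸ leadIdeal I.ofPolynomial m) = Ideal.absNorm (J m) := by
          rw [hI m]; rfl
        rw [Finset.prod_range_succ, ih, h2, Finset.prod_range_succ, mul_assoc, ← pow_succ,
          ← hJE m, map_mul, mul_pow, mul_assoc]
    rw [h1 K, hK]
    simp

end ChainCounting

section Sequences

open scoped nonZeroDivisors

variable (R : Type*) [CommRing R]

/-- Sequences of nonzero ideals that are eventually trivial. Such a sequence `E` encodes the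
chain of ideals `J k = E k * E (k + 1) * ⋯`. -/
def IdealSeq : Type _ := {E : ℕ → (Ideal R)⁰ // ∃ K, ∀ k, K ≤ k → E k = 1}

variable {R}

namespace IdealSeq

/-- An index from which on the sequence is trivial. -/
noncomputable def bd (E : IdealSeq R) : ℕ := E.2.choose

lemma eq_one (E : IdealSeq R) {k : ℕ} (hk : E.bd ≤ k) : E.1 k = 1 := E.2.choose_spec k hk

/-- The chain of ideals `J k = E k * E (k + 1) * ⋯`. -/
noncomputable def chain (E : IdealSeq R) (k : ℕ) : Ideal R :=
  ∏ i ∈ Finset.Ico k E.bd, (E.1 i : Ideal R)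

lemma chain_of_le (E : IdealSeq R) {k : ℕ} (hk : E.bd ≤ k) : E.chain k = ⊤ := by
  rw [chain, Finset.Ico_eq_empty (by omega), Finset.prod_empty, Ideal.one_eq_top]

lemma mul_chain (E : IdealSeq R) (k : ℕ) : (E.1 k : Ideal R) * E.chain (k + 1) = E.chain k := by
  rcases Nat.lt_or_ge k E.bd with hk | hk
  · rw [chain, chain, Finset.prod_eq_prod_Ico_succ_bot hk]
  · rw [E.chain_of_le hk, E.chain_of_le (by omega), E.eq_one hk]
    simp

variable [IsDedekindDomain R]

lemma coe_ne_bot (E : IdealSeq R) (k : ℕ) : (E.1 k : Ideal R) ≠ ⊥ :=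
  nonZeroDivisors.coe_ne_zero (E.1 k)

lemma chain_ne_bot (E : IdealSeq R) (k : ℕ) : E.chain k ≠ ⊥ :=
  Finset.prod_ne_zero_iff.2 fun i _ => E.coe_ne_bot i

lemma chain_injective : Function.Injective (chain : IdealSeq R → ℕ → Ideal R) := by
  intro E E' h
  refine Subtype.ext (funext fun k => Subtype.ext ?_)
  have h1 := E.mul_chain k
  rw [h, ← E'.mul_chain k] at h1
  exact mul_right_cancel₀ (E'.chain_ne_bot (k + 1)) h1

lemma exists_chain_eq {J : ℕ → Ideal R} (hJ : Monotone J) (h0 : J 0 ≠ ⊥) {K : ℕ}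
    (hK : J K = ⊤) : ∃ E : IdealSeq R, E.chain = J := by
  have hne : ∀ k, J k ≠ ⊥ := fun k h => h0 (le_bot_iff.1 (h ▸ hJ (Nat.zero_le k)))
  have htop : ∀ k, K ≤ k → J k = ⊤ := fun k hk => top_le_iff.1 (hK ▸ hJ hk)
  have hdvd : ∀ k, ∃ E : Ideal R, J k = J (k + 1) * E := fun k =>
    Ideal.dvd_iff_le.2 (hJ k.le_succ)
  choose E hE using hdvd
  have hE0 : ∀ k, E k ∈ (Ideal R)⁰ := fun k => mem_nonZeroDivisors_of_ne_zero fun h => hne k (by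
    rw [hE k, h, mul_zero]; rfl)
  have hE1 : ∀ k, K ≤ k → E k = 1 := by
    intro k hk
    have := hE k
    rw [htop k hk, htop (k + 1) (by omega), ← Ideal.one_eq_top, one_mul] at this
    exact this.symm
  let E' : IdealSeq R := ⟨fun k => ⟨E k, hE0 k⟩, K, fun k hk => Subtype.ext (hE1 k hk)⟩
  refine ⟨E', funext fun k => ?_⟩
  have key : ∀ d k, K ≤ k + d → E'.bd ≤ k + d → E'.chain k = J k := by
    intro d
    induction d with
    | zero => intro k hk hk'; exact (E'.chain_of_le hk').trans (htop k hk).symm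
    | succ d ih =>
      intro k hk hk'
      rw [← E'.mul_chain k, ih (k + 1) (by omega) (by omega), hE k, mul_comm]
  exact key (K + E'.bd) k (by omega) (by omega)

variable [Module.Free ℤ R]

/-- The weight `∏ k, N(E k) ^ (k + r)`. -/
noncomputable def wt (r : ℕ) (E : IdealSeq R) : ℕ :=
  ∏ k ∈ Finset.range E.bd, Ideal.absNorm (E.1 k : Ideal R) ^ (k + r)

lemma wt_eq (r : ℕ) (E : IdealSeq R) {K : ℕ} (hK : ∀ k, K ≤ k → E.1 k = 1) :
    E.wt r = ∏ k ∈ Finset.range K, Ideal.absNorm (E.1 k : Ideal R) ^ (k + r) := by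
  have key : ∀ A B : ℕ, (∀ k, A ≤ k → E.1 k = 1) → A ≤ B →
      ∏ k ∈ Finset.range A, Ideal.absNorm (E.1 k : Ideal R) ^ (k + r)
        = ∏ k ∈ Finset.range B, Ideal.absNorm (E.1 k : Ideal R) ^ (k + r) := by
    intro A B hA hAB
    refine Finset.prod_subset (Finset.range_mono hAB) fun k _ hk => ?_
    rw [hA k (by simpa using hk)]
    simp
  rcases le_total E.bd K with h | h
  · exact key _ _ (fun k => E.eq_one) h
  · exact (key _ _ hK h).symm

end IdealSeq

variable [IsDedekindDomain R] [Module.Free ℤ R] [Module.Finite ℤ R] [CharZero R]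

/-- The number of ideals of `R[X]` of index `n` is `n` times the number of sequences of weight
`∏ k, N(E k) ^ (k + 1)` equal to `n`. -/
theorem card_ideals_eq_mul (n : ℕ) (hn : 0 < n) :
    Nat.card {I : Ideal R[X] // Nat.card (R[X] ⧸ I) = n}
      = n * Nat.card {E : IdealSeq R // E.wt 1 = n} := by
  have hex : ∀ I : {I : Ideal R[X] // Nat.card (R[X] ⧸ I) = n},
      ∃ E : IdealSeq R, E.chain = leadIdeal I.1.ofPolynomial := by
    rintro ⟨I, hI⟩
    have hfin : Finite (R[X] ⧸ I) := Nat.finite_of_card_ne_zero (by omega)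
    have hmono : Monotone (leadIdeal I.ofPolynomial) :=
      monotone_nat_of_le_succ (leadIdeal_ofPolynomial_le_succ I)
    -- `R` is infinite, so two constants agree modulo `I`
    have h0 : leadIdeal I.ofPolynomial 0 ≠ ⊥ := by
      have : Infinite R := inferInstance
      obtain ⟨x, y, hxy, h⟩ := Finite.exists_ne_map_eq_of_infinite
        (fun c : R => Ideal.Quotient.mk I (C c))
      have h1 : C (x - y) ∈ I := by
        rw [map_sub]
        exact Ideal.Quotient.eq.1 h
      intro hbot
      have h2 : x - y ∈ leadIdeal I.ofPolynomial 0 :=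
        mem_leadIdeal.2 ⟨C (x - y), h1, monomial_mem_degreeLT Nat.zero_lt_one _, by simp⟩
      rw [hbot] at h2
      exact hxy (sub_eq_zero.1 h2)
    -- two powers of `X` agree modulo `I`, so `I` contains a monic polynomial
    obtain ⟨K, hK⟩ : ∃ K, leadIdeal I.ofPolynomial K = ⊤ := by
      obtain ⟨a, b, hab, h⟩ : ∃ a b : ℕ, a < b ∧
          Ideal.Quotient.mk I (X ^ b) = Ideal.Quotient.mk I (X ^ a) := by
        obtain ⟨a, b, hab, h⟩ := Finite.exists_ne_map_eq_of_infinite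
          (fun c : ℕ => Ideal.Quotient.mk I (X ^ c))
        rcases hab.lt_or_gt with hab | hab
        · exact ⟨a, b, hab, h.symm⟩
        · exact ⟨b, a, hab, h⟩
      refine ⟨b, (Ideal.eq_top_iff_one _).2 (mem_leadIdeal.2
        ⟨X ^ b - X ^ a, Ideal.Quotient.eq.1 h, ?_, ?_⟩)⟩
      · rw [← monomial_one_right_eq_X_pow, ← monomial_one_right_eq_X_pow]
        exact sub_mem (monomial_mem_degreeLT b.lt_succ_self _)
          (monomial_mem_degreeLT (by omega) _)
      · rw [coeff_sub, coeff_X_pow, coeff_X_pow, if_pos rfl, if_neg (by omega), sub_zero]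
    exact IdealSeq.exists_chain_eq hmono h0 hK
  choose c hc using hex
  have hall : ∀ E : IdealSeq R,
      Nat.card {I : Ideal R[X] // ∀ j, leadIdeal I.ofPolynomial j = E.chain j} = E.wt 1 ∧
      ∀ I : Ideal R[X], (∀ j, leadIdeal I.ofPolynomial j = E.chain j) →
        Nat.card (R[X] ⧸ I) = E.wt 1 := fun E =>
    card_ideals_of_chain E.mul_chain E.coe_ne_bot (E.chain_of_le le_rfl)
  let c' : {I : Ideal R[X] // Nat.card (R[X] ⧸ I) = n} → {E : IdealSeq R // E.wt 1 = n} :=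
    fun I => ⟨c I, by rw [← (hall (c I)).2 I.1 fun j => (congrFun (hc I) j).symm, I.2]⟩
  have hfib : ∀ E, Nat.card {I // c' I = E} = n := by
    intro E
    refine Eq.trans ?_ ((hall E.1).1.trans E.2)
    refine Nat.card_congr
      { toFun := fun I => ⟨I.1.1, fun j => by
            rw [← hc I.1]
            exact congrArg (fun F => F.1.chain j) I.2⟩
        invFun := fun I => ⟨⟨I.1, ((hall E.1).2 I.1 I.2).trans E.2⟩, Subtype.ext
          (IdealSeq.chain_injective ((hc _).trans (funext I.2)))⟩
        left_inv := fun _ => rfl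
        right_inv := fun _ => rfl }
  have heq : ∀ E, Nonempty ({I // c' I = E} ≃ Fin n) := by
    intro E
    have h1 := hfib E
    have h2 : Nat.card {I // c' I = E} ≠ 0 := by omega
    have h3 := Nat.equivFinOfCardPos h2
    rw [h1] at h3
    exact ⟨h3⟩
  rw [← Nat.card_congr (Equiv.sigmaFiberEquiv c'),
    Nat.card_congr (Equiv.sigmaCongrRight fun E => (heq E).some),
    Nat.card_congr (Equiv.sigmaEquivProd _ _), Nat.card_prod, Nat.card_fin, mul_comm]

end Sequences

/-! ### Partial summation and ideals of bounded norm -/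

section Analysis

/-- Partial summation: if `∑_{n ≤ N} b n ∼ c N` then `∑_{n ≤ N} n b n ∼ (c / 2) N ^ 2`. -/
lemma tendsto_sum_mul_div_sq {b : ℕ → ℝ} {c : ℝ}
    (h : Tendsto (fun N : ℕ => (∑ n ∈ Finset.Icc 1 N, b n) / (N : ℝ)) atTop (𝓝 c)) :
    Tendsto (fun N : ℕ => (∑ n ∈ Finset.Icc 1 N, (n : ℝ) * b n) / (N : ℝ) ^ 2) atTop
      (𝓝 (c / 2)) := by
  set B : ℕ → ℝ := fun N => ∑ n ∈ Finset.Icc 1 N, b n with hB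
  have hBs : ∀ N, B (N + 1) = B N + b (N + 1) := fun N => by
    simp only [hB]
    rw [Finset.sum_Icc_succ_top (by omega)]
  have habel : ∀ N : ℕ, ∑ n ∈ Finset.Icc 1 N, (n : ℝ) * b n
      = N * B N - ∑ m ∈ Finset.range N, B m := by
    intro N
    induction N with
    | zero => simp
    | succ N ih =>
      rw [Finset.sum_Icc_succ_top (by omega), ih, hBs, Finset.sum_range_succ]
      push_cast
      ring
  have hgauss : ∀ N : ℕ, ∑ m ∈ Finset.range N, (m : ℝ) = (N : ℝ) * (N - 1) / 2 := by
    intro N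
    induction N with
    | zero => simp
    | succ N ih => rw [Finset.sum_range_succ, ih]; push_cast; ring
  have hlo : (fun N : ℕ => B N - c * N) =o[atTop] fun N : ℕ => (N : ℝ) := by
    rw [Asymptotics.isLittleO_iff_tendsto']
    · have := h.sub_const c
      rw [sub_self] at this
      refine this.congr' ?_
      filter_upwards [eventually_ge_atTop 1] with N hN
      have : (N : ℝ) ≠ 0 := by positivity
      simp only [hB]
      field_simp
    · filter_upwards [eventually_ge_atTop 1] with N hN h0
      have : (N : ℝ) ≠ 0 := by positivity
      exact absurd h0 this
  have hinf : Tendsto (fun N : ℕ => ∑ m ∈ Finset.range N, (m : ℝ)) atTop atTop := by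
    have h1 : Tendsto (fun N : ℕ => (N : ℝ) - 1) atTop atTop :=
      tendsto_atTop_add_const_right _ _ tendsto_natCast_atTop_atTop
    refine tendsto_atTop_mono' _ ?_ (h1.atTop_div_const (show (0 : ℝ) < 2 by norm_num))
    filter_upwards [eventually_ge_atTop 1] with N hN
    rw [hgauss]
    have : (1 : ℝ) ≤ N := by exact_mod_cast hN
    nlinarith
  have hsum := hlo.sum_range (fun N => Nat.cast_nonneg N) hinf
  have hbig : (fun N : ℕ => ∑ m ∈ Finset.range N, (m : ℝ)) =O[atTop]
      fun N : ℕ => (N : ℝ) ^ 2 := by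
    refine Asymptotics.IsBigO.of_bound 1 (Eventually.of_forall fun N => ?_)
    have h0 : 0 ≤ ∑ m ∈ Finset.range N, (m : ℝ) := Finset.sum_nonneg fun _ _ => Nat.cast_nonneg _
    rw [Real.norm_of_nonneg h0, Real.norm_of_nonneg (by positivity), hgauss]
    have : (0 : ℝ) ≤ N := Nat.cast_nonneg N
    nlinarith
  have h3 := (hsum.trans_isBigO hbig).tendsto_div_nhds_zero
  have h4 : Tendsto (fun N : ℕ => 1 / (N : ℝ)) atTop (𝓝 0) := tendsto_one_div_atTop_nhds_zero_nat
  have h5 : Tendsto (fun N : ℕ => B N / (N : ℝ) - (∑ m ∈ Finset.range N, (B m - c * m)) / (N : ℝ) ^ 2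
      - c / 2 * (1 - 1 / (N : ℝ))) atTop (𝓝 (c - 0 - c / 2 * (1 - 0))) :=
    (h.sub h3).sub ((h4.const_sub 1).const_mul _)
  have h6 : c - 0 - c / 2 * (1 - 0) = c / 2 := by ring
  rw [h6] at h5
  refine h5.congr' ?_
  filter_upwards [eventually_ge_atTop 1] with N hN
  have hN0 : (N : ℝ) ≠ 0 := by positivity
  rw [habel, Finset.sum_sub_distrib, ← Finset.mul_sum, hgauss]
  field_simp
  ring

end Analysis

section NumberField

open scoped nonZeroDivisors

variable (K : Type*) [Field K] [NumberField K]

/-- The number of nonzero ideals of `𝓞 K` of norm at most `x`. -/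
noncomputable def idealCount (x : ℝ) : ℕ :=
  Nat.card {D : (Ideal (𝓞 K))⁰ // (Ideal.absNorm (D : Ideal (𝓞 K)) : ℝ) ≤ x}

lemma finite_norm_le (x : ℝ) :
    Finite {D : (Ideal (𝓞 K))⁰ // (Ideal.absNorm (D : Ideal (𝓞 K)) : ℝ) ≤ x} := by
  have h := Ideal.finite_setOfPred_absNorm_le (S := 𝓞 K) ⌊x⌋₊
  have : Finite {I : Ideal (𝓞 K) // Ideal.absNorm I ≤ ⌊x⌋₊} := h
  refine Finite.of_injective
    (fun D => (⟨D.1, Nat.le_floor D.2⟩ : {I : Ideal (𝓞 K) // Ideal.absNorm I ≤ ⌊x⌋₊})) ?_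
  intro D D' h
  exact Subtype.ext (Subtype.ext (Subtype.mk.inj h))

variable {K} in
lemma absNorm_pos (D : (Ideal (𝓞 K))⁰) : 0 < Ideal.absNorm (D : Ideal (𝓞 K)) :=
  Ideal.absNorm_pos_of_nonZeroDivisors D

/-- The ideal theorem: `idealCount K x ∼ κ x`, with `κ` given by the class number formula. -/
lemma exists_tendsto_idealCount :
    ∃ κ : ℝ, 0 < κ ∧ Tendsto (fun x : ℝ => (idealCount K x : ℝ) / x) atTop (𝓝 κ) := by
  refine ⟨_, ?_, NumberField.Ideal.tendsto_norm_le_div_atTop₀ K⟩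
  have h1 : 0 < Units.regulator K := Units.regulator_pos K
  have h2 : 0 < classNumber K := classNumber_pos K
  have h3 : 0 < Units.torsionOrder K := Units.torsionOrder_pos K
  have h4 : (discr K : ℝ) ≠ 0 := by exact_mod_cast discr_ne_zero K
  have h5 : 0 < √|(discr K : ℝ)| := Real.sqrt_pos.2 (abs_pos.2 h4)
  positivity

lemma idealCount_mono {x y : ℝ} (h : x ≤ y) : idealCount K x ≤ idealCount K y := by
  have := finite_norm_le K y
  exact Nat.card_le_card_of_injective
    (fun D => (⟨D.1, D.2.trans h⟩ :
      {D : (Ideal (𝓞 K))⁰ // (Ideal.absNorm (D : Ideal (𝓞 K)) : ℝ) ≤ y}))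
    fun D D' hD => Subtype.ext (Subtype.mk.inj hD)

lemma idealCount_eq_zero {x : ℝ} (h : x < 1) : idealCount K x = 0 := by
  have : IsEmpty {D : (Ideal (𝓞 K))⁰ // (Ideal.absNorm (D : Ideal (𝓞 K)) : ℝ) ≤ x} := by
    refine ⟨fun D => ?_⟩
    have h1 : (1 : ℝ) ≤ Ideal.absNorm (D.1 : Ideal (𝓞 K)) := by exact_mod_cast absNorm_pos D.1
    linarith [D.2]
  exact Nat.card_of_isEmpty

lemma exists_idealCount_le :
    ∃ C : ℝ, 0 ≤ C ∧ ∀ x : ℝ, 0 ≤ x → (idealCount K x : ℝ) ≤ C * x := by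
  obtain ⟨κ, hκ, hlim⟩ := exists_tendsto_idealCount K
  obtain ⟨x₀, hx₀⟩ := eventually_atTop.1
    ((hlim.eventually_le_const (show κ < κ + 1 by linarith)).and (eventually_ge_atTop 1))
  refine ⟨κ + 1 + idealCount K x₀, by positivity, fun x hx => ?_⟩
  have hA : (0 : ℝ) ≤ idealCount K x₀ := Nat.cast_nonneg _
  rcases le_total x₀ x with h | h
  · obtain ⟨h1, h2⟩ := hx₀ x h
    rw [div_le_iff₀ (by linarith)] at h1
    nlinarith
  · rcases lt_or_ge x 1 with h1 | h1
    · rw [idealCount_eq_zero K h1]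
      push_cast
      positivity
    · have h2 : (idealCount K x : ℝ) ≤ idealCount K x₀ := by
        exact_mod_cast idealCount_mono K h
      nlinarith

lemma summable_one_div_absNorm_sq :
    Summable fun D : (Ideal (𝓞 K))⁰ => 1 / (Ideal.absNorm (D : Ideal (𝓞 K)) : ℝ) ^ 2 := by
  classical
  obtain ⟨C, hC0, hC⟩ := exists_idealCount_le K
  have hsq : Summable fun m : ℕ => 1 / (m : ℝ) ^ 2 :=
    Real.summable_one_div_nat_pow.2 (by norm_num)
  refine summable_of_sum_le (c := 8 * (C * ∑' m : ℕ, 1 / (m : ℝ) ^ 2))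
    (fun D => by positivity) fun s => ?_
  set N : (Ideal (𝓞 K))⁰ → ℕ := fun D => Ideal.absNorm (D : Ideal (𝓞 K)) with hN
  set M := s.sup fun D => 2 * N D with hM
  -- `1 / n ^ 2 ≤ 8 * ∑_{n ≤ m < 2 n} 1 / m ^ 3` turns the sum into one over counting functions
  have h1 : ∀ D ∈ s, 1 / (N D : ℝ) ^ 2
      ≤ 8 * ∑ m ∈ Finset.range M, if N D ≤ m ∧ m < 2 * N D then 1 / (m : ℝ) ^ 3 else 0 := by
    intro D hD
    have hn : 0 < N D := absNorm_pos D
    have hn' : (0 : ℝ) < N D := by exact_mod_cast hn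
    have hsub : Finset.Ico (N D) (2 * N D) ⊆ (Finset.range M).filter
        (fun m => N D ≤ m ∧ m < 2 * N D) := by
      intro m hm
      rw [Finset.mem_Ico] at hm
      rw [Finset.mem_filter, Finset.mem_range]
      exact ⟨hm.2.trans_le (Finset.le_sup (f := fun D => 2 * N D) hD), hm⟩
    have h2 : ∑ m ∈ Finset.Ico (N D) (2 * N D), 1 / (m : ℝ) ^ 3
        ≤ ∑ m ∈ Finset.range M, if N D ≤ m ∧ m < 2 * N D then 1 / (m : ℝ) ^ 3 else 0 := by
      rw [← Finset.sum_filter]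
      exact Finset.sum_le_sum_of_subset_of_nonneg hsub fun _ _ _ => by positivity
    have h3 : ∑ m ∈ Finset.Ico (N D) (2 * N D), 1 / (2 * (N D : ℝ)) ^ 3
        ≤ ∑ m ∈ Finset.Ico (N D) (2 * N D), 1 / (m : ℝ) ^ 3 := by
      refine Finset.sum_le_sum fun m hm => ?_
      rw [Finset.mem_Ico] at hm
      have hm1 : (0 : ℝ) < m := by exact_mod_cast hn.trans_le hm.1
      have hm2 : (m : ℝ) ≤ 2 * N D := by exact_mod_cast hm.2.le
      gcongr
    have h4 : 1 / (N D : ℝ) ^ 2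
        = 8 * ∑ m ∈ Finset.Ico (N D) (2 * N D), 1 / (2 * (N D : ℝ)) ^ 3 := by
      rw [Finset.sum_const, Nat.card_Ico, show 2 * N D - N D = N D by omega, nsmul_eq_mul]
      field_simp
      norm_num
    rw [h4]
    linarith
  refine (Finset.sum_le_sum h1).trans ?_
  rw [← Finset.mul_sum, Finset.sum_comm]
  refine mul_le_mul_of_nonneg_left ?_ (by norm_num)
  rw [← tsum_mul_left]
  refine le_trans (Finset.sum_le_sum fun m _ => ?_)
    ((hsq.mul_left C).sum_le_tsum (Finset.range M) fun m _ => by positivity)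
  rw [← Finset.sum_filter, Finset.sum_const, nsmul_eq_mul]
  rcases Nat.eq_zero_or_pos m with rfl | hm
  · simp
  have hm' : (0 : ℝ) < m := by exact_mod_cast hm
  have hcard : ((s.filter fun D => N D ≤ m ∧ m < 2 * N D).card : ℝ) ≤ C * m := by
    refine le_trans ?_ (hC m hm'.le)
    have := finite_norm_le K m
    rw [← Nat.card_eq_finsetCard, Nat.cast_le]
    exact Nat.card_le_card_of_injective
      (fun D => (⟨D.1, Nat.cast_le.2 (Finset.mem_filter.1 D.2).2.1⟩ :
        {D : (Ideal (𝓞 K))⁰ // (Ideal.absNorm (D : Ideal (𝓞 K)) : ℝ) ≤ m}))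
      fun D D' hD => Subtype.ext (Subtype.mk.inj hD)
  calc _ ≤ C * m * (1 / (m : ℝ) ^ 3) := by gcongr
    _ = C * (1 / (m : ℝ) ^ 2) := by field_simp

end NumberField

/-! ### Asymptotics for sequences of ideals -/

section Counting

open scoped nonZeroDivisors ENNReal

lemma tsum_ite_one_eq_card {α : Type*} (p : α → Prop) [DecidablePred p] :
    ∑' a, (if p a then (1 : ℝ≥0∞) else 0) = ENat.card {a // p a} := by
  have h1 := tsum_subtype {a | p a} fun _ => (1 : ℝ≥0∞)
  rw [ENNReal.tsum_const, mul_one] at h1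
  refine Eq.trans (tsum_congr fun a => ?_) h1.symm
  simp [Set.indicator_apply]

lemma natCard_subtype_eq_toReal_tsum {α : Type*} (p : α → Prop) [DecidablePred p] :
    (Nat.card {a // p a} : ℝ) = (∑' a, if p a then (1 : ℝ≥0∞) else 0).toReal := by
  rw [tsum_ite_one_eq_card]
  rcases finite_or_infinite {a // p a} with h | h
  · simp [ENat.card_eq_coe_natCard]
  · simp

variable {K : Type*} [Field K] [NumberField K]

lemma two_le_absNorm {D : (Ideal (𝓞 K))⁰} (h : D ≠ 1) :
    2 ≤ Ideal.absNorm (D : Ideal (𝓞 K)) := by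
  have h1 := absNorm_pos D
  have h2 : Ideal.absNorm (D : Ideal (𝓞 K)) ≠ 1 := fun h2 =>
    h (Subtype.ext ((Ideal.absNorm_eq_one_iff.1 h2).trans Ideal.one_eq_top.symm))
  omega

/-- The factor at `i` of the product `∏ i, ∑ D, N(D) ^ (-(i + 2))` is `1 + O(2 ^ (-i))`, since every
nontrivial ideal has norm at least `2`. -/
lemma sum_one_div_absNorm_pow_le (i : ℕ) (t : Finset (Ideal (𝓞 K))⁰) :
    ∑ D ∈ t, 1 / (Ideal.absNorm (D : Ideal (𝓞 K)) : ℝ) ^ (i + 2)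
      ≤ 1 + (∑' D : (Ideal (𝓞 K))⁰, 1 / (Ideal.absNorm (D : Ideal (𝓞 K)) : ℝ) ^ 2)
          * (1 / 2) ^ i := by
  classical
  have hpt : ∀ D ∈ t, 1 / (Ideal.absNorm (D : Ideal (𝓞 K)) : ℝ) ^ (i + 2)
      ≤ (if D = 1 then 1 else 0)
        + 1 / (Ideal.absNorm (D : Ideal (𝓞 K)) : ℝ) ^ 2 * (1 / 2) ^ i := by
    intro D _
    split_ifs with h
    · subst h
      simp
    · have h2 : (2 : ℝ) ≤ Ideal.absNorm (D : Ideal (𝓞 K)) := by exact_mod_cast two_le_absNorm h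
      rw [zero_add, pow_add, div_pow, one_pow, div_mul_div_comm, one_mul, mul_comm]
      gcongr
  refine (Finset.sum_le_sum hpt).trans ?_
  rw [Finset.sum_add_distrib, ← Finset.sum_mul]
  gcongr
  · rw [Finset.sum_ite_eq']
    split_ifs <;> norm_num
  · exact (summable_one_div_absNorm_sq K).sum_le_tsum t fun _ _ => by positivity

namespace IdealSeq

lemma wt_pos (r : ℕ) (E : IdealSeq (𝓞 K)) : 0 < E.wt r :=
  Finset.prod_pos fun k _ => pow_pos (absNorm_pos (E.1 k)) _

/-- The Euler-type product `∏ k, ∑ D, N(D) ^ (-(k + 2))` converges. -/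
lemma summable_one_div_wt : Summable fun E : IdealSeq (𝓞 K) => 1 / (E.wt 2 : ℝ) := by
  classical
  set Z := ∑' D : (Ideal (𝓞 K))⁰, 1 / (Ideal.absNorm (D : Ideal (𝓞 K)) : ℝ) ^ 2 with hZ
  have hZ0 : 0 ≤ Z := tsum_nonneg fun D => by positivity
  refine summable_of_sum_le (c := Real.exp (Z * 2)) (fun E => by positivity) fun s => ?_
  set M := s.sup bd with hM
  have hone : ∀ E ∈ s, ∀ k, M ≤ k → E.1 k = 1 := fun E hE k hk =>
    E.eq_one ((Finset.le_sup (f := bd) hE).trans hk)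
  let φ : IdealSeq (𝓞 K) → Fin M → (Ideal (𝓞 K))⁰ := fun E i => E.1 i
  let g : Fin M → (Ideal (𝓞 K))⁰ → ℝ := fun i D =>
    1 / (Ideal.absNorm (D : Ideal (𝓞 K)) : ℝ) ^ ((i : ℕ) + 2)
  have hφ : Set.InjOn φ s := by
    intro E hE E' hE' h
    refine Subtype.ext (funext fun k => ?_)
    rcases Nat.lt_or_ge k M with hk | hk
    · exact congrFun h ⟨k, hk⟩
    · rw [hone E hE k hk, hone E' hE' k hk]
  have hwt : ∀ E ∈ s, 1 / (E.wt 2 : ℝ) = ∏ i, g i (φ E i) := by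
    intro E hE
    rw [E.wt_eq 2 (hone E hE), ← Fin.prod_univ_eq_prod_range
      (fun k => Ideal.absNorm (E.1 k : Ideal (𝓞 K)) ^ (k + 2))]
    push_cast
    rw [one_div, ← Finset.prod_inv_distrib]
    exact Finset.prod_congr rfl fun i _ => (one_div _).symm
  calc ∑ E ∈ s, 1 / (E.wt 2 : ℝ) = ∑ E ∈ s, ∏ i, g i (φ E i) := Finset.sum_congr rfl hwt
    _ = ∑ f ∈ s.image φ, ∏ i, g i (f i) := by rw [Finset.sum_image hφ]
    _ ≤ ∑ f ∈ Fintype.piFinset (fun i => s.image fun E => φ E i), ∏ i, g i (f i) := by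
        refine Finset.sum_le_sum_of_subset_of_nonneg ?_ fun f _ _ =>
          Finset.prod_nonneg fun i _ => by positivity
        intro f hf
        obtain ⟨E, hE, rfl⟩ := Finset.mem_image.1 hf
        exact Fintype.mem_piFinset.2 fun i => Finset.mem_image_of_mem _ hE
    _ = ∏ i, ∑ D ∈ s.image (fun E => φ E i), g i D := (Finset.prod_univ_sum _ _).symm
    _ ≤ ∏ i : Fin M, Real.exp (Z * (1 / 2) ^ (i : ℕ)) := by
        refine Finset.prod_le_prod (fun i _ => Finset.sum_nonneg fun D _ => by positivity)
          fun i _ => (sum_one_div_absNorm_pow_le _ _).trans ?_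
        rw [add_comm]
        exact Real.add_one_le_exp _
    _ = Real.exp (Z * ∑ i ∈ Finset.range M, (1 / 2 : ℝ) ^ i) := by
        rw [← Real.exp_sum, ← Finset.mul_sum,
          Fin.sum_univ_eq_sum_range (fun i => (1 / 2 : ℝ) ^ i)]
    _ ≤ Real.exp (Z * 2) := by
        gcongr
        exact (summable_geometric_two.sum_le_tsum _ fun _ _ => by positivity).trans_eq
          tsum_geometric_two

/-- A sequence is determined by its tail and its first term. -/
def tailHead : IdealSeq (𝓞 K) ≃ IdealSeq (𝓞 K) × (Ideal (𝓞 K))⁰ where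
  toFun E := (⟨fun k => E.1 (k + 1), E.2.imp fun _ h k hk => h (k + 1) (by omega)⟩, E.1 0)
  invFun p := ⟨fun k => Nat.casesOn k p.2 p.1.1, by
    obtain ⟨M, hM⟩ := p.1.2
    refine ⟨M + 1, fun k hk => ?_⟩
    obtain ⟨k, rfl⟩ : ∃ l, k = l + 1 := ⟨k - 1, by omega⟩
    exact hM k (by omega)⟩
  left_inv E := Subtype.ext (funext fun k => by cases k <;> rfl)
  right_inv _ := rfl

lemma wt_one_eq (E : IdealSeq (𝓞 K)) :
    E.wt 1 = Ideal.absNorm ((tailHead E).2 : Ideal (𝓞 K)) * (tailHead E).1.wt 2 := by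
  rw [E.wt_eq 1 (K := E.bd + 1) (fun k hk => E.eq_one (by omega)),
    (tailHead E).1.wt_eq 2 (K := E.bd)
      (fun k hk => show E.1 (k + 1) = 1 from E.eq_one (by omega)),
    Finset.prod_range_succ', mul_comm]
  congr 1
  exact pow_one _

variable (K) in
/-- The number of sequences of weight `n`. -/
noncomputable def count (n : ℕ) : ℕ := Nat.card {E : IdealSeq (𝓞 K) // E.wt 1 = n}

/-- Summing first over `E 0` expresses the number of sequences of weight at most `N` through the
ideal counting function of `𝓞 K`. -/
lemma sum_count_eq_tsum (N : ℕ) :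
    ∑ n ∈ Finset.Icc 1 N, (count K n : ℝ)
      = ∑' E : IdealSeq (𝓞 K), (idealCount K ((N : ℝ) / E.wt 2) : ℝ) := by
  classical
  let inner : IdealSeq (𝓞 K) → ℝ≥0∞ := fun E => ∑' D : (Ideal (𝓞 K))⁰,
    if (Ideal.absNorm (D : Ideal (𝓞 K)) : ℝ) ≤ (N : ℝ) / E.wt 2 then 1 else 0
  have hinner : ∀ E, inner E ≠ ∞ := by
    intro E
    have := finite_norm_le K ((N : ℝ) / E.wt 2)
    simp only [inner]
    rw [tsum_ite_one_eq_card, ENat.card_eq_coe_natCard]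
    simp
  have hval : ∀ E, (inner E).toReal = idealCount K ((N : ℝ) / E.wt 2) := fun E =>
    (natCard_subtype_eq_toReal_tsum _).symm
  have htotal : ∑ n ∈ Finset.Icc 1 N,
      (∑' E : IdealSeq (𝓞 K), if E.wt 1 = n then (1 : ℝ≥0∞) else 0) = ∑' E, inner E := by
    rw [← Summable.tsum_finsetSum fun _ _ => ENNReal.summable, ← ENNReal.tsum_prod,
      ← tailHead.tsum_eq]
    refine tsum_congr fun E => ?_
    have h1 : 0 < E.wt 1 := E.wt_pos 1
    have h2 : (0 : ℝ) < (tailHead E).1.wt 2 := by exact_mod_cast (tailHead E).1.wt_pos 2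
    rw [Finset.sum_ite_eq]
    refine if_congr ?_ rfl rfl
    rw [Finset.mem_Icc, le_div_iff₀ h2]
    rw [wt_one_eq] at h1 ⊢
    constructor
    · rintro ⟨_, h⟩
      exact_mod_cast h
    · intro h
      exact ⟨h1, by exact_mod_cast h⟩
  have hfin : ∑' E, inner E ≠ ∞ := by
    obtain ⟨C, hC0, hC⟩ := exists_idealCount_le K
    have h1 : ∀ E, inner E ≤ ENNReal.ofReal (C * N * (1 / (E.wt 2 : ℝ))) := by
      intro E
      rw [← ENNReal.ofReal_toReal (hinner E), hval]
      refine ENNReal.ofReal_le_ofReal ((hC _ (by positivity)).trans_eq (by ring))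
    exact ne_top_of_le_ne_top
      (summable_one_div_wt.mul_left (C * N)).tsum_ofReal_ne_top (ENNReal.tsum_le_tsum h1)
  rw [← tsum_congr hval, ← ENNReal.tsum_toReal_eq hinner, ← htotal, ENNReal.toReal_sum]
  · exact Finset.sum_congr rfl fun n _ => natCard_subtype_eq_toReal_tsum _
  · intro n hn
    refine ne_top_of_le_ne_top hfin (htotal ▸ ?_)
    exact Finset.single_le_sum (f := fun n =>
      ∑' E : IdealSeq (𝓞 K), if E.wt 1 = n then (1 : ℝ≥0∞) else 0) (fun _ _ => zero_le) hn

variable (K) in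
/-- Dominated convergence in `sum_count_eq_tsum`: the limit is `κ * ∑ E, 1 / wt 2 E`. -/
lemma exists_tendsto_sum_count :
    ∃ c : ℝ, 0 < c ∧
      Tendsto (fun N : ℕ => (∑ n ∈ Finset.Icc 1 N, (count K n : ℝ)) / (N : ℝ)) atTop (𝓝 c) := by
  obtain ⟨κ, hκ, hlim⟩ := exists_tendsto_idealCount K
  obtain ⟨C, hC0, hC⟩ := exists_idealCount_le K
  have hsum := summable_one_div_wt (K := K)
  refine ⟨∑' E : IdealSeq (𝓞 K), κ * (1 / (E.wt 2 : ℝ)), ?_, ?_⟩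
  · let E₀ : IdealSeq (𝓞 K) := ⟨fun _ => 1, 0, fun _ _ => rfl⟩
    refine (hsum.mul_left κ).tsum_pos (fun E => by positivity) E₀ ?_
    have : (0 : ℝ) < E₀.wt 2 := by exact_mod_cast E₀.wt_pos 2
    positivity
  simp_rw [sum_count_eq_tsum, ← tsum_div_const]
  refine tendsto_tsum_of_dominated_convergence (hsum.mul_left C) (fun E => ?_)
    (Eventually.of_forall fun N E => ?_)
  · have hE : (0 : ℝ) < E.wt 2 := by exact_mod_cast E.wt_pos 2
    have h1 : Tendsto (fun N : ℕ => (N : ℝ) / E.wt 2) atTop atTop :=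
      tendsto_natCast_atTop_atTop.atTop_div_const hE
    refine ((hlim.comp h1).mul_const (1 / (E.wt 2 : ℝ))).congr' ?_
    filter_upwards [eventually_ge_atTop 1] with N hN
    have hN0 : (0 : ℝ) < N := by exact_mod_cast hN
    simp only [Function.comp_apply]
    field_simp
  · rw [Real.norm_of_nonneg (by positivity)]
    rcases Nat.eq_zero_or_pos N with rfl | hN
    · simp only [Nat.cast_zero, div_zero]
      positivity
    · have hN0 : (0 : ℝ) < N := by exact_mod_cast hN
      rw [div_le_iff₀ hN0]
      exact (hC _ (by positivity)).trans_eq (by ring)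

end IdealSeq

end Counting

end Helpers

/-- The number of ideals of `O_K[X]` of index at most `N` grows like `c·N²` for some
constant `c > 0`. -/
theorem ideal_count_polynomial_ringOfIntegers_asymptotic (K : Type*) [Field K] [NumberField K] :
    ∃ c : ℝ, 0 < c ∧
      Tendsto (fun N : ℕ => (∑ n ∈ Finset.Icc 1 N,
          (Nat.card {I : Ideal (Polynomial (𝓞 K)) //
            Nat.card (Polynomial (𝓞 K) ⧸ I) = n} : ℝ)) / (N : ℝ) ^ 2)
        atTop (𝓝 c) := by
  obtain ⟨c, hc, h⟩ := IdealSeq.exists_tendsto_sum_count K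
  refine ⟨c / 2, by positivity, (tendsto_sum_mul_div_sq h).congr fun N => ?_⟩
  congr 1
  refine Finset.sum_congr rfl fun n hn => ?_
  rw [card_ideals_eq_mul n (Finset.mem_Icc.1 hn).1, Nat.cast_mul, IdealSeq.count]
end
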